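/- arXiv:2111.06507 — 5 statements merged into one kernel-verified Lean document; each statement's English description precedes it below -/
import Mathlib

section
/- (Jordan) Let Ω be a finite set with |Ω| = n ≥ 9 and let G be a primitive subgroup of the symmetric group on Ω. If G contains a 3-cycle or a double transposition (a product of two disjoint transpositions), then G contains the alternating group on Ω, i.e., G is the alternating group or the full symmetric group on Ω. -/
open scoped Classical
open Polynomial

/-- A permutation group `G ≤ Perm Ω` is primitive: it acts transitively on `Ω` and every
block of the action is trivial (i.e. it preserves no nontrivial partition of `Ω`). -/
def IsPrimitivePermGroup {Ω : Type*} (G : Subgroup (Equiv.Perm Ω)) : Prop :=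
  MulAction.IsPretransitive G Ω ∧
    ∀ B : Set Ω, MulAction.IsBlock G B → MulAction.IsTrivialBlock B


theorem bits_weight {a b c d e f g : ℕ} (ha : a ≤ 1) (hb : b ≤ 1) (hc : c ≤ 1) (hd : d ≤ 1)
    (he : e ≤ 1) (hf : f ≤ 1) (hg : g ≤ 1) (h1 : (a + b + c + d) % 2 = 0)
    (h2 : (a + c + e + f) % 2 = 0) (h3 : (a + b + e + g) % 2 = 0)
    (h : a + b + c + d + e + f + g ≤ 4) :
    a + b + c + d + e + f + g = 0 ∨ a + b + c + d + e + f + g = 3 ∨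
      a + b + c + d + e + f + g = 4 := by
  interval_cases a <;> interval_cases b <;> interval_cases c <;> interval_cases e <;> omega

theorem bits_lines {a b c d e f g : ℕ} (ha : a ≤ 1) (hb : b ≤ 1) (hc : c ≤ 1) (hd : d ≤ 1)
    (he : e ≤ 1) (hf : f ≤ 1) (hg : g ≤ 1) (h1 : (a + b + c + d) % 2 = 0)
    (h2 : (a + c + e + f) % 2 = 0) (h3 : (a + b + e + g) % 2 = 0)
    (h : a + b + c + d + e + f + g = 3) :
    (a = 0 ∧ b = 0 ∧ c = 0 ∧ d = 0 ∧ e = 1 ∧ f = 1 ∧ g = 1) ∨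
    (a = 0 ∧ b = 1 ∧ c = 0 ∧ d = 1 ∧ e = 0 ∧ f = 0 ∧ g = 1) ∨
    (a = 0 ∧ b = 0 ∧ c = 1 ∧ d = 1 ∧ e = 0 ∧ f = 1 ∧ g = 0) ∨
    (a = 1 ∧ b = 0 ∧ c = 1 ∧ d = 0 ∧ e = 0 ∧ f = 0 ∧ g = 1) ∨
    (a = 1 ∧ b = 1 ∧ c = 0 ∧ d = 0 ∧ e = 0 ∧ f = 1 ∧ g = 0) ∨
    (a = 1 ∧ b = 0 ∧ c = 0 ∧ d = 1 ∧ e = 1 ∧ f = 0 ∧ g = 0) ∨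
    (a = 0 ∧ b = 1 ∧ c = 1 ∧ d = 0 ∧ e = 1 ∧ f = 0 ∧ g = 0) := by
  have hd' : d = (a + b + c) % 2 := by omega
  have hf' : f = (a + c + e) % 2 := by omega
  have hg' : g = (a + b + e) % 2 := by omega
  subst hd' hf' hg'
  clear hd hf hg h1 h2 h3
  revert a b c e
  intro a b c e ha hb hc he
  interval_cases a <;> interval_cases b <;> interval_cases c <;> interval_cases e <;> simp

theorem code_lemma {Ω : Type*} [DecidableEq Ω] (F : Set (Finset Ω))
    (hne : F.Nonempty)
    (hcard : ∀ A ∈ F, A.card = 4) (heven : ∀ A ∈ F, ∀ B ∈ F, Even (A ∩ B).card)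
    (hsep : ∀ a b : Ω, a ≠ b → ∃ A ∈ F, a ∈ A ∧ b ∉ A) :
    ∃ Y : Finset Ω, Y.Nonempty ∧ Y.card ≤ 8 ∧ ∀ D ∈ F, ∀ x ∈ D, x ∈ Y → D ⊆ Y := by
  have key : ∀ A ∈ F, ∀ B ∈ F, ∀ a ∈ A, a ∈ B → ∀ b ∈ A, b ∉ B →
      ∃ c, c ≠ a ∧ A ∩ B = {a, c} := by
    intro A hA B hB a haA haB b hbA hbB
    have h1 : (A ∩ B).card < 4 := by
      rw [← hcard A hA]
      apply Finset.card_lt_card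
      refine ⟨Finset.inter_subset_left, fun h => hbB (Finset.mem_inter.mp (h hbA)).2⟩
    have h2 : 0 < (A ∩ B).card := Finset.card_pos.mpr ⟨a, by simp [haA, haB]⟩
    have h3 := heven A hA B hB
    have h4 : (A ∩ B).card = 2 := by rw [Nat.even_iff] at h3; omega
    obtain ⟨x, y, hxy, he⟩ := Finset.card_eq_two.mp h4
    have : a ∈ ({x, y} : Finset Ω) := by rw [← he]; simp [haA, haB]
    simp only [Finset.mem_insert, Finset.mem_singleton] at this
    rcases this with rfl | rfl
    · exact ⟨y, hxy.symm, he⟩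
    · exact ⟨x, hxy, by rw [he, Finset.pair_comm]⟩
  have fourth : ∀ A ∈ F, ∀ a b c : Ω, a ∈ A → b ∈ A → c ∈ A → a ≠ b → a ≠ c → b ≠ c →
      ∃ d, d ≠ a ∧ d ≠ b ∧ d ≠ c ∧ A = {a, b, c, d} := by
    intro A hA a b c ha hb hc hab hac hbc
    have h3 : ({a, b, c} : Finset Ω).card = 3 := Finset.card_eq_three.mpr ⟨a, b, c, hab, hac, hbc, rfl⟩
    have hsub : ({a, b, c} : Finset Ω) ⊆ A := by
      intro x hx
      simp only [Finset.mem_insert, Finset.mem_singleton] at hx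
      rcases hx with rfl | rfl | rfl <;> assumption
    have h1 : (A \ {a, b, c}).card = 1 := by
      rw [Finset.card_sdiff_of_subset hsub, hcard A hA, h3]
    obtain ⟨d, hd⟩ := Finset.card_eq_one.mp h1
    have hdm : d ∈ A \ {a, b, c} := by rw [hd]; simp
    simp only [Finset.mem_sdiff, Finset.mem_insert, Finset.mem_singleton, not_or] at hdm
    refine ⟨d, hdm.2.1, hdm.2.2.1, hdm.2.2.2, ?_⟩
    ext x
    have hx : x ∈ A \ {a, b, c} ↔ x ∈ ({d} : Finset Ω) := by rw [hd]
    simp only [Finset.mem_sdiff, Finset.mem_insert, Finset.mem_singleton, not_or] at hx ⊢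
    constructor
    · intro h; by_contra hh; grind
    · rintro (rfl | rfl | rfl | rfl) <;> grind
  -- parity of intersection with an explicit 4-set, in terms of indicators
  let χ : Finset Ω → Ω → ℕ := fun D x => if x ∈ D then 1 else 0
  have χ_le : ∀ D x, χ D x ≤ 1 := by intro D x; simp only [χ]; split_ifs <;> omega
  have χ_mem : ∀ D x, x ∈ D ↔ χ D x = 1 := by intro D x; simp only [χ]; split_ifs <;> simp_all
  have χ_sum : ∀ D S : Finset Ω, (D ∩ S).card = ∑ x ∈ S, χ D x := by
    intro D S
    rw [Finset.inter_comm, ← Finset.filter_mem_eq_inter, Finset.card_filter]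
  obtain ⟨A, hA⟩ := hne
  obtain ⟨a, haA, b₀, hb₀A, hab₀⟩ := Finset.one_lt_card.mp (show 1 < A.card by rw [hcard A hA]; omega)
  obtain ⟨B, hB, haB, hb₀B⟩ := hsep a b₀ hab₀
  obtain ⟨c, hca, hAB⟩ := key A hA B hB a haA haB b₀ hb₀A hb₀B
  have hAB' : ∀ x, x ∈ A ∧ x ∈ B ↔ x = a ∨ x = c := by
    intro x; rw [← Finset.mem_inter, hAB]; simp
  obtain ⟨C, hC, haC, hcC⟩ := hsep a c hca.symm
  have hcA : c ∈ A := ((hAB' c).2 (Or.inr rfl)).1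
  have hcB : c ∈ B := ((hAB' c).2 (Or.inr rfl)).2
  obtain ⟨b, hba, hAC⟩ := key A hA C hC a haA haC c hcA hcC
  obtain ⟨e, hea, hBC⟩ := key B hB C hC a haB haC c hcB hcC
  have hAC' : ∀ x, x ∈ A ∧ x ∈ C ↔ x = a ∨ x = b := by
    intro x; rw [← Finset.mem_inter, hAC]; simp
  have hBC' : ∀ x, x ∈ B ∧ x ∈ C ↔ x = a ∨ x = e := by
    intro x; rw [← Finset.mem_inter, hBC]; simp
  have hbA := ((hAC' b).2 (Or.inr rfl)).1
  have hbC := ((hAC' b).2 (Or.inr rfl)).2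
  have heB := ((hBC' e).2 (Or.inr rfl)).1
  have heC := ((hBC' e).2 (Or.inr rfl)).2
  have hbc : b ≠ c := by rintro rfl; exact hcC hbC
  have hec : e ≠ c := by rintro rfl; exact hcC heC
  have hbB : b ∉ B := fun h => by have := (hAB' b).1 ⟨hbA, h⟩; grind
  have heA : e ∉ A := fun h => by have := (hAB' e).1 ⟨h, heB⟩; grind
  have hbe : b ≠ e := by rintro rfl; exact heA hbA
  obtain ⟨d, hda, hdb, hdc, hAe⟩ := fourth A hA a b c haA hbA hcA hba.symm hca.symm hbc
  obtain ⟨f, hfa, hfc, hfe, hBe⟩ := fourth B hB a c e haB hcB heB hca.symm hea.symm hec.symm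
  obtain ⟨g, hga, hgb, hge, hCe⟩ := fourth C hC a b e haC hbC heC hba.symm hea.symm hbe
  have hdA : d ∈ A := by rw [hAe]; simp
  have hfB : f ∈ B := by rw [hBe]; simp
  have hgC : g ∈ C := by rw [hCe]; simp
  have hdB : d ∉ B := fun h => by have := (hAB' d).1 ⟨hdA, h⟩; grind
  have hdC : d ∉ C := fun h => by have := (hAC' d).1 ⟨hdA, h⟩; grind
  have hfA : f ∉ A := fun h => by have := (hAB' f).1 ⟨h, hfB⟩; grind
  have hfC : f ∉ C := fun h => by have := (hBC' f).1 ⟨hfB, h⟩; grind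
  have hgA : g ∉ A := fun h => by have := (hAC' g).1 ⟨h, hgC⟩; grind
  have hgB : g ∉ B := fun h => by have := (hBC' g).1 ⟨h, hgC⟩; grind
  have hde : d ≠ e := by rintro rfl; exact heA hdA
  have hdf : d ≠ f := by rintro rfl; exact hfA hdA
  have hdg : d ≠ g := by rintro rfl; exact hgA hdA
  have hfb : f ≠ b := by rintro rfl; exact hfA hbA
  have hfg : f ≠ g := by rintro rfl; exact hgB hfB
  have hgc : g ≠ c := by rintro rfl; exact hgA hcA
  set X : Finset Ω := {a, b, c, d, e, f, g} with hX
  have sumX : ∀ φ : Ω → ℕ, ∑ x ∈ X, φ x = φ a + φ b + φ c + φ d + φ e + φ f + φ g := by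
    intro φ
    rw [hX]
    repeat rw [Finset.sum_insert (by simp; grind)]
    rw [Finset.sum_singleton]; ring
  have cardX : X.card = 7 := by rw [Finset.card_eq_sum_ones, sumX]
  have parA : ∀ D ∈ F, (χ D a + χ D b + χ D c + χ D d) % 2 = 0 := by
    intro D hD
    have := heven D hD A hA
    rw [χ_sum, hAe, Nat.even_iff] at this
    repeat rw [Finset.sum_insert (by simp; grind)] at this
    rw [Finset.sum_singleton] at this; omega
  have parB : ∀ D ∈ F, (χ D a + χ D c + χ D e + χ D f) % 2 = 0 := by
    intro D hD
    have := heven D hD B hB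
    rw [χ_sum, hBe, Nat.even_iff] at this
    repeat rw [Finset.sum_insert (by simp; grind)] at this
    rw [Finset.sum_singleton] at this; omega
  have parC : ∀ D ∈ F, (χ D a + χ D b + χ D e + χ D g) % 2 = 0 := by
    intro D hD
    have := heven D hD C hC
    rw [χ_sum, hCe, Nat.even_iff] at this
    repeat rw [Finset.sum_insert (by simp; grind)] at this
    rw [Finset.sum_singleton] at this; omega
  have wle : ∀ D ∈ F, (D ∩ X).card ≤ 4 := fun D hD =>
    hcard D hD ▸ Finset.card_le_card Finset.inter_subset_left
  have w034 : ∀ D ∈ F, (D ∩ X).card = 0 ∨ (D ∩ X).card = 3 ∨ D ⊆ X := by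
    intro D hD
    have h := wle D hD
    have : (D ∩ X).card = 0 ∨ (D ∩ X).card = 3 ∨ (D ∩ X).card = 4 := by
      have h1 := parA D hD
      have h2 := parB D hD
      have h3 := parC D hD
      rw [χ_sum, sumX] at h ⊢
      exact bits_weight (χ_le D a) (χ_le D b) (χ_le D c) (χ_le D d) (χ_le D e) (χ_le D f)
        (χ_le D g) h1 h2 h3 h
    rcases this with h | h | h
    · exact Or.inl h
    · exact Or.inr (Or.inl h)
    · right; right
      rw [← Finset.inter_eq_left]
      exact Finset.eq_of_subset_of_card_le Finset.inter_subset_left (by rw [h, hcard D hD])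
  by_cases hex : ∃ D₀ ∈ F, (D₀ ∩ X).card = 3
  · obtain ⟨E, hE, hE3⟩ := hex
    have one_out : ∀ D ∈ F, (D ∩ X).card = 3 → ∃ h, h ∉ X ∧ h ∈ D ∧ D ⊆ insert h X := by
      intro D hD h3
      have h1 : (D \ X).card = 1 := by
        have := Finset.card_sdiff_add_card_inter D X
        rw [hcard D hD] at this; omega
      obtain ⟨h, hh⟩ := Finset.card_eq_one.mp h1
      have hm : ∀ x, x ∈ D ∧ x ∉ X ↔ x = h := by
        intro x; rw [← Finset.mem_sdiff, hh, Finset.mem_singleton]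
      refine ⟨h, ((hm h).2 rfl).2, ((hm h).2 rfl).1, ?_⟩
      intro x hx
      rw [Finset.mem_insert]
      by_cases hxX : x ∈ X
      · exact Or.inr hxX
      · exact Or.inl ((hm x).1 ⟨hx, hxX⟩)
    obtain ⟨h, hhX, hhE, hEY⟩ := one_out E hE hE3
    refine ⟨insert h X, ⟨h, by simp⟩, ?_, ?_⟩
    · have := Finset.card_insert_le h X; omega
    intro D hD x hxD hxY
    rcases w034 D hD with h0 | h3 | h4
    · exfalso
      have hempty := Finset.card_eq_zero.mp h0
      have hnx : ∀ y, y ∈ D → y ∉ X := by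
        intro y hy hyX
        have : y ∈ D ∩ X := Finset.mem_inter.mpr ⟨hy, hyX⟩
        rw [hempty] at this; simp at this
      have hxh : x = h := by
        rcases Finset.mem_insert.mp hxY with h' | h'
        · exact h'
        · exact absurd h' (hnx x hxD)
      subst hxh
      have : D ∩ E = {x} := by
        ext y
        rw [Finset.mem_inter, Finset.mem_singleton]
        constructor
        · rintro ⟨h1, h2⟩
          rcases Finset.mem_insert.mp (hEY h2) with h' | h'
          · exact h'
          · exact absurd h' (hnx y h1)
        · rintro rfl; exact ⟨hxD, hhE⟩
      have h2 := heven D hD E hE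
      rw [this] at h2
      simp at h2
    · obtain ⟨k, hkX, hkD, hDY⟩ := one_out D hD h3
      by_cases hk : h = k
      · rw [hk]; exact hDY
      exfalso
      have h1 : D ∩ E = (D ∩ E) ∩ X := by
        symm
        rw [Finset.inter_eq_left]
        intro y hy
        rw [Finset.mem_inter] at hy
        have q1 := Finset.mem_insert.mp (hDY hy.1)
        have q2 := Finset.mem_insert.mp (hEY hy.2)
        grind
      have h2 := heven D hD E hE
      rw [h1, χ_sum, sumX, Nat.even_iff] at h2
      have hmul : ∀ y, χ (D ∩ E) y = 1 ↔ χ D y = 1 ∧ χ E y = 1 := by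
        intro y
        rw [← χ_mem, ← χ_mem, ← χ_mem, Finset.mem_inter]
      have d1 := parA D hD
      have d2 := parB D hD
      have d3 := parC D hD
      have e1 := parA E hE
      have e2 := parB E hE
      have e3 := parC E hE
      rw [χ_sum, sumX] at h3 hE3
      have hv : ∀ y, χ (D ∩ E) y = χ D y * χ E y := by
        intro y
        have m := hmul y
        have l1 := χ_le D y
        have l2 := χ_le E y
        have l3 := χ_le (D ∩ E) y
        interval_cases χ D y <;> interval_cases χ E y <;> simp at m ⊢ <;> omega
      simp only [hv] at h2
      have P := bits_lines (χ_le D a) (χ_le D b) (χ_le D c) (χ_le D d) (χ_le D e) (χ_le D f)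
        (χ_le D g) d1 d2 d3 h3
      have Q := bits_lines (χ_le E a) (χ_le E b) (χ_le E c) (χ_le E d) (χ_le E e) (χ_le E f)
        (χ_le E g) e1 e2 e3 hE3
      clear_value χ
      rcases P with ⟨p1, p2, p3, p4, p5, p6, p7⟩ | ⟨p1, p2, p3, p4, p5, p6, p7⟩ |
        ⟨p1, p2, p3, p4, p5, p6, p7⟩ | ⟨p1, p2, p3, p4, p5, p6, p7⟩ |
        ⟨p1, p2, p3, p4, p5, p6, p7⟩ | ⟨p1, p2, p3, p4, p5, p6, p7⟩ |
        ⟨p1, p2, p3, p4, p5, p6, p7⟩ <;>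
      rw [p1, p2, p3, p4, p5, p6, p7] at h2 <;> omega
    · exact h4.trans (Finset.subset_insert _ _)
  · refine ⟨X, ⟨a, by simp [hX]⟩, by omega, ?_⟩
    intro D hD x hxD hxX
    rcases w034 D hD with h0 | h3 | h4
    · exfalso
      have : x ∈ D ∩ X := Finset.mem_inter.mpr ⟨hxD, hxX⟩
      rw [Finset.card_eq_zero.mp h0] at this; simp at this
    · exact absurd ⟨D, hD, h3⟩ hex
    · exact h4

open Equiv Equiv.Perm MulAction in
theorem dt_decomp {Ω : Type*} [Fintype Ω] [DecidableEq Ω] {s : Perm Ω}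
    (hs : s.cycleType = {2, 2}) {p : Ω} (hp : p ∈ s.support) :
    ∃ b c d, [p, b, c, d].Nodup ∧ s = swap p b * swap c d ∧ s.support = {p, b, c, d} := by
  have hord : orderOf s = 2 := by rw [← lcm_cycleType, hs]; rfl
  have hss : ∀ x, s (s x) = x := by
    intro x
    have := pow_orderOf_eq_one s
    rw [hord, pow_two] at this
    simpa using congrArg (fun f : Perm Ω => f x) this
  have hcard : s.support.card = 4 := by rw [← sum_cycleType, hs]; rfl
  have hpb : s p ≠ p := mem_support.mp hp
  obtain ⟨c, hc, hc'⟩ : ∃ c ∈ s.support, c ∉ ({p, s p} : Finset Ω) := by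
    by_contra! h
    have := Finset.card_le_card (show s.support ⊆ {p, s p} from h)
    have h2 := Finset.card_le_two (a := p) (b := s p)
    omega
  have hcd : s c ≠ c := mem_support.mp hc
  have h1 : c ≠ p := by grind
  have h2 : c ≠ s p := by grind
  have h3 : s c ≠ p := by intro h; apply h2; rw [← h, hss]
  have h4 : s c ≠ s p := by intro h; exact h1 (s.injective h)
  have hnd : [p, s p, c, s c].Nodup := by simp; grind
  have hsup : s.support = {p, s p, c, s c} := by
    symm
    apply Finset.eq_of_subset_of_card_le
    · intro x hx
      simp only [Finset.mem_insert, Finset.mem_singleton] at hx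
      rcases hx with rfl | rfl | rfl | rfl <;> simp [hpb, hcd]
    · have : ([p, s p, c, s c].toFinset).card = 4 := by
        rw [List.toFinset_card_of_nodup hnd]; rfl
      simp only [List.toFinset_cons, List.toFinset_nil, insert_empty_eq] at this
      rw [hcard, this]
  refine ⟨s p, c, s c, hnd, ?_, hsup⟩
  ext x
  by_cases hx : x ∈ s.support
  · rw [hsup] at hx
    simp only [Finset.mem_insert, Finset.mem_singleton] at hx
    simp only [Perm.mul_apply, swap_apply_def]
    rcases hx with rfl | rfl | rfl | rfl <;> grind
  · have : s x = x := notMem_support.mp hx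
    rw [hsup] at hx
    simp only [Finset.mem_insert, Finset.mem_singleton, not_or] at hx
    simp only [Perm.mul_apply, swap_apply_def]
    grind

open Equiv Equiv.Perm MulAction in
theorem five_cycle_case {Ω : Type*} [Fintype Ω] [DecidableEq Ω] (hn : 9 ≤ Fintype.card Ω)
    (G : Subgroup (Equiv.Perm Ω)) (hG : IsPreprimitive G Ω) {a b c d : Ω}
    (hs : swap b a * swap c d ∈ G) (hnd : [b, a, c, d].Nodup)
    {g : Perm Ω} (hg : g ∈ G) (hc : g.IsCycle) (h5 : g.support.card = 5) :
    ∃ g ∈ G, g.IsThreeCycle := by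
  obtain ⟨n, hn'⟩ := Nat.exists_eq_add_of_le' hn
  have hcardΩ : Nat.card Ω = n + 9 := by rw [Nat.card_eq_fintype_card, hn']
  have hmp : IsMultiplyPreprimitive G Ω ((n + 3) + 2) := by
    apply hG.isMultiplyPreprimitive (s := (g.supportᶜ : Set Ω))
    · apply Nat.add_left_cancel
      rw [Set.ncard_add_ncard_compl, Set.ncard_coe_finset, h5, hcardΩ]
      omega
    · omega
    have := isPretransitive_of_isCycle_mem hc hg
    apply IsPreprimitive.of_prime_card
    convert! Nat.prime_five
    rw [← h5, ← Set.ncard_coe_finset, ← Nat.card_coe_set_eq]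
    apply Nat.card_congr
    apply Equiv.subtypeEquivRight
    intro x
    simp [SubMulAction.mem_ofFixingSubgroup_iff]
  have hmt : IsMultiplyPretransitive G Ω ((n + 3) + 2) :=
    IsMultiplyPreprimitive.isMultiplyPretransitive ..
  have h4 : IsMultiplyPretransitive G Ω 4 := 
    isMultiplyPretransitive_of_le (n := (n + 3) + 2) (by omega) (by omega)
  obtain ⟨x, hx⟩ : ∃ x, x ∉ ({b, a, c, d} : Finset Ω) := by
    by_contra! h
    have h1 := Finset.card_le_card (show Finset.univ ⊆ ({b, a, c, d} : Finset Ω) from fun x _ => h x)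
    have h2 := Finset.card_le_four (a := b) (b := a) (c := c) (d := d)
    rw [Finset.card_univ] at h1
    omega
  simp only [Finset.mem_insert, Finset.mem_singleton, not_or] at hx
  simp only [List.nodup_cons, List.mem_cons, List.not_mem_nil, not_or] at hnd
  rw [isMultiplyPretransitive_iff] at h4
  obtain ⟨k, hk⟩ := h4 ⟨![b, a, c, d], by
      intro i j hij; fin_cases i <;> fin_cases j <;> simp at hij ⊢ <;> grind⟩
    ⟨![b, a, c, x], by
      intro i j hij; fin_cases i <;> fin_cases j <;> simp at hij ⊢ <;> grind⟩
  have hk' := fun i => DFunLike.congr_fun hk i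
  have k0 : (k : Perm Ω) b = b := hk' 0
  have k1 : (k : Perm Ω) a = a := hk' 1
  have k2 : (k : Perm Ω) c = c := hk' 2
  have k3 : (k : Perm Ω) d = x := hk' 3
  have hconj : (k : Perm Ω) * (swap b a * swap c d) * (k : Perm Ω)⁻¹ = swap b a * swap c x := by
    have e : (k : Perm Ω) * (swap b a * swap c d) * (k : Perm Ω)⁻¹ =
      ((k : Perm Ω) * swap b a * (k : Perm Ω)⁻¹) * ((k : Perm Ω) * swap c d * (k : Perm Ω)⁻¹) := by
      group
    rw [e, ← swap_apply_apply, ← swap_apply_apply, k0, k1, k2, k3]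
  have hm : swap b a * swap c x ∈ G := by
    rw [← hconj]; exact G.mul_mem (G.mul_mem k.2 hs) (G.inv_mem k.2)
  refine ⟨_, G.mul_mem hs hm, ?_⟩
  have : swap b a * swap c d * (swap b a * swap c x) = swap c d * swap c x := by
    ext y
    simp only [Perm.mul_apply, swap_apply_def]
    grind
  rw [this]
  exact isThreeCycle_swap_mul_swap_same (by grind) (by grind) (by grind)

open Equiv Equiv.Perm MulAction in
theorem odd_inter {Ω : Type*} [Fintype Ω] [DecidableEq Ω] (hn : 9 ≤ Fintype.card Ω)
    (G : Subgroup (Equiv.Perm Ω)) (hG : IsPreprimitive G Ω) {s t : Perm Ω}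
    (hs : s ∈ G) (ht : t ∈ G) (hs2 : s.cycleType = {2, 2}) (ht2 : t.cycleType = {2, 2})
    (hodd : ¬ Even (s.support ∩ t.support).card) : ∃ g ∈ G, g.IsThreeCycle := by
  have hcs : s.support.card = 4 := by rw [← sum_cycleType, hs2]; rfl
  have hct : t.support.card = 4 := by rw [← sum_cycleType, ht2]; rfl
  have hle : (s.support ∩ t.support).card ≤ 4 := hcs ▸ Finset.card_le_card Finset.inter_subset_left
  have h13 : (s.support ∩ t.support).card = 1 ∨ (s.support ∩ t.support).card = 3 := by
    rw [Nat.not_even_iff] at hodd; omega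
  rcases h13 with h1 | h3
  · obtain ⟨a, ha⟩ := Finset.card_eq_one.mp h1
    have hm : ∀ x, x ∈ s.support ∧ x ∈ t.support ↔ x = a := by
      intro x; rw [← Finset.mem_inter, ha, Finset.mem_singleton]
    obtain ⟨b, c, d, hnd, hse, hsS⟩ := dt_decomp hs2 ((hm a).2 rfl).1
    obtain ⟨e, f, g, hnd', hte, htS⟩ := dt_decomp ht2 ((hm a).2 rfl).2
    rw [hsS, htS] at hm
    simp only [Finset.mem_insert, Finset.mem_singleton] at hm
    simp only [List.nodup_cons, List.mem_cons, List.not_mem_nil, not_or] at hnd hnd'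
    refine ⟨_, G.mul_mem hs (G.mul_mem (G.mul_mem ht hs) (G.inv_mem ht)), ?_⟩
    have ta : t a = e := by rw [hte]; simp only [Perm.mul_apply, swap_apply_def]; grind
    have tb : t b = b := by rw [hte]; simp only [Perm.mul_apply, swap_apply_def]; grind
    have tc : t c = c := by rw [hte]; simp only [Perm.mul_apply, swap_apply_def]; grind
    have td : t d = d := by rw [hte]; simp only [Perm.mul_apply, swap_apply_def]; grind
    have hconj : t * s * t⁻¹ = swap e b * swap c d := by
      have e : t * s * t⁻¹ = (t * swap a b * t⁻¹) * (t * swap c d * t⁻¹) := by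
        rw [hse]; group
      rw [e, ← swap_apply_apply, ← swap_apply_apply, ta, tb, tc, td]
    rw [hconj, hse]
    have : swap a b * swap c d * (swap e b * swap c d) = swap b a * swap b e := by
      ext y
      simp only [Perm.mul_apply, swap_apply_def]
      grind
    rw [this]
    exact isThreeCycle_swap_mul_swap_same (by grind) (by grind) (by grind)
  · obtain ⟨b, hb, hb'⟩ : ∃ b ∈ s.support, b ∉ t.support := by
      by_contra! h
      rw [Finset.inter_eq_left.mpr h] at h3
      omega
    obtain ⟨a, c, d, hnd, hse, hsS⟩ := dt_decomp hs2 hb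
    have hi : s.support ∩ t.support = {a, c, d} := by
      apply Finset.eq_of_subset_of_card_le
      · intro x hx
        rw [Finset.mem_inter, hsS] at hx
        simp only [Finset.mem_insert, Finset.mem_singleton] at hx ⊢
        grind
      · rw [h3]; exact Finset.card_le_three
    have hat : a ∈ t.support ∧ c ∈ t.support ∧ d ∈ t.support := by
      refine ⟨?_, ?_, ?_⟩ <;> refine Finset.mem_of_mem_inter_right (s₁ := s.support) ?_ <;> rw [hi] <;> simp
    obtain ⟨hat, hct', hdt⟩ := hat
    obtain ⟨x, y, z, hnd', hte, htS⟩ := dt_decomp ht2 hat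
    rw [htS] at hct' hdt hb'
    have hnd0 := hnd
    simp only [List.nodup_cons, List.mem_cons, List.not_mem_nil, not_or] at hnd hnd'
    simp only [Finset.mem_insert, Finset.mem_singleton, not_or] at hct' hdt hb'
    have hs' : swap b a * swap c d ∈ G := hse ▸ hs
    have key : ∀ c d e : Ω, [b, a, c, d].Nodup → [b, a, c, d, e].Nodup →
        swap b a * swap c d ∈ G → swap a c * swap d e ∈ G → ∃ g ∈ G, g.IsThreeCycle := by
      intro c d e hnd hnd5 h1 h2
      have he : swap b a * swap c d * (swap a c * swap d e) = [a, d, e, c, b].formPerm := by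
        simp only [List.nodup_cons, List.mem_cons, List.not_mem_nil, not_or] at hnd5
        ext y
        simp only [List.formPerm_cons_cons, List.formPerm_singleton, Perm.mul_apply, swap_apply_def,
          Perm.one_apply]
        grind
      have hl : [a, d, e, c, b].Nodup := by
        simp only [List.nodup_cons, List.mem_cons, List.not_mem_nil, not_or] at hnd5 ⊢
        grind
      refine five_cycle_case hn G hG h1 hnd (G.mul_mem h1 h2) ?_ ?_
      · rw [he]; exact List.isCycle_formPerm hl (by simp)
      · rw [he, List.support_formPerm_of_nodup _ hl (by simp), List.toFinset_card_of_nodup hl]; rfl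
    have ht' : swap a x * swap y z ∈ G := hte ▸ ht
    have n5 : ∀ e, e = x ∨ e = y ∨ e = z → e ≠ c → e ≠ d → [b, a, c, d, e].Nodup := by
      intro e h1 h2 h3
      simp only [List.nodup_cons, List.mem_cons, List.not_mem_nil, not_or]
      grind
    have n5' : ∀ e, e = x ∨ e = y ∨ e = z → e ≠ c → e ≠ d → [b, a, d, c, e].Nodup := by
      intro e h1 h2 h3
      simp only [List.nodup_cons, List.mem_cons, List.not_mem_nil, not_or]
      grind
    have hnd1 : [b, a, d, c].Nodup := by
      simp only [List.nodup_cons, List.mem_cons, List.not_mem_nil, not_or]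
      grind
    have hs'' : swap b a * swap d c ∈ G := by rwa [swap_comm d c]
    have ht'' : swap a x * swap z y ∈ G := by rwa [swap_comm z y]
    by_cases hxc : x = c
    · subst hxc
      by_cases hyd : y = d
      · subst hyd
        exact key _ _ z hnd0 (n5 _ (by grind) (by grind) (by grind)) hs' ht'
      · have hz : z = d := by grind
        subst hz
        exact key _ _ y hnd0 (n5 _ (by grind) (by grind) (by grind)) hs' ht''
    by_cases hxd : x = d
    · subst hxd
      by_cases hyd : y = c
      · subst hyd
        exact key _ _ z hnd1 (n5' _ (by grind) (by grind) (by grind)) hs'' ht'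
      · have hz : z = c := by grind
        subst hz
        exact key _ _ y hnd1 (n5' _ (by grind) (by grind) (by grind)) hs'' ht''
    have hyz : swap y z = swap c d := by
      by_cases hyc : y = c
      · have : z = d := by grind
        rw [hyc, this]
      · have h1 : z = c := by grind
        have h2 : y = d := by grind
        rw [h1, h2, swap_comm]
    refine ⟨_, G.mul_mem hs' ht', ?_⟩
    rw [hyz]
    have : swap b a * swap c d * (swap a x * swap c d) = swap a b * swap a x := by
      ext y
      simp only [Perm.mul_apply, swap_apply_def]
      grind
    rw [this]
    exact isThreeCycle_swap_mul_swap_same (by grind) (by grind) (by grind)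

open Equiv Equiv.Perm MulAction Pointwise in
theorem jordan_primitive_threeCycle_or_doubleTransposition {Ω : Type*} [Fintype Ω]
    [DecidableEq Ω] (hn : 9 ≤ Fintype.card Ω) (G : Subgroup (Equiv.Perm Ω))
    (hprim : IsPrimitivePermGroup G)
    (h : ∃ g ∈ G, Equiv.Perm.IsThreeCycle g ∨ g.cycleType = {2, 2}) :
    alternatingGroup Ω ≤ G := by
  have hG : IsPreprimitive G Ω :=
    { toIsPretransitive := hprim.1, isTrivialBlock_of_isBlock := fun {B} hB => hprim.2 B hB }
  suffices h3 : ∃ g ∈ G, Equiv.Perm.IsThreeCycle g by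
    obtain ⟨g, hg, h3⟩ := h3
    exact alternatingGroup_le_of_isPreprimitive_of_isThreeCycle_mem hG h3 hg
  obtain ⟨s, hs, h3 | hs2⟩ := h
  · exact ⟨s, hs, h3⟩
  by_contra hno
  have hc4 : ∀ s : Perm Ω, s.cycleType = {2, 2} → s.support.card = 4 := by
    intro s hs2; rw [← sum_cycleType, hs2]; rfl
  let F : Set (Finset Ω) := {A | ∃ t ∈ G, t.cycleType = {2, 2} ∧ t.support = A}
  have hFs : s.support ∈ F := ⟨s, hs, hs2, rfl⟩
  have hinv : ∀ A ∈ F, ∀ g : G, A.map (g : Perm Ω).toEmbedding ∈ F := by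
    rintro _ ⟨t, ht, ht2, rfl⟩ g
    refine ⟨g * t * (g : Perm Ω)⁻¹, G.mul_mem (G.mul_mem g.2 ht) (G.inv_mem g.2), ?_, ?_⟩
    · rw [cycleType_conj, ht2]
    · rw [support_conj]
  have hmap : ∀ (A : Finset Ω) (g : G),
      ((A.map (g : Perm Ω).toEmbedding : Finset Ω) : Set Ω) = g • (A : Set Ω) := by
    intro A g
    rw [Finset.coe_map]
    rfl
  have hneU : ∀ A : Finset Ω, A.card ≤ 8 → (A : Set Ω) ≠ Set.univ := by
    intro A hA h
    have : A = Finset.univ := by exact_mod_cast h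
    rw [this, Finset.card_univ] at hA
    omega
  obtain ⟨Y, hYne, hY8, hY⟩ := code_lemma F ⟨_, hFs⟩
    (by rintro _ ⟨t, ht, ht2, rfl⟩; exact hc4 t ht2)
    (by
      rintro _ ⟨t, ht, ht2, rfl⟩ _ ⟨u, hu, hu2, rfl⟩
      by_contra hodd
      exact hno (odd_inter hn G hG ht hu ht2 hu2 hodd))
    (by
      intro a b hab
      obtain ⟨g, h1, h2⟩ := IsPreprimitive.exists_mem_smul_and_notMem_smul (G := G)
        (A := (s.support : Set Ω)) (Set.toFinite _)
        (by rw [Finset.coe_nonempty, ← Finset.card_pos, hc4 s hs2]; omega)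
        (hneU _ (by rw [hc4 s hs2]; omega)) hab
      rw [← hmap, Finset.mem_coe] at h1 h2
      exact ⟨_, hinv _ hFs g, h1, h2⟩)
  obtain ⟨a, haA, b, hbA, hab⟩ :=
    Finset.one_lt_card.mp (show 1 < s.support.card by rw [hc4 s hs2]; omega)
  obtain ⟨g, h1, h2⟩ := IsPreprimitive.exists_mem_smul_and_notMem_smul (G := G)
    (A := (Y : Set Ω)) (Set.toFinite _) (by rwa [Finset.coe_nonempty]) (hneU _ hY8) hab
  rw [Set.mem_smul_set_iff_inv_smul_mem] at h1 h2
  apply h2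
  have hm : ∀ x ∈ s.support, g⁻¹ • x ∈ s.support.map ((g⁻¹ : G) : Perm Ω).toEmbedding := by
    intro x hx
    rw [← Finset.mem_coe, hmap]
    exact Set.smul_mem_smul_set hx
  exact hY _ (hinv _ hFs g⁻¹) _ (hm a haA) h1 (hm b hbA)
end

section
/- If G ⊆ S_n is a primitive permutation group not equal to the alternating group A_n or the symmetric group S_n, then ind(G) ≥ ⌊√n⌋. -/
open scoped Classical
open Polynomial

/-- The index `ind(g)` of a permutation `g` of a finite set `Ω`: `|Ω|` minus the number
of orbits of the cyclic group generated by `g` on `Ω`. -/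
noncomputable def permIndex {Ω : Type*} [Fintype Ω] (g : Equiv.Perm Ω) : ℕ :=
  Fintype.card Ω - Nat.card (MulAction.orbitRel.Quotient (Subgroup.zpowers g) Ω)

/-- The index `ind(G)` of a permutation group `G ≤ Perm Ω`: the minimum of `ind(g)` over
non-identity `g ∈ G`. -/
noncomputable def groupIndex {Ω : Type*} [Fintype Ω] (G : Subgroup (Equiv.Perm Ω)) : ℕ :=
  sInf {k | ∃ g ∈ G, g ≠ 1 ∧ permIndex g = k}

section Aux


open Equiv Finset

theorem pidx_card_le {α : Type*} [Fintype α] (h : Perm α) (A : Finset α)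
    (hA : ∀ z, ∃ w, w ∉ A ∧ ∃ i : ℤ, (h ^ i) z = w) : A.card ≤ permIndex h := by
  classical
  unfold permIndex
  have key : Nat.card (MulAction.orbitRel.Quotient (Subgroup.zpowers h) α) ≤ (Finset.univ \ A).card := by
    have e : (Finset.univ \ A).card = Nat.card (↑(Finset.univ \ A) : Set α) := by
      rw [Nat.card_coe_set_eq, Set.ncard_coe_finset]
    rw [e]
    refine Nat.card_le_card_of_surjective
      (fun w : (↑(Finset.univ \ A) : Set α) =>
        (Quotient.mk'' (w : α) : MulAction.orbitRel.Quotient (Subgroup.zpowers h) α)) ?_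
    intro q
    induction q using Quotient.inductionOn' with
    | h z =>
      obtain ⟨w, hw, i, hi⟩ := hA z
      refine ⟨⟨w, by simp [hw]⟩, ?_⟩
      apply Quotient.sound'
      change w ∈ MulAction.orbit _ _
      exact ⟨⟨h ^ i, Subgroup.zpow_mem_zpowers h i⟩, hi⟩
  have h2 : (Finset.univ \ A).card + A.card = Fintype.card α := by
    rw [Finset.card_sdiff_add_card_eq_card (Finset.subset_univ A), Finset.card_univ]
  omega

theorem pidx_asc {α : Type*} [Fintype α] (h : Perm α) (f : α → ℕ) :
    (Finset.univ.filter fun z => f (h⁻¹ z) < f z).card ≤ permIndex h := by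
  apply pidx_card_le
  intro z
  obtain ⟨w, ⟨i, hi⟩, hmin⟩ := Set.exists_min_image (Set.range fun i : ℤ => (h ^ i) z) f
    (Set.toFinite _) ⟨z, 0, by simp⟩
  refine ⟨w, ?_, i, hi⟩
  simp only [Finset.mem_filter, Finset.mem_univ, true_and, not_lt]
  apply hmin
  refine ⟨-1 + i, ?_⟩
  simp only at hi ⊢
  rw [zpow_add, Perm.mul_apply, hi]; simp

theorem pidx_le_of_surj {α : Type*} [Fintype α] (h h' : Perm α) (x : Perm α)
    (hx : ∀ z, ∃ i : ℤ, x (h' z) = (h ^ i) (x z)) : permIndex h' ≤ permIndex h := by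
  unfold permIndex
  apply Nat.sub_le_sub_left
  have hx' : ∀ (j : ℤ) z, ∃ i : ℤ, x ((h' ^ j) z) = (h ^ i) (x z) := by
    intro j
    induction j using Int.induction_on with
    | zero => intro z; exact ⟨0, by simp⟩
    | succ j ih =>
      intro z
      obtain ⟨i, hi⟩ := ih z
      obtain ⟨i', hi'⟩ := hx ((h' ^ (j : ℤ)) z)
      refine ⟨i' + i, ?_⟩
      rw [add_comm, zpow_add, zpow_one, Perm.mul_apply, hi', hi, zpow_add, Perm.mul_apply]
    | pred j ih =>
      intro z
      obtain ⟨i, hi⟩ := ih z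
      obtain ⟨i', hi'⟩ := hx ((h' ^ (-(j : ℤ) - 1)) z)
      refine ⟨-i' + i, ?_⟩
      have e : h' ((h' ^ (-(j : ℤ) - 1)) z) = (h' ^ (-(j : ℤ))) z := by
        rw [← Perm.mul_apply, ← zpow_one_add]; congr 2; ring
      rw [e, hi] at hi'
      rw [zpow_add, Perm.mul_apply, hi']; simp
  refine Nat.card_le_card_of_surjective (Quotient.map' (s₁ := MulAction.orbitRel (Subgroup.zpowers h') α) (s₂ := MulAction.orbitRel (Subgroup.zpowers h) α) x ?_) ?_
  · rintro a b ⟨⟨y, j, rfl⟩, rfl⟩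
    obtain ⟨i, hi⟩ := hx' j b
    exact ⟨⟨h ^ i, i, rfl⟩, hi.symm⟩
  · intro q
    induction q using Quotient.inductionOn' with
    | h z => exact ⟨Quotient.mk'' (x⁻¹ z), by simp [Quotient.map'_mk'']⟩

theorem pidx_zpow_le {α : Type*} [Fintype α] (h : Perm α) (j : ℤ) :
    permIndex (h ^ j) ≤ permIndex h :=
  pidx_le_of_surj h (h ^ j) 1 fun z => ⟨j, by simp⟩

theorem pidx_inv_le {α : Type*} [Fintype α] (h : Perm α) : permIndex h⁻¹ ≤ permIndex h := by
  simpa using pidx_zpow_le h (-1)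

theorem pidx_sq_le {α : Type*} [Fintype α] (h : Perm α) : permIndex (h * h) ≤ permIndex h := by
  have := pidx_zpow_le h 2
  rwa [show h ^ (2 : ℤ) = h * h from by rw [zpow_two]] at this

theorem pidx_conj_le {α : Type*} [Fintype α] (h x : Perm α) :
    permIndex (x * h * x⁻¹) ≤ permIndex h :=
  pidx_le_of_surj h _ x⁻¹ fun z => ⟨1, by simp⟩

theorem pidx_desc {α : Type*} [Fintype α] (h : Perm α) (f : α → ℕ) :
    (Finset.univ.filter fun z => f z < f (h⁻¹ z)).card ≤ permIndex h := by
  have h1 := (pidx_asc h⁻¹ f).trans (pidx_inv_le h)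
  refine le_trans (le_of_eq ?_) h1
  apply Finset.card_bij (fun z _ => h⁻¹ z)
  · intro a; simp
  · intro a _ b _ e; simpa using e
  · intro b hb; refine ⟨h b, ?_, by simp⟩; simpa using hb

theorem supp_le_two_idx {α : Type*} [Fintype α] (h : Perm α) :
    h.support.card ≤ 2 * permIndex h := by
  obtain ⟨e⟩ := Fintype.truncEquivFin α |>.nonempty
  have h1 := pidx_asc h (fun z => (e z : ℕ))
  have h2 := pidx_desc h (fun z => (e z : ℕ))
  have : h.support ⊆ (Finset.univ.filter fun z => (e (h⁻¹ z) : ℕ) < e z) ∪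
      (Finset.univ.filter fun z => (e z : ℕ) < e (h⁻¹ z)) := by
    intro z hz
    simp only [Finset.mem_union, Finset.mem_filter, Finset.mem_univ, true_and]
    rw [Perm.mem_support] at hz
    have : (e (h⁻¹ z) : ℕ) ≠ e z := by
      intro hh
      have := e.injective (Fin.ext hh)
      apply hz
      nth_rewrite 1 [← this]; simp
    omega
  have := Finset.card_le_card this
  have := Finset.card_union_le (Finset.univ.filter fun z => (e (h⁻¹ z) : ℕ) < e z)
      (Finset.univ.filter fun z => (e z : ℕ) < e (h⁻¹ z))
  omega

def PInv {α : Type*} (G : Subgroup (Perm α)) (R : α → α → Prop) : Prop :=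
  ∀ g ∈ G, ∀ x y, R x y → R (g x) (g y)

def PTrans {α : Type*} (G : Subgroup (Perm α)) : Prop := ∀ x y : α, ∃ g ∈ G, g x = y

def PPrim {α : Type*} (G : Subgroup (Perm α)) : Prop :=
  ∀ r : α → α → Prop, Equivalence r → PInv G r → (∀ x y, r x y → x = y) ∨ (∀ x y, r x y)

theorem PInv.iff {α : Type*} {G : Subgroup (Perm α)} {R : α → α → Prop} (hR : PInv G R)
    {g : Perm α} (hg : g ∈ G) (x y : α) : R (g x) (g y) ↔ R x y := by
  refine ⟨fun h => ?_, hR g hg x y⟩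
  simpa using hR g⁻¹ (G.inv_mem hg) _ _ h

theorem PInv.flip {α : Type*} {G : Subgroup (Perm α)} {R : α → α → Prop} (hR : PInv G R) :
    PInv G (fun x y => R y x) := fun g hg x y h => hR g hg y x h

theorem PInv.card_apply {α : Type*} [Fintype α] {G : Subgroup (Perm α)} {R : α → α → Prop}
    (hR : PInv G R) {g : Perm α} (hg : g ∈ G) (x : α) :
    (univ.filter fun z => R (g x) z).card = (univ.filter fun z => R x z).card := by
  symm
  apply Finset.card_bij (fun z _ => g z)
  · intro a ha; simpa [hR.iff hg] using ha
  · intro a _ b _ e; simpa using e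
  · intro b hb
    refine ⟨g⁻¹ b, ?_, by simp⟩
    have := hR.iff hg x (g⁻¹ b)
    simp at this hb ⊢
    exact this.1 hb

theorem PInv.card_const {α : Type*} [Fintype α] {G : Subgroup (Perm α)} {R : α → α → Prop}
    (hR : PInv G R) (ht : PTrans G) (x y : α) :
    (univ.filter fun z => R x z).card = (univ.filter fun z => R y z).card := by
  obtain ⟨g, hg, rfl⟩ := ht x y
  exact (hR.card_apply hg x).symm

theorem PInv.card_col {α : Type*} [Fintype α] {G : Subgroup (Perm α)} {R : α → α → Prop}
    (hR : PInv G R) (ht : PTrans G) (x y : α) :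
    (univ.filter fun z => R z x).card = (univ.filter fun z => R y z).card := by
  have h1 : ∑ u : α, (univ.filter fun z => R z u).card = ∑ u : α, (univ.filter fun z => R u z).card := by
    simp only [Finset.card_filter]
    rw [Finset.sum_comm]
  have h2 : ∑ u : α, (univ.filter fun z => R z u).card =
      Fintype.card α * (univ.filter fun z => R z x).card := by
    rw [Finset.sum_congr rfl (fun u _ => hR.flip.card_const ht u x)]; simp
  have h3 : ∑ u : α, (univ.filter fun z => R u z).card =
      Fintype.card α * (univ.filter fun z => R y z).card := by
    rw [Finset.sum_congr rfl (fun u _ => hR.card_const ht u y)]; simp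
  have h4 : 0 < Fintype.card α := Fintype.card_pos_iff.2 ⟨x⟩
  exact Nat.eq_of_mul_eq_mul_left h4 (by rw [← h2, ← h3, h1])

theorem PInv.diff_le {α : Type*} [Fintype α] {G : Subgroup (Perm α)} {R : α → α → Prop}
    (hR : PInv G R) {k : ℕ} {h : Perm α} (hh : h ∈ G) (hk : permIndex h ≤ k) (a : α) :
    (univ.filter fun z => R a z ∧ ¬ R (h a) z).card ≤ k := by
  refine le_trans (Finset.card_le_card ?_) ((pidx_asc h (fun z => if R a z then 1 else 0)).trans hk)
  intro z
  simp only [mem_filter, mem_univ, true_and]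
  rintro ⟨h1, h2⟩
  have h3 : ¬ R a (h⁻¹ z) := by
    intro h3
    apply h2
    have := hR h hh _ _ h3
    simpa using this
  simp only [if_pos h1, if_neg h3]
  exact Nat.one_pos

def padj {α : Type*} [Fintype α] (G : Subgroup (Perm α)) (k : ℕ) (x y : α) : Prop :=
  x ≠ y ∧ ∃ h ∈ G, permIndex h ≤ k ∧ h x = y

theorem padj_inv {α : Type*} [Fintype α] (G : Subgroup (Perm α)) (k : ℕ) : PInv G (padj G k) := by
  rintro g hg x y ⟨hxy, h, hh, hk, rfl⟩
  refine ⟨by simpa using hxy, g * h * g⁻¹, G.mul_mem (G.mul_mem hg hh) (G.inv_mem hg),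
    (pidx_conj_le h g).trans hk, by simp⟩

theorem padj_symm {α : Type*} [Fintype α] {G : Subgroup (Perm α)} {k : ℕ} {x y : α}
    (h : padj G k x y) : padj G k y x := by
  obtain ⟨hxy, h, hh, hk, rfl⟩ := h
  exact ⟨hxy.symm, h⁻¹, G.inv_mem hh, (pidx_inv_le h).trans hk, by simp⟩

def pgraph {α : Type*} [Fintype α] (G : Subgroup (Perm α)) (k : ℕ) : SimpleGraph α where
  Adj := padj G k
  symm := ⟨fun _ _ h => padj_symm h⟩
  loopless := ⟨fun _ h => h.1 rfl⟩

def piso {α : Type*} [Fintype α] (G : Subgroup (Perm α)) (k : ℕ) (g : Perm α) (hg : g ∈ G) :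
    pgraph G k ≃g pgraph G k where
  toEquiv := g
  map_rel_iff' := by intro a b; exact (padj_inv G k).iff hg a b

theorem pgraph_conn {α : Type*} [Fintype α] {G : Subgroup (Perm α)} {k : ℕ} (hp : PPrim G)
    {g : Perm α} (hg : g ∈ G) (hg1 : g ≠ 1) (hk : permIndex g ≤ k) : (pgraph G k).Connected := by
  obtain ⟨x, hx⟩ : ∃ x, g x ≠ x := by
    by_contra hcon; push Not at hcon
    exact hg1 (Perm.ext hcon)
  have h1 := hp (pgraph G k).Reachable (SimpleGraph.reachable_is_equivalence _) (by
    intro u hu a b hab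
    exact hab.map (piso G k u hu).toHom)
  rcases h1 with h1 | h1
  · exact absurd (h1 x (g x) (SimpleGraph.Adj.reachable (G := pgraph G k) ⟨hx.symm, g, hg, hk, rfl⟩)).symm hx
  · exact @SimpleGraph.Connected.mk _ _ h1 ⟨x⟩

theorem pdist_inv {α : Type*} [Fintype α] {G : Subgroup (Perm α)} {k : ℕ}
    (hc : (pgraph G k).Connected) {g : Perm α} (hg : g ∈ G) (x y : α) :
    (pgraph G k).dist (g x) (g y) = (pgraph G k).dist x y := by
  have h1 : ∀ g ∈ G, ∀ x y, (pgraph G k).dist (g x) (g y) ≤ (pgraph G k).dist x y := by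
    intro g hg x y
    obtain ⟨p, hp⟩ := hc.exists_walk_length_eq_dist x y
    rw [← hp, ← SimpleGraph.Walk.length_map (piso G k g hg).toHom p]
    exact SimpleGraph.dist_le _
  apply le_antisymm (h1 g hg x y)
  have := h1 g⁻¹ (G.inv_mem hg) (g x) (g y)
  simpa using this

theorem mu_bound {α : Type*} [Fintype α] {G : Subgroup (Perm α)} {k : ℕ}
    {a b z : α} (haz : a ≠ z) (hn : ¬ padj G k a z) (hab : padj G k a b) (hbz : padj G k b z) :
    2 ≤ (univ.filter fun w => padj G k a w ∧ padj G k w z).card ∧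
    (univ.filter fun w => padj G k a w).card + 2 ≤
      (univ.filter fun w => padj G k a w ∧ padj G k w z).card + 2 * k := by
  have hinv := padj_inv G k
  constructor
  · obtain ⟨hab', h, hh, hk, rfl⟩ := id hab
    have h1 : padj G k a (h⁻¹ z) := by
      have := hinv h⁻¹ (G.inv_mem hh) _ _ hbz
      simpa using this
    have h2 : h⁻¹ z ≠ z := by
      intro e; rw [e] at h1; exact hn h1
    have h3 : padj G k (h⁻¹ z) z := ⟨h2, h, hh, hk, by simp⟩
    have h4 : h a ≠ h⁻¹ z := by
      intro e
      apply hn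
      refine ⟨haz, h * h, G.mul_mem hh hh, (pidx_sq_le h).trans hk, ?_⟩
      rw [Perm.mul_apply, e]; simp
    rw [← Finset.card_pair h4]
    apply Finset.card_le_card
    intro w hw
    simp only [mem_insert, mem_singleton] at hw
    rcases hw with rfl | rfl
    · simp [hab, hbz]
    · rw [mem_filter]; exact ⟨mem_univ _, h1, h3⟩
  · have key : (univ.filter fun w => padj G k a w ∧ ¬ padj G k z w).card + 2 ≤ 2 * k := by
      have hA : (univ.filter fun w => padj G k a w ∧ ¬ padj G k b w).card ≤ k := by
        obtain ⟨hab', h, hh, hk, rfl⟩ := id hab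
        exact hinv.diff_le hh hk a
      have hB : (univ.filter fun w => padj G k b w ∧ ¬ padj G k z w).card ≤ k := by
        obtain ⟨hab', h, hh, hk, rfl⟩ := id hbz
        exact hinv.diff_le hh hk b
      have hbA : b ∈ (univ.filter fun w => padj G k a w ∧ ¬ padj G k b w) := by
        simp only [mem_filter, mem_univ, true_and]
        exact ⟨hab, fun h => h.1 rfl⟩
      have hzB : z ∈ (univ.filter fun w => padj G k b w ∧ ¬ padj G k z w) := by
        simp only [mem_filter, mem_univ, true_and]
        exact ⟨hbz, fun h => h.1 rfl⟩
      have hsub : (univ.filter fun w => padj G k a w ∧ ¬ padj G k z w) ⊆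
          (univ.filter fun w => padj G k a w ∧ ¬ padj G k b w).erase b ∪
          (univ.filter fun w => padj G k b w ∧ ¬ padj G k z w).erase z := by
        intro w
        simp only [mem_filter, mem_univ, true_and, mem_union, mem_erase]
        rintro ⟨h1, h2⟩
        by_cases h3 : padj G k b w
        · right
          refine ⟨?_, h3, h2⟩
          rintro rfl; exact hn h1
        · left
          refine ⟨?_, h1, h3⟩
          rintro rfl; exact h2 (padj_symm hbz)
      have h5 := (Finset.card_le_card hsub).trans (Finset.card_union_le _ _)
      have h6 := Finset.card_erase_add_one hbA
      have h7 := Finset.card_erase_add_one hzB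
      omega
    have h8 := Finset.card_filter_add_card_filter_not (s := univ.filter fun w => padj G k a w)
      (fun w => padj G k w z)
    rw [Finset.filter_filter, Finset.filter_filter] at h8
    have h9 : (univ.filter fun w => padj G k a w ∧ ¬ padj G k w z) =
        (univ.filter fun w => padj G k a w ∧ ¬ padj G k z w) := by
      apply Finset.filter_congr
      intro w _
      rw [show padj G k w z ↔ padj G k z w from ⟨padj_symm, padj_symm⟩]
    rw [h9] at h8
    omega

theorem graph_count {α : Type*} [Fintype α] {G : Subgroup (Perm α)} {k : ℕ}
    (hc : (pgraph G k).Connected) (a : α) (C : ℕ)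
    (hC : ∀ b z, a ≠ z → ¬ padj G k a z → padj G k a b → padj G k b z →
      C ≤ (univ.filter fun w => padj G k a w ∧ padj G k w z).card) :
    (univ.filter fun w => padj G k a w).card +
      (univ.filter fun w => a ≠ w ∧ ¬ padj G k a w).card * C ≤
      (univ.filter fun w => padj G k a w).card * k := by
  set d := (pgraph G k).dist with hd
  set N := univ.filter fun w => padj G k a w with hN
  set M := univ.filter fun w => a ≠ w ∧ ¬ padj G k a w with hM
  have h1 : ∑ b ∈ N, (univ.filter fun z => d b z < d a z).card ≤ N.card * k := by
    rw [← smul_eq_mul]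
    apply Finset.sum_le_card_nsmul
    intro b hb
    simp only [hN, mem_filter, mem_univ, true_and] at hb
    obtain ⟨hab, h, hh, hk, rfl⟩ := hb
    refine le_trans (le_of_eq ?_) ((pidx_asc h (fun z => d a z)).trans hk)
    congr 1
    apply Finset.filter_congr
    intro z _
    have : d (h a) z = d a (h⁻¹ z) := by
      have := pdist_inv hc hh a (h⁻¹ z)
      simpa using this
    rw [this]
  have h2 : ∑ b ∈ N, (univ.filter fun z => d b z < d a z).card =
      ∑ z : α, (N.filter fun b => d b z < d a z).card := by
    simp only [Finset.card_filter]
    rw [Finset.sum_comm]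
  have hdisj : Disjoint N M := by
    rw [Finset.disjoint_left]
    intro w h1 h2
    simp only [hN, hM, mem_filter, mem_univ, true_and] at h1 h2
    exact h2.2 h1
  have h3 : ∑ z ∈ N ∪ M, (N.filter fun b => d b z < d a z).card ≤
      ∑ z : α, (N.filter fun b => d b z < d a z).card :=
    Finset.sum_le_sum_of_subset (Finset.subset_univ _)
  rw [Finset.sum_union hdisj] at h3
  have h4 : N.card ≤ ∑ z ∈ N, (N.filter fun b => d b z < d a z).card := by
    rw [Finset.card_eq_sum_ones]
    apply Finset.sum_le_sum
    intro z hz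
    rw [Nat.succ_le_iff, Finset.card_pos]
    refine ⟨z, ?_⟩
    rw [mem_filter]
    refine ⟨hz, ?_⟩
    simp only [hN, mem_filter, mem_univ, true_and] at hz
    rw [hd, SimpleGraph.dist_self]
    exact hc.pos_dist_of_ne hz.1
  have h5 : M.card * C ≤ ∑ z ∈ M, (N.filter fun b => d b z < d a z).card := by
    rw [← smul_eq_mul]
    apply Finset.card_nsmul_le_sum
    intro z hz
    simp only [hM, mem_filter, mem_univ, true_and] at hz
    obtain ⟨p, hp⟩ := hc.exists_walk_length_eq_dist a z
    cases p with
    | nil => exact absurd rfl hz.1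
    | @cons _ x1 _ e1 p =>
      cases p with
      | nil => exact absurd e1 hz.2
      | @cons _ x2 _ e2 p =>
        simp only [SimpleGraph.Walk.length_cons] at hp
        have hx2 : (pgraph G k).dist x2 z ≤ p.length := SimpleGraph.dist_le p
        have hne : a ≠ x2 := by
          rintro rfl; omega
        have hnadj : ¬ padj G k a x2 := by
          intro h
          have h6 : (pgraph G k).dist a x2 = 1 := SimpleGraph.dist_eq_one_iff_adj.2 h
          have := hc.dist_triangle (u := a) (v := x2) (w := z)
          omega
        refine (hC x1 x2 hne hnadj e1 e2).trans (Finset.card_le_card ?_)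
        intro w
        simp only [hN, mem_filter, mem_univ, true_and]
        rintro ⟨h1, h2⟩
        refine ⟨h1, ?_⟩
        have h6 : (pgraph G k).dist w x2 = 1 := SimpleGraph.dist_eq_one_iff_adj.2 h2
        have := hc.dist_triangle (u := w) (v := x2) (w := z)
        change (pgraph G k).dist w z < (pgraph G k).dist a z
        omega
  omega

theorem arith1 {n k v w : ℕ} (hk : 2 ≤ k) (hn : (k + 1) ^ 2 ≤ n) (h1 : v + w + 1 = n)
    (h2 : v + w * 2 ≤ v * k) (h3 : v + w * (v + 2 - 2 * k) ≤ v * k) :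
    w ≤ k ∧ (k = 2 → w ≤ 1) := by
  have hv : 2 * k + 1 ≤ v := by
    by_contra hcon
    have hv : v ≤ 2 * k := by omega
    obtain ⟨j, rfl⟩ : ∃ j, k = j + 1 := ⟨k - 1, by omega⟩
    nlinarith
  obtain ⟨x, rfl⟩ : ∃ x, v = x + 2 * k + 1 := ⟨v - (2 * k + 1), by omega⟩
  rw [show x + 2 * k + 1 + 2 - 2 * k = x + 3 by omega] at h3
  obtain ⟨j, rfl⟩ : ∃ j, k = j + 2 := ⟨k - 2, by omega⟩
  have hw : w ≤ j + 2 := by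
    by_contra hcon
    obtain ⟨y, rfl⟩ : ∃ y, w = y + (j + 3) := ⟨w - (j + 3), by omega⟩
    nlinarith [mul_nonneg (Nat.zero_le x) (Nat.zero_le y)]
  refine ⟨hw, ?_⟩
  intro hj
  obtain rfl : j = 0 := by omega
  by_contra hcon
  obtain rfl : w = 2 := by omega
  omega

theorem gap_ineq {α : Type*} [Fintype α] [Nonempty α] {G : Subgroup (Perm α)} {k : ℕ} (ht : PTrans G)
    (hp : PPrim G) {g : Perm α} (hg : g ∈ G) (hg1 : g ≠ 1) (hgk : permIndex g ≤ k) (hk : 2 ≤ k)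
    (hn : (k + 1) ^ 2 ≤ Fintype.card α) :
    ∃ w, w ≤ k ∧ (k = 2 → w ≤ 1) ∧ ∀ R : α → α → Prop, PInv G R → ∀ x,
      (univ.filter fun z => R x z).card * (Fintype.card α - (univ.filter fun z => R x z).card) ≤
      k * (Fintype.card α - 1 + w) := by
  have hc := pgraph_conn hp hg hg1 hgk
  have hinv := padj_inv G k
  obtain ⟨a⟩ := ‹Nonempty α›
  set v := (univ.filter fun w => padj G k a w).card with hv
  set w := (univ.filter fun w => a ≠ w ∧ ¬ padj G k a w).card with hw
  have hsplit : ∀ x : α, (univ : Finset α) = insert x ((univ.filter fun w => padj G k x w) ∪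
      (univ.filter fun w => x ≠ w ∧ ¬ padj G k x w)) := by
    intro x
    ext z
    simp only [mem_univ, mem_insert, mem_union, mem_filter, true_and, true_iff]
    by_cases h : z = x
    · exact Or.inl h
    · by_cases h' : padj G k x z
      · exact Or.inr (Or.inl h')
      · exact Or.inr (Or.inr ⟨fun e => h e.symm, h'⟩)
  have hdisj : ∀ x : α, Disjoint (univ.filter fun w => padj G k x w)
      (univ.filter fun w => x ≠ w ∧ ¬ padj G k x w) := by
    intro x
    rw [Finset.disjoint_left]
    intro w h1 h2
    simp only [mem_filter, mem_univ, true_and] at h1 h2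
    exact h2.2 h1
  have hnot : ∀ x : α, x ∉ (univ.filter fun w => padj G k x w) ∪
      (univ.filter fun w => x ≠ w ∧ ¬ padj G k x w) := by
    intro x
    simp only [mem_union, mem_filter, mem_univ, true_and]
    rintro (h | h)
    · exact h.1 rfl
    · exact h.1 rfl
  have hcard : v + w + 1 = Fintype.card α := by
    rw [← Finset.card_univ, hsplit a, Finset.card_insert_of_notMem (hnot a),
      Finset.card_union_of_disjoint (hdisj a)]
  have hA := graph_count hc a 2 (fun b z h1 h2 h3 h4 => (mu_bound h1 h2 h3 h4).1)
  have hB := graph_count hc a (v + 2 - 2 * k) (fun b z h1 h2 h3 h4 => by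
    have := (mu_bound h1 h2 h3 h4).2
    omega)
  obtain ⟨h1, h2⟩ := arith1 hk hn hcard hA hB
  refine ⟨w, h1, h2, ?_⟩
  intro R hR x
  have hvx : ∀ x, (univ.filter fun w => padj G k x w).card = v := fun x => hinv.card_const ht x a
  have hwx : ∀ x, (univ.filter fun w => x ≠ w ∧ ¬ padj G k x w).card = w := by
    intro x
    have h3 : (Fintype.card α) = v + (univ.filter fun w => x ≠ w ∧ ¬ padj G k x w).card + 1 := by
      have h4 := congrArg Finset.card (hsplit x)
      rwa [Finset.card_univ, Finset.card_insert_of_notMem (hnot x),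
        Finset.card_union_of_disjoint (hdisj x), hvx x] at h4
    omega
  have hD1 : ∀ y, padj G k x y → (univ.filter fun z => R x z ∧ ¬ R y z).card ≤ k := by
    rintro y ⟨_, h, hh, hk, rfl⟩
    exact hR.diff_le hh hk x
  have hD2 : ∀ y, x ≠ y ∧ ¬ padj G k x y → (univ.filter fun z => R x z ∧ ¬ R y z).card ≤ 2 * k := by
    rintro y ⟨hxy, hn'⟩
    obtain ⟨b, hb⟩ : ((univ.filter fun w => padj G k x w) ∩ (univ.filter fun w => padj G k y w)).Nonempty := by
      rw [← Finset.card_pos]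
      have h3 := Finset.card_union_add_card_inter (univ.filter fun w => padj G k x w)
        (univ.filter fun w => padj G k y w)
      rw [hvx, hvx] at h3
      have h4 := Finset.card_le_univ ((univ.filter fun w => padj G k x w) ∪ (univ.filter fun w => padj G k y w))
      have h5 : 2 * k + 3 ≤ Fintype.card α := by nlinarith
      omega
    simp only [mem_inter, mem_filter, mem_univ, true_and] at hb
    obtain ⟨hxb, hyb⟩ := hb
    have h3 := hD1 b hxb
    obtain ⟨_, h, hh, hk, hby⟩ := padj_symm hyb
    have h4 := hR.diff_le hh hk b
    rw [hby] at h4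
    have h5 : (univ.filter fun z => R x z ∧ ¬ R y z) ⊆ (univ.filter fun z => R x z ∧ ¬ R b z) ∪
        (univ.filter fun z => R b z ∧ ¬ R y z) := by
      intro z
      simp only [mem_filter, mem_univ, true_and, mem_union]
      tauto
    have h6 := (Finset.card_le_card h5).trans (Finset.card_union_le _ _)
    omega
  set β := (univ.filter fun z => R x z).card with hβ
  have hS : ∑ y : α, (univ.filter fun z => R x z ∧ ¬ R y z).card = β * (Fintype.card α - β) := by
    have e1 : ∑ y : α, (univ.filter fun z => R x z ∧ ¬ R y z).card =
        ∑ z ∈ (univ.filter fun z => R x z), (univ.filter fun y => ¬ R y z).card := by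
      simp_rw [← Finset.filter_filter]
      simp only [Finset.card_filter _ (univ.filter fun z => R x z)]
      rw [Finset.sum_comm]
      simp only [Finset.card_filter _ univ]
    rw [e1, ← smul_eq_mul, hβ]
    apply Finset.sum_const_nat
    intro z _
    have e2 := Finset.card_filter_add_card_filter_not (s := (univ : Finset α)) (fun y => R y z)
    rw [hR.card_col ht z x, Finset.card_univ] at e2
    omega
  have hT : ∑ y : α, (univ.filter fun z => R x z ∧ ¬ R y z).card ≤ v * k + w * (2 * k) := by
    rw [hsplit x, Finset.sum_insert (hnot x), Finset.sum_union (hdisj x)]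
    rw [← hsplit x]
    have e0 : (univ.filter fun z => R x z ∧ ¬ R x z).card = 0 := by
      simp
    have e1 : ∑ y ∈ (univ.filter fun w => padj G k x w), (univ.filter fun z => R x z ∧ ¬ R y z).card ≤ v * k := by
      rw [← hvx x, ← smul_eq_mul]
      apply Finset.sum_le_card_nsmul
      intro y hy
      exact hD1 y (by simpa using hy)
    have e2 : ∑ y ∈ (univ.filter fun w => x ≠ w ∧ ¬ padj G k x w), (univ.filter fun z => R x z ∧ ¬ R y z).card ≤ w * (2 * k) := by
      rw [← hwx x, ← smul_eq_mul]
      apply Finset.sum_le_card_nsmul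
      intro y hy
      exact hD2 y (by simpa using hy)
    omega
  rw [← hS]
  refine hT.trans (le_of_eq ?_)
  rw [← hcard, Nat.add_sub_cancel]
  ring

noncomputable def row {α : Type*} [Fintype α] (R : α → α → Prop) (x : α) : Finset α :=
  univ.filter fun z => R x z

theorem mem_row {α : Type*} [Fintype α] {R : α → α → Prop} {x z : α} : z ∈ row R x ↔ R x z := by
  simp [row]

def porb {α : Type*} (G : Subgroup (Perm α)) (u v a b : α) : Prop := ∃ g ∈ G, g u = a ∧ g v = b

theorem PInv.row_const {α : Type*} [Fintype α] {G : Subgroup (Perm α)} {R : α → α → Prop}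
    (hR : PInv G R) (ht : PTrans G) (x y : α) : (row R x).card = (row R y).card :=
  hR.card_const ht x y

theorem PInv.row_col {α : Type*} [Fintype α] {G : Subgroup (Perm α)} {R : α → α → Prop}
    (hR : PInv G R) (ht : PTrans G) (x y : α) : (row (fun a b => R b a) x).card = (row R y).card :=
  hR.card_col ht x y

theorem arith_gap {n k w β : ℕ} (hk : 2 ≤ k) (hn : (k + 1) ^ 2 ≤ n) (hw : w ≤ k)
    (hw2 : k = 2 → w ≤ 1) (hβ : β * (n - β) ≤ k * (n - 1 + w)) :
    β ≤ k + 1 ∨ n ≤ β + k + 1 := by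
  by_contra hcon
  push Not at hcon
  obtain ⟨x, rfl⟩ : ∃ x, β = x + (k + 2) := ⟨β - (k + 2), by omega⟩
  obtain ⟨y, rfl⟩ : ∃ y, n = y + x + 2 * (k + 2) := ⟨n - (x + 2 * (k + 2)), by omega⟩
  rw [show y + x + 2 * (k + 2) - (x + (k + 2)) = y + (k + 2) by omega,
    show y + x + 2 * (k + 2) - 1 + w = y + x + 2 * k + 3 + w by omega] at hβ
  by_cases h2 : k = 2
  · have := hw2 h2
    subst h2
    nlinarith [mul_nonneg (Nat.zero_le x) (Nat.zero_le y)]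
  · obtain ⟨j, rfl⟩ : ∃ j, k = j + 3 := ⟨k - 3, by omega⟩
    have h5 : (j + 3) * w ≤ (j + 3) * (j + 3) := Nat.mul_le_mul_left _ hw
    nlinarith [mul_nonneg (Nat.zero_le x) (Nat.zero_le y)]

def PGap {α : Type*} [Fintype α] (G : Subgroup (Perm α)) (k : ℕ) : Prop :=
  ∀ R : α → α → Prop, PInv G R → ∀ x,
    (row R x).card ≤ k + 1 ∨
      Fintype.card α ≤ (row R x).card + k + 1

theorem no_small {α : Type*} [Fintype α] [Nonempty α] {G : Subgroup (Perm α)} {k : ℕ} (ht : PTrans G)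
    (hp : PPrim G) (hk : 2 ≤ k) (hn : (k + 1) ^ 2 ≤ Fintype.card α) (hgap : PGap G k) (x : α) :
    ∀ d : ℕ, ∀ R : α → α → Prop, PInv G R → (∀ x, R x x) → (∀ x y, R x y → R y x) →
      2 ≤ (row R x).card → (row R x).card + d = k + 1 → False := by
  intro d
  induction d using Nat.strong_induction_on with
  | _ d ih =>
  intro R hR hrefl hsymm h2 hd
  set β := (row R x).card with hβ
  have hβx : ∀ y, (row R y).card = β := fun y => hR.row_const ht y x
  set R2 : α → α → Prop := fun x y => ∃ z, R x z ∧ R z y with hR2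
  have hR2inv : PInv G R2 := by
    rintro g hg a b ⟨z, h1, h2⟩
    exact ⟨g z, hR g hg _ _ h1, hR g hg _ _ h2⟩
  have hsub : ∀ a b, R a b → R2 a b := fun a b h => ⟨a, hrefl a, h⟩
  by_cases htrans : ∀ a b, R2 a b → R a b
  · have heq : Equivalence R :=
      ⟨hrefl, fun {a b} h => hsymm a b h, fun {a b c} h1 h2 => htrans a c ⟨b, h1, h2⟩⟩
    rcases hp R heq hR with h | h
    · have : β ≤ 1 := by
        rw [hβ, Finset.card_le_one]
        intro a ha b hb
        simp only [mem_row] at ha hb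
        rw [← h _ _ ha, ← h _ _ hb]
      omega
    · have : β = Fintype.card α := by
        rw [hβ, ← Finset.card_univ]; congr 1
        ext z; simp [mem_row, h]
      nlinarith
  · push Not at htrans
    obtain ⟨a, b, hab, hnab⟩ := htrans
    have hlt : β < (row R2 x).card := by
      rw [← hβx a, hR2inv.row_const ht x a]
      apply Finset.card_lt_card
      rw [Finset.ssubset_iff_of_subset]
      · exact ⟨b, by simpa [mem_row] using hab, by simpa [mem_row] using hnab⟩
      · intro z
        simp only [mem_row]
        exact hsub a z
    have hle : (row R2 x).card ≤ β + (β - 1) * (β - 2) := by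
      have h3 : (row R2 x) ⊆ (row R x) ∪
          ((row R x).erase x).biUnion
            (fun z => (row R z) \ {x, z}) := by
        intro y
        simp only [mem_row, mem_union, mem_biUnion, mem_erase, mem_sdiff,
          mem_insert, mem_singleton]
        rintro ⟨z, hxz, hzy⟩
        by_cases hzx : z = x
        · left; rwa [hzx] at hzy
        by_cases hyx : y = x
        · left; rw [hyx]; exact hrefl x
        by_cases hyz : y = z
        · left; rwa [hyz]
        right
        exact ⟨z, ⟨hzx, hxz⟩, hzy, by tauto⟩
      refine (Finset.card_le_card h3).trans ((Finset.card_union_le _ _).trans ?_)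
      apply Nat.add_le_add_left
      have h4 : ((row R x).erase x).card = β - 1 := by
        rw [Finset.card_erase_of_mem]
        simpa [mem_row] using hrefl x
      rw [← h4]
      apply Finset.card_biUnion_le_card_mul
      intro z hz
      simp only [mem_row, mem_erase] at hz
      rw [Finset.card_sdiff_of_subset, Finset.card_pair (Ne.symm hz.1), hβx]
      intro u hu
      simp only [mem_insert, mem_singleton] at hu
      rcases hu with rfl | rfl
      · simpa [mem_row] using hsymm _ _ hz.2
      · simpa [mem_row] using hrefl _
    have hb : β + (β - 1) * (β - 2) ≤ k ^ 2 + 1 := by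
      obtain ⟨c, hc⟩ : ∃ c, β = c + 2 := ⟨β - 2, by omega⟩
      rw [hc, show c + 2 - 1 = c + 1 by omega, show c + 2 - 2 = c by omega]
      have : c + 1 ≤ k := by omega
      nlinarith
    rcases hgap R2 hR2inv x with h | h
    · exact ih (k + 1 - (row R2 x).card) (by omega) R2 hR2inv
        (fun a => hsub a a (hrefl a)) (fun a b ⟨z, h1, h2⟩ => ⟨z, hsymm _ _ h2, hsymm _ _ h1⟩)
        (by omega) (by omega)
    · nlinarith

theorem two_trans {α : Type*} [Fintype α] [Nonempty α] {G : Subgroup (Perm α)} {k : ℕ} (ht : PTrans G)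
    (hp : PPrim G) (hk : 2 ≤ k) (hn : (k + 1) ^ 2 ≤ Fintype.card α) (hgap : PGap G k) :
    ∀ x y x' y' : α, x ≠ y → x' ≠ y' → ∃ g ∈ G, g x = x' ∧ g y = y' := by
  have hn' : 2 * k + 5 ≤ Fintype.card α := by nlinarith
  obtain ⟨x⟩ := ‹Nonempty α›
  have key : ∀ R : α → α → Prop, PInv G R → (∀ x, R x x) → (∀ x y, R x y → R y x) →
      2 ≤ (row R x).card → (row R x).card ≤ k + 1 → False := by
    intro R h1 h2 h3 h4 h5
    exact no_small (k := k) ht hp hk hn hgap x (k + 1 - (row R x).card) R h1 h2 h3 h4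
      (by omega)
  have key2 : ∀ O : α → α → Prop, PInv G O → (∀ x, ¬ O x x) →
      1 ≤ (row O x).card →
      2 * (row O x).card + 1 ≤ Fintype.card α → False := by
    intro O hO hirr h1 h2
    have h3 : (row O x).card ≤ k + 1 := by
      rcases hgap O hO x with h | h
      · exact h
      · omega
    set S : α → α → Prop := fun x y => x = y ∨ O x y ∨ O y x with hS
    have hSinv : PInv G S := by
      rintro g hg a b (h | h | h)
      · exact Or.inl (by rw [h])
      · exact Or.inr (Or.inl (hO g hg _ _ h))
      · exact Or.inr (Or.inr (hO g hg _ _ h))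
    have hSrefl : ∀ a, S a a := fun a => Or.inl rfl
    have hSsymm : ∀ a b, S a b → S b a := by
      rintro a b (h | h | h)
      · exact Or.inl h.symm
      · exact Or.inr (Or.inr h)
      · exact Or.inr (Or.inl h)
    have hSle : (row S x).card ≤ 2 * k + 3 := by
      have h4 : (row S x) ⊆ insert x ((row O x) ∪
          (row (fun a b => O b a) x)) := by
        intro z
        simp only [hS, mem_row, mem_union, mem_insert]
        rintro (h | h | h)
        · exact Or.inl h.symm
        · exact Or.inr (Or.inl h)
        · exact Or.inr (Or.inr h)
      have h5 := (Finset.card_le_card h4).trans (Finset.card_insert_le _ _)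
      have h6 := Finset.card_union_le (row O x) (row (fun a b => O b a) x)
      have h7 := hO.row_col ht x x
      omega
    have hSge : 2 ≤ (row S x).card := by
      obtain ⟨y, hy⟩ := Finset.card_pos.1 h1
      simp only [mem_row] at hy
      have hxy : x ≠ y := by rintro rfl; exact hirr _ hy
      rw [← Finset.card_pair hxy]
      apply Finset.card_le_card
      intro z hz
      simp only [mem_insert, mem_singleton] at hz
      rcases hz with rfl | rfl
      · simp [mem_row, hS]
      · simp [mem_row, hS, hy]
    rcases hgap S hSinv x with h | h
    · exact key S hSinv hSrefl hSsymm hSge h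
    · set T : α → α → Prop := fun x y => x = y ∨ ¬ S x y with hT
      have hTinv : PInv G T := by
        rintro g hg a b (h | h)
        · exact Or.inl (by rw [h])
        · exact Or.inr (fun h' => h ((hSinv.iff hg a b).1 h'))
      have hTcard : (row T x).card + (row S x).card =
          Fintype.card α + 1 := by
        have h4 := Finset.card_add_card_compl (row S x)
        have h5 : (row T x) = insert x (row S x)ᶜ := by
          ext z
          simp only [hT, mem_row, mem_insert, mem_compl]
          rw [eq_comm]
        rw [h5, Finset.card_insert_of_notMem (by simp [mem_row, hSrefl])]
        omega
      have hTle : (row T x).card ≤ k + 1 := by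
        rcases hgap T hTinv x with h | h
        · exact h
        · omega
      refine key T hTinv (fun a => Or.inl rfl) ?_ (by omega) hTle
      rintro a b (h | h)
      · exact Or.inl h.symm
      · exact Or.inr fun h' => h (hSsymm _ _ h')
  by_contra hcon
  push Not at hcon
  obtain ⟨x0, y0, x1, y1, hxy0, hxy1, hno⟩ := hcon
  have hOinv : ∀ u v : α, PInv G (porb G u v) := by
    rintro u v h hh a b ⟨g, hg, rfl, rfl⟩
    exact ⟨h * g, G.mul_mem hh hg, rfl, rfl⟩
  have hOirr : ∀ u v : α, u ≠ v → ∀ a, ¬ porb G u v a a := by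
    rintro u v huv a ⟨g, hg, h1, h2⟩
    exact huv (g.injective (h1.trans h2.symm))
  have hOpos : ∀ u v : α, 1 ≤ (row (porb G u v) x).card := by
    intro u v
    obtain ⟨g, hg, hgx⟩ := ht u x
    rw [Nat.succ_le_iff, Finset.card_pos]
    exact ⟨g v, by simp only [mem_row]; exact ⟨g, hg, hgx, rfl⟩⟩
  have hsum : (row (porb G x0 y0) x).card +
      (row (porb G x1 y1) x).card + 1 ≤ Fintype.card α := by
    rw [← Finset.card_union_of_disjoint, ← Finset.card_insert_of_notMem (a := x)]
    · exact Finset.card_le_univ _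
    · simp only [mem_union, mem_row, not_or]
      exact ⟨hOirr _ _ hxy0 x, hOirr _ _ hxy1 x⟩
    · rw [Finset.disjoint_left]
      intro z h1 h2
      simp only [mem_row] at h1 h2
      obtain ⟨g, hg, h3, h4⟩ := h1
      obtain ⟨h, hh, h5, h6⟩ := h2
      apply hno (h⁻¹ * g) (G.mul_mem (G.inv_mem hh) hg)
      · rw [Perm.mul_apply, h3, ← h5]; simp
      · rw [Perm.mul_apply, h4, ← h6]; simp
  by_cases hc : (row (porb G x0 y0) x).card ≤
      (row (porb G x1 y1) x).card
  · exact key2 _ (hOinv x0 y0) (hOirr _ _ hxy0) (hOpos _ _) (by omega)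
  · exact key2 _ (hOinv x1 y1) (hOirr _ _ hxy1) (hOpos _ _) (by omega)

noncomputable def cs {α : Type*} [Fintype α] (P : α → Prop) : Finset α := univ.filter P

theorem mem_cs {α : Type*} [Fintype α] {P : α → Prop} {z : α} : z ∈ cs P ↔ P z := by
  simp [cs]

def TT {α : Type*} (G : Subgroup (Perm α)) : Prop :=
  ∀ x y x' y' : α, x ≠ y → x' ≠ y' → ∃ g ∈ G, g x = x' ∧ g y = y'

def TInv {α : Type*} (G : Subgroup (Perm α)) (Q : α → α → α → Prop) : Prop :=
  (∀ g ∈ G, ∀ x y z, Q x y z → Q (g x) (g y) (g z)) ∧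
  (∀ x y z, Q x y z → x ≠ y ∧ y ≠ z ∧ x ≠ z)

theorem TInv.iff {α : Type*} {G : Subgroup (Perm α)} {Q : α → α → α → Prop} (hQ : TInv G Q)
    {g : Perm α} (hg : g ∈ G) (x y z : α) : Q (g x) (g y) (g z) ↔ Q x y z := by
  refine ⟨fun h => ?_, hQ.1 g hg x y z⟩
  simpa using hQ.1 g⁻¹ (G.inv_mem hg) _ _ _ h

theorem TInv.card_const {α : Type*} [Fintype α] {G : Subgroup (Perm α)} {Q : α → α → α → Prop}
    (hQ : TInv G Q) (ht : TT G) {x y x' y' : α} (hxy : x ≠ y) (hxy' : x' ≠ y') :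
    (cs (Q x y)).card = (cs (Q x' y')).card := by
  obtain ⟨g, hg, rfl, rfl⟩ := ht x y x' y' hxy hxy'
  apply Finset.card_bij (fun z _ => g z)
  · intro a ha; simpa [mem_cs, hQ.iff hg] using ha
  · intro a _ b _ e; simpa using e
  · intro b hb
    refine ⟨g⁻¹ b, ?_, by simp⟩
    have := hQ.iff hg x y (g⁻¹ b)
    simp [mem_cs] at this hb ⊢
    exact this.1 hb

theorem TInv.swap {α : Type*} {G : Subgroup (Perm α)} {Q : α → α → α → Prop}
    (hQ : TInv G Q) : TInv G (fun x y z => Q x z y) :=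
  ⟨fun g hg x y z h => hQ.1 g hg x z y h, fun x y z h => by
    obtain ⟨h1, h2, h3⟩ := hQ.2 _ _ _ h
    exact ⟨h3, h2.symm, h1⟩⟩

theorem TInv.swap1 {α : Type*} {G : Subgroup (Perm α)} {Q : α → α → α → Prop}
    (hQ : TInv G Q) : TInv G (fun x y z => Q y x z) :=
  ⟨fun g hg x y z h => hQ.1 g hg y x z h, fun x y z h => by
    obtain ⟨h1, h2, h3⟩ := hQ.2 _ _ _ h
    exact ⟨h1.symm, h3, h2⟩⟩

theorem TInv.sum_row {α : Type*} [Fintype α] {G : Subgroup (Perm α)} {Q : α → α → α → Prop}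
    (hQ : TInv G Q) (ht : TT G) {w x : α} (hwx : w ≠ x) :
    ∑ y : α, (cs (Q w y)).card = (Fintype.card α - 1) * (cs (Q w x)).card := by
  rw [← Finset.add_sum_erase _ _ (mem_univ w)]
  have h0 : cs (Q w w) = ∅ := by
    ext z; simp only [mem_cs, notMem_empty, iff_false]
    intro h; exact (hQ.2 _ _ _ h).1 rfl
  rw [h0, Finset.card_empty, zero_add, Finset.sum_const_nat (m := (cs (Q w x)).card)]
  · rw [Finset.card_erase_of_mem (mem_univ w), Finset.card_univ]
  · intro y hy
    exact hQ.card_const ht (ne_of_mem_erase hy).symm hwx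

theorem TInv.card_swap {α : Type*} [Fintype α] {G : Subgroup (Perm α)} {Q : α → α → α → Prop}
    (hQ : TInv G Q) (ht : TT G) {w x x' y' : α} (hwx : w ≠ x) (hxy' : x' ≠ y') :
    (cs (fun z => Q x' z y')).card = (cs (Q w x)).card := by
  have h1 := hQ.sum_row ht hwx
  have h2 := hQ.swap.sum_row ht hwx
  have h3 : ∑ y : α, (cs (Q w y)).card = ∑ y : α, (cs (fun z => Q w z y)).card := by
    simp only [cs, Finset.card_filter]
    rw [Finset.sum_comm]
  have h4 : 1 < Fintype.card α := Fintype.one_lt_card_iff.2 ⟨w, x, hwx⟩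
  have h5 : (cs (fun z => Q w z x)).card = (cs (Q w x)).card :=
    Nat.eq_of_mul_eq_mul_left (show 0 < Fintype.card α - 1 by omega) (by rw [← h1, ← h2, h3])
  rw [← h5]
  exact hQ.swap.card_const ht hxy' hwx

theorem TInv.card_first {α : Type*} [Fintype α] {G : Subgroup (Perm α)} {Q : α → α → α → Prop}
    (hQ : TInv G Q) (ht : TT G) {w x x' y' : α} (hwx : w ≠ x) (hxy' : x' ≠ y') :
    (cs (fun z => Q z x' y')).card = (cs (Q w x)).card :=
  hQ.swap1.card_swap ht hwx.symm hxy'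

theorem exists_small {α : Type*} [Fintype α] {G : Subgroup (Perm α)} {k : ℕ} (ht : TT G)
    {g : Perm α} (hg : g ∈ G) (hg1 : g ≠ 1) (hgk : permIndex g ≤ k) {x y : α} (hxy : x ≠ y) :
    ∃ h ∈ G, permIndex h ≤ k ∧ h x = y := by
  obtain ⟨u, hu⟩ : ∃ x, g x ≠ x := by
    by_contra hcon; push Not at hcon
    exact hg1 (Perm.ext hcon)
  obtain ⟨c, hc, h1, h2⟩ := ht u (g u) x y hu.symm hxy
  refine ⟨c * g * c⁻¹, G.mul_mem (G.mul_mem hc hg) (G.inv_mem hc), (pidx_conj_le g c).trans hgk, ?_⟩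
  rw [← h1, ← h2]; simp

theorem T3a {α : Type*} [Fintype α] {G : Subgroup (Perm α)} {k : ℕ} (ht : TT G)
    {g : Perm α} (hg : g ∈ G) (hg1 : g ≠ 1) (hgk : permIndex g ≤ k) {Q : α → α → α → Prop}
    (hQ : TInv G Q) {w0 x : α} (hwx : w0 ≠ x) :
    (cs (Q w0 x)).card = 0 ∨ Fintype.card α + 2 ≤ (cs (Q w0 x)).card + 4 * k := by
  set ρ := (cs (Q w0 x)).card with hρ
  set A : Finset (α × α) := univ.filter fun p => Q p.1 x p.2 with hA
  have hAcard : A.card = (Fintype.card α - 1) * ρ := by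
    rw [hρ, ← hQ.swap1.sum_row (w := x) (x := w0) ht hwx.symm, hA, Finset.card_filter,
      Fintype.sum_prod_type]
    simp only [cs, Finset.card_filter]
  have hS : ∑ y ∈ univ.erase x, (A.filter fun p => ¬ Q p.1 y p.2).card = A.card * (Fintype.card α - ρ) := by
    have e1 : ∑ y ∈ univ.erase x, (A.filter fun p => ¬ Q p.1 y p.2).card =
        ∑ p ∈ A, ((univ.erase x).filter fun y => ¬ Q p.1 y p.2).card := by
      simp only [Finset.card_filter _ A, Finset.card_filter _ (univ.erase x)]
      rw [Finset.sum_comm]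
    rw [e1]
    apply Finset.sum_const_nat
    intro p hp
    simp only [hA, mem_filter, mem_univ, true_and] at hp
    have e2 : ((univ.erase x).filter fun y => ¬ Q p.1 y p.2) = (cs fun y => Q p.1 y p.2)ᶜ := by
      ext y
      simp only [mem_filter, mem_erase, mem_univ, and_true, mem_compl, mem_cs]
      constructor
      · exact fun h => h.2
      · intro h
        refine ⟨?_, h⟩
        rintro rfl; exact h hp
    rw [e2, Finset.card_compl, hQ.card_swap ht hwx (hQ.2 _ _ _ hp).2.2]
  have hT : ∑ y ∈ univ.erase x, (A.filter fun p => ¬ Q p.1 y p.2).card ≤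
      (Fintype.card α - 1) * (2 * (2 * k - 1) * ρ) := by
    rw [← Finset.card_univ, ← Finset.card_erase_of_mem (mem_univ x), ← smul_eq_mul]
    apply Finset.sum_le_card_nsmul
    intro y hy
    have hyx : y ≠ x := ne_of_mem_erase hy
    obtain ⟨h, hh, hhk, hxy⟩ := exists_small ht hg hg1 hgk hyx.symm
    have hsx : x ∈ h.support := by rw [Perm.mem_support, hxy]; exact hyx
    have hsc : (h.support.erase x).card ≤ 2 * k - 1 := by
      rw [Finset.card_erase_of_mem hsx]
      have := supp_le_two_idx h
      omega
    have hsub : (A.filter fun p => ¬ Q p.1 y p.2) ⊆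
        (h.support.erase x).biUnion (fun w => (cs (Q w x)).image fun z => (w, z)) ∪
        (h.support.erase x).biUnion (fun z => (cs (fun w => Q w x z)).image fun w => (w, z)) := by
      rintro ⟨w, z⟩ hp
      simp only [hA, mem_filter, mem_univ, true_and] at hp
      obtain ⟨h1, h2⟩ := hp
      have h3 := hQ.2 _ _ _ h1
      simp only [mem_union, mem_biUnion, mem_erase, mem_image, mem_cs, Prod.mk.injEq]
      by_cases hw : w ∈ h.support
      · exact Or.inl ⟨w, ⟨h3.1, hw⟩, z, h1, rfl, rfl⟩
      by_cases hz : z ∈ h.support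
      · exact Or.inr ⟨z, ⟨h3.2.1.symm, hz⟩, w, h1, rfl, rfl⟩
      exfalso
      apply h2
      have := hQ.1 h hh _ _ _ h1
      rwa [Perm.notMem_support.1 hw, Perm.notMem_support.1 hz, hxy] at this
    refine (Finset.card_le_card hsub).trans ((Finset.card_union_le _ _).trans ?_)
    have b1 : ((h.support.erase x).biUnion (fun w => (cs (Q w x)).image fun z => (w, z))).card ≤
        (h.support.erase x).card * ρ := by
      apply Finset.card_biUnion_le_card_mul
      intro w hw
      refine Finset.card_image_le.trans (le_of_eq ?_)
      exact hQ.card_const ht (ne_of_mem_erase hw) hwx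
    have b2 : ((h.support.erase x).biUnion
        (fun z => (cs (fun w => Q w x z)).image fun w => (w, z))).card ≤
        (h.support.erase x).card * ρ := by
      apply Finset.card_biUnion_le_card_mul
      intro w hw
      refine Finset.card_image_le.trans (le_of_eq ?_)
      exact hQ.card_first ht hwx (ne_of_mem_erase hw).symm
    have b3 := Nat.mul_le_mul_right ρ hsc
    have b4 : 2 * (2 * k - 1) * ρ = 2 * ((2 * k - 1) * ρ) := by ring
    omega
  rw [hS, hAcard, mul_assoc] at hT
  have h4 : 1 < Fintype.card α := Fintype.one_lt_card_iff.2 ⟨w0, x, hwx⟩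
  have h5 := Nat.le_of_mul_le_mul_left hT (show 0 < Fintype.card α - 1 by omega)
  by_cases h0 : ρ = 0
  · exact Or.inl h0
  right
  rw [mul_comm] at h5
  have h6 := Nat.le_of_mul_le_mul_right h5 (Nat.pos_of_ne_zero h0)
  have hk : 1 ≤ k := by
    by_contra hk0
    have := supp_le_two_idx g
    have h7 : g.support.card = 0 := by omega
    exact hg1 (Perm.support_eq_empty_iff.1 (Finset.card_eq_zero.1 h7))
  omega

theorem exists_small_fix {α : Type*} [Fintype α] {G : Subgroup (Perm α)} {k : ℕ} (ht : TT G)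
    {g : Perm α} (hg : g ∈ G) (hg1 : g ≠ 1) (hgk : permIndex g ≤ k) 
    (hn : (k + 1) ^ 2 ≤ Fintype.card α) {w x y : α} (hxy : x ≠ y) (hwx : w ≠ x) (hwy : w ≠ y) :
    ∃ h ∈ G, permIndex h ≤ k ∧ h w = w ∧ h x = y := by
  set Q : α → α → α → Prop := fun w x y => (w ≠ x ∧ x ≠ y ∧ w ≠ y) ∧
    ¬ ∃ h ∈ G, permIndex h ≤ k ∧ h w = w ∧ h x = y with hQdef
  have hQ : TInv G Q := by
    refine ⟨?_, fun x y z h => h.1⟩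
    rintro c hc x y z ⟨⟨h1, h2, h3⟩, h4⟩
    refine ⟨⟨by simpa using h1, by simpa using h2, by simpa using h3⟩, ?_⟩
    rintro ⟨h, hh, hhk, h5, h6⟩
    apply h4
    refine ⟨c⁻¹ * h * c, G.mul_mem (G.mul_mem (G.inv_mem hc) hh) hc, ?_, ?_, ?_⟩
    · have := pidx_conj_le h c⁻¹
      rw [inv_inv] at this
      exact this.trans hhk
    · rw [Perm.mul_apply, Perm.mul_apply, h5]; simp
    · rw [Perm.mul_apply, Perm.mul_apply, h6]; simp
  by_contra hcon
  have hQ1 : Q w x y := ⟨⟨hwx, hxy, hwy⟩, hcon⟩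
  have hpos : 0 < (cs (Q w x)).card := Finset.card_pos.2 ⟨y, mem_cs.2 hQ1⟩
  have hle : (cs (Q w x)).card + 2 ≤ 2 * k := by
    rw [← hQ.card_first ht hwx hxy]
    obtain ⟨h, hh, hhk, hxy'⟩ := exists_small ht hg hg1 hgk hxy
    have h1 : x ∈ h.support := by rw [Perm.mem_support, hxy']; exact hxy.symm
    have h2 : y ∈ h.support := by rw [← hxy', Perm.apply_mem_support]; exact h1
    have h3 : (cs fun z => Q z x y) ⊆ h.support \ {x, y} := by
      intro z hz
      rw [mem_cs] at hz
      obtain ⟨⟨h3, _, h4⟩, h5⟩ := hz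
      simp only [mem_sdiff, mem_insert, mem_singleton, not_or]
      refine ⟨?_, h3, h4⟩
      by_contra h6
      exact h5 ⟨h, hh, hhk, Perm.notMem_support.1 h6, hxy'⟩
    have h4 := Finset.card_le_card h3
    have h5 : ({x, y} : Finset α) ⊆ h.support := by
      intro z; simp only [mem_insert, mem_singleton]
      rintro (rfl | rfl)
      · exact h1
      · exact h2
    have h6 := Finset.card_sdiff_add_card_eq_card h5
    rw [Finset.card_pair hxy] at h6
    have := supp_le_two_idx h
    omega
  rcases T3a ht hg hg1 hgk hQ hwx with h | h
  · omega
  · have : (k + 1) ^ 2 + 4 ≤ 6 * k := by omega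
    zify at this
    nlinarith [sq_nonneg ((k : ℤ) - 2)]

theorem T3b {α : Type*} [Fintype α] {G : Subgroup (Perm α)} {k : ℕ} (ht : TT G)
    {g : Perm α} (hg : g ∈ G) (hg1 : g ≠ 1) (hgk : permIndex g ≤ k)
    (hn : (k + 1) ^ 2 ≤ Fintype.card α) {Q : α → α → α → Prop}
    (hQ : TInv G Q) {w x : α} (hwx : w ≠ x) :
    (cs (Q w x)).card * (Fintype.card α - 1 - (cs (Q w x)).card) ≤ k * (Fintype.card α - 2) := by
  set ρ := (cs (Q w x)).card with hρ
  set Y : Finset α := univ \ {w, x} with hY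
  have hYc : Y.card = Fintype.card α - 2 := by
    rw [hY, Finset.card_sdiff_of_subset (subset_univ _), Finset.card_pair hwx, Finset.card_univ]
  have hS : ρ * (Fintype.card α - 1 - ρ) ≤ ∑ y ∈ Y, ((cs (Q w x)).filter fun z => ¬ Q w y z).card := by
    have e1 : ∑ y ∈ Y, ((cs (Q w x)).filter fun z => ¬ Q w y z).card =
        ∑ z ∈ cs (Q w x), (Y.filter fun y => ¬ Q w y z).card := by
      simp only [Finset.card_filter]
      rw [Finset.sum_comm]
    rw [e1, ← smul_eq_mul]
    apply Finset.card_nsmul_le_sum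
    intro z hz
    rw [mem_cs] at hz
    have e2 : (univ : Finset α) ⊆ insert w (cs (fun y => Q w y z) ∪ (Y.filter fun y => ¬ Q w y z)) := by
      intro y _
      simp only [hY, mem_insert, mem_union, mem_cs, mem_filter, mem_sdiff, mem_univ, true_and,
        mem_singleton, not_or]
      by_cases h1 : y = w
      · exact Or.inl h1
      by_cases h2 : Q w y z
      · exact Or.inr (Or.inl h2)
      refine Or.inr (Or.inr ⟨⟨h1, ?_⟩, h2⟩)
      rintro rfl; exact h2 hz
    have e3 := (Finset.card_le_card e2).trans ((Finset.card_insert_le _ _).trans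
      (Nat.add_le_add_right (Finset.card_union_le _ _) 1))
    rw [Finset.card_univ, hQ.card_swap ht hwx (hQ.2 _ _ _ hz).2.2] at e3
    omega
  refine hS.trans ?_
  rw [mul_comm, ← hYc, ← smul_eq_mul]
  apply Finset.sum_le_card_nsmul
  intro y hy
  simp only [hY, mem_sdiff, mem_univ, true_and, mem_insert, mem_singleton, not_or] at hy
  obtain ⟨h, hh, hhk, h1, h2⟩ := exists_small_fix ht hg hg1 hgk hn (Ne.symm hy.2) hwx (Ne.symm hy.1)
  refine le_trans (Finset.card_le_card ?_) ((pidx_asc h (fun z => if Q w x z then 1 else 0)).trans hhk)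
  intro z
  simp only [mem_filter, mem_univ, true_and, mem_cs]
  rintro ⟨h3, h4⟩
  have h5 : ¬ Q w x (h⁻¹ z) := by
    intro h5
    apply h4
    have := hQ.1 h hh _ _ _ h5
    rw [h1, h2] at this
    simpa using this
  simp only [if_pos h3, if_neg h5]
  exact Nat.one_pos

theorem arith3 {n k ρ σ : ℕ} (hk : 2 ≤ k) (hn : (k + 1) ^ 2 ≤ n) (h1 : ρ + σ + 2 = n)
    (h2 : n + 2 ≤ ρ + 4 * k) (h3 : n + 2 ≤ σ + 4 * k) (h4 : ρ * (n - 1 - ρ) ≤ k * (n - 2)) : False := by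
  have hk4 : k ≤ 4 := by
    by_contra hcon
    obtain ⟨j, rfl⟩ : ∃ j, k = j + 5 := ⟨k - 5, by omega⟩
    nlinarith
  rw [show n - 1 - ρ = σ + 1 by omega, show n - 2 = ρ + σ by omega] at h4
  have hρ : ρ ≤ 16 := by omega
  interval_cases k <;> interval_cases ρ <;> omega

theorem three_trans {α : Type*} [Fintype α] {G : Subgroup (Perm α)} {k : ℕ} (ht : TT G)
    {g : Perm α} (hg : g ∈ G) (hg1 : g ≠ 1) (hgk : permIndex g ≤ k) (hk : 2 ≤ k)
    (hn : (k + 1) ^ 2 ≤ Fintype.card α) {x y z x' y' z' : α} (h1 : x ≠ y) (h2 : y ≠ z) (h3 : x ≠ z)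
    (h1' : x' ≠ y') (h2' : y' ≠ z') (h3' : x' ≠ z') : ∃ g ∈ G, g x = x' ∧ g y = y' ∧ g z = z' := by
  by_contra hcon
  set Q : α → α → α → Prop := fun a b c => ∃ g ∈ G, g x = a ∧ g y = b ∧ g z = c with hQdef
  have hQ : TInv G Q := by
    constructor
    · rintro h hh a b c ⟨u, hu, rfl, rfl, rfl⟩
      exact ⟨h * u, G.mul_mem hh hu, rfl, rfl, rfl⟩
    · rintro a b c ⟨u, hu, rfl, rfl, rfl⟩
      exact ⟨by simpa using h1, by simpa using h2, by simpa using h3⟩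
  set Q' : α → α → α → Prop := fun a b c => (a ≠ b ∧ b ≠ c ∧ a ≠ c) ∧ ¬ Q a b c with hQ'def
  have hQ' : TInv G Q' := by
    refine ⟨?_, fun _ _ _ h => h.1⟩
    rintro c hc x y z ⟨⟨h1, h2, h3⟩, h4⟩
    exact ⟨⟨by simpa using h1, by simpa using h2, by simpa using h3⟩, fun h => h4 ((hQ.iff hc x y z).1 h)⟩
  have p1 : 0 < (cs (Q x y)).card := Finset.card_pos.2 ⟨z, mem_cs.2 ⟨1, G.one_mem, rfl, rfl, rfl⟩⟩
  have p2 : 0 < (cs (Q' x y)).card := by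
    rw [hQ'.card_const ht h1 h1']
    exact Finset.card_pos.2 ⟨z', mem_cs.2 ⟨⟨h1', h2', h3'⟩, hcon⟩⟩
  have hsum : (cs (Q x y)).card + (cs (Q' x y)).card + 2 = Fintype.card α := by
    have e : cs (Q x y) ∪ cs (Q' x y) = univ \ {x, y} := by
      ext c
      simp only [mem_union, mem_cs, mem_sdiff, mem_univ, true_and, mem_insert, mem_singleton, not_or]
      constructor
      · rintro (h | h)
        · have := hQ.2 _ _ _ h
          exact ⟨this.2.2.symm, this.2.1.symm⟩
        · have := hQ'.2 _ _ _ h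
          exact ⟨this.2.2.symm, this.2.1.symm⟩
      · rintro ⟨h4, h5⟩
        by_cases h6 : Q x y c
        · exact Or.inl h6
        · exact Or.inr ⟨⟨h1, Ne.symm h5, Ne.symm h4⟩, h6⟩
    have d : Disjoint (cs (Q x y)) (cs (Q' x y)) := by
      rw [Finset.disjoint_left]
      intro c h4 h5
      rw [mem_cs] at h4 h5
      exact h5.2 h4
    rw [← Finset.card_union_of_disjoint d, e, ← Finset.card_pair h1,
      Finset.card_sdiff_add_card_eq_card (subset_univ _), Finset.card_univ]
  rcases T3a ht hg hg1 hgk hQ h1 with h | a1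
  · omega
  rcases T3a ht hg hg1 hgk hQ' h1 with h | a2
  · omega
  exact arith3 hk hn hsum a1 a2 (T3b ht hg hg1 hgk hn hQ h1)

def TTT {α : Type*} (G : Subgroup (Perm α)) : Prop :=
  ∀ x y z x' y' z' : α, x ≠ y → y ≠ z → x ≠ z → x' ≠ y' → y' ≠ z' → x' ≠ z' →
    ∃ g ∈ G, g x = x' ∧ g y = y' ∧ g z = z'

theorem avg_conj {α : Type*} [Fintype α] {G : Subgroup (Perm α)} (ht : TTT G) (S : Finset α)
    {a b c : α} (haS : a ∈ S) (hbS : b ∈ S) (hab : a ≠ b) (hc : c ∉ S) (hn : 3 ≤ Fintype.card α) :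
    ∃ x ∈ G, x a = a ∧ x c = b ∧
      (Fintype.card α - 2) * ((S.erase a).filter fun t => x t ∈ S).card ≤ (S.card - 1) * (S.card - 2) := by
  have hac : a ≠ c := by rintro rfl; exact hc haS
  set X : Finset (Perm α) := cs (fun x => x ∈ G ∧ x a = a ∧ x c = b) with hX
  have hXne : X.Nonempty := by
    obtain ⟨d, hd⟩ : ∃ d, d ∉ ({a, c} : Finset α) := by
      by_contra hcon; push Not at hcon
      have h1 : (univ : Finset α) ⊆ {a, c} := fun z _ => hcon z
      have h2 := Finset.card_le_card h1
      rw [Finset.card_univ, Finset.card_pair hac] at h2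
      omega
    obtain ⟨d', hd'⟩ : ∃ d, d ∉ ({a, b} : Finset α) := by
      by_contra hcon; push Not at hcon
      have h1 : (univ : Finset α) ⊆ {a, b} := fun z _ => hcon z
      have h2 := Finset.card_le_card h1
      rw [Finset.card_univ, Finset.card_pair hab] at h2
      omega
    simp only [mem_insert, mem_singleton, not_or] at hd hd'
    obtain ⟨g, hg, h1, h2, h3⟩ := ht a c d a b d' hac (Ne.symm hd.2) (Ne.symm hd.1) hab
      (Ne.symm hd'.2) (Ne.symm hd'.1)
    exact ⟨g, mem_cs.2 ⟨hg, h1, h2⟩⟩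
  have hconst : ∀ t t' t'' : α, t' ≠ a → t' ≠ b → t'' ≠ a → t'' ≠ b →
      (X.filter fun x => x t = t').card ≤ (X.filter fun x => x t = t'').card := by
    intro t t' t'' h1 h2 h3 h4
    obtain ⟨u, hu, u1, u2, u3⟩ := ht a b t' a b t'' hab h2.symm h1.symm hab h4.symm h3.symm
    apply Finset.card_le_card_of_injOn (fun x => u * x)
    · intro x hx
      simp only [hX, coe_filter, mem_cs, Set.mem_ofPred_eq] at hx ⊢
      obtain ⟨⟨x1, x2, x3⟩, x4⟩ := hx
      refine ⟨⟨G.mul_mem hu x1, ?_, ?_⟩, ?_⟩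
      · rw [Perm.mul_apply, x2, u1]
      · rw [Perm.mul_apply, x3, u2]
      · rw [Perm.mul_apply, x4, u3]
    · intro x _ y _ hxy
      exact mul_left_cancel hxy
  have hcount : ∀ t t' : α, t ≠ a → t ≠ c → t' ≠ a → t' ≠ b →
      (Fintype.card α - 2) * (X.filter fun x => x t = t').card = X.card := by
    intro t t' h1 h2 h3 h4
    have e1 : X.card = ∑ t'' ∈ univ \ {a, b}, (X.filter fun x => x t = t'').card := by
      apply Finset.card_eq_sum_card_fiberwise (f := fun x : Perm α => x t)
      intro x hx
      simp only [hX, mem_coe, mem_cs] at hx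
      simp only [coe_sdiff, coe_univ, Set.mem_sdiff, Set.mem_univ, true_and, mem_coe, mem_insert,
        mem_singleton, not_or]
      constructor
      · intro h; rw [← hx.2.1] at h
        apply h1; apply x.injective; rw [h, hx.2.1]
      · intro h; rw [← hx.2.2] at h
        exact h2 (x.injective h)
    rw [e1, Finset.sum_const_nat (m := (X.filter fun x => x t = t').card)]
    · rw [Finset.card_sdiff_of_subset (subset_univ _), Finset.card_pair hab, Finset.card_univ]
    · intro t'' ht''
      simp only [mem_sdiff, mem_univ, true_and, mem_insert, mem_singleton, not_or] at ht''
      exact le_antisymm (hconst t t'' t' ht''.1 ht''.2 h3 h4) (hconst t t' t'' h3 h4 ht''.1 ht''.2)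
  have hsum : ∑ x ∈ X, (Fintype.card α - 2) * ((S.erase a).filter fun t => x t ∈ S).card =
      ∑ x ∈ X, (S.card - 1) * (S.card - 2) := by
    rw [← Finset.mul_sum]
    have e1 : ∑ x ∈ X, ((S.erase a).filter fun t => x t ∈ S).card =
        ∑ t ∈ S.erase a, ∑ t' ∈ (S \ {a, b}), (X.filter fun x => x t = t').card := by
      have e2 : ∀ t ∈ S.erase a, ∑ t' ∈ (S \ {a, b}), (X.filter fun x => x t = t').card =
          (X.filter fun x => x t ∈ S).card := by
        intro t htS
        rw [mem_erase] at htS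
        rw [Finset.card_eq_sum_card_fiberwise (f := fun x : Perm α => x t) (t := S \ {a, b})]
        · apply Finset.sum_congr rfl
          intro t' ht'
          rw [Finset.filter_filter]
          congr 1
          apply Finset.filter_congr
          intro x _
          rw [mem_sdiff] at ht'
          constructor
          · intro h; exact ⟨by rw [h]; exact ht'.1, h⟩
          · exact fun h => h.2
        · intro x hx
          simp only [hX, coe_filter, mem_cs, Set.mem_ofPred_eq] at hx
          simp only [coe_sdiff, Set.mem_sdiff, mem_coe, mem_insert, mem_singleton, not_or]
          refine ⟨hx.2, ?_, ?_⟩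
          · intro h
            apply htS.1; apply x.injective; rw [h, hx.1.2.1]
          · intro h; rw [← hx.1.2.2] at h
            apply hc; rw [← x.injective h]; exact htS.2
      rw [Finset.sum_congr rfl e2]
      simp only [Finset.card_filter]
      rw [Finset.sum_comm]
    rw [e1, Finset.mul_sum]
    have e3 : ∀ t ∈ S.erase a, (Fintype.card α - 2) * ∑ t' ∈ (S \ {a, b}), (X.filter fun x => x t = t').card
        = (S.card - 2) * X.card := by
      intro t htS
      rw [mem_erase] at htS
      rw [Finset.mul_sum, Finset.sum_const_nat (m := X.card)]
      · rw [Finset.card_sdiff_of_subset, Finset.card_pair hab]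
        intro z; simp only [mem_insert, mem_singleton]
        rintro (rfl | rfl)
        · exact haS
        · exact hbS
      · intro t' ht'
        simp only [mem_sdiff, mem_insert, mem_singleton, not_or] at ht'
        exact hcount t t' htS.1 (by rintro rfl; exact hc htS.2) ht'.2.1 ht'.2.2
    rw [Finset.sum_const_nat e3, Finset.card_erase_of_mem haS, Finset.sum_const, smul_eq_mul]
    ring
  obtain ⟨x, hx, hle⟩ := Finset.exists_le_of_sum_le hXne hsum.le
  rw [hX, mem_cs] at hx
  exact ⟨x, hx.1, hx.2.1, hx.2.2, hle⟩

theorem comm_supp {α : Type*} [Fintype α] (g h : Perm α) :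
    (g * h * g⁻¹ * h⁻¹).support ⊆ (g.support ∩ h.support) ∪ ((g.support ∩ h.support).image g ∪
      (g.support ∩ h.support).image h) := by
  intro z hz
  by_contra hcon
  simp only [mem_union, mem_image, not_or] at hcon
  obtain ⟨h1, h2, h3⟩ := hcon
  have h2' : g⁻¹ z ∉ g.support ∩ h.support := fun h => h2 ⟨_, h, by simp⟩
  have h3' : h⁻¹ z ∉ g.support ∩ h.support := fun h' => h3 ⟨_, h', by simp⟩
  rw [Perm.mem_support] at hz
  apply hz
  simp only [Perm.mul_apply]
  by_cases hg : z ∈ g.support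
  · have hh : z ∉ h.support := fun hh => h1 (mem_inter.2 ⟨hg, hh⟩)
    have e1 : h⁻¹ z = z := by rw [Perm.inv_eq_iff_eq]; exact (Perm.notMem_support.1 hh).symm
    have hg' : g⁻¹ z ∈ g.support := by
      rw [← Perm.apply_mem_support]; simpa using hg
    have hh' : g⁻¹ z ∉ h.support := fun hh => h2' (mem_inter.2 ⟨hg', hh⟩)
    rw [e1, Perm.notMem_support.1 hh']; simp
  · have e1 : g z = z := Perm.notMem_support.1 hg
    have hg' : h⁻¹ z ∉ g.support := by
      intro hg'
      by_cases hh : z ∈ h.support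
      · apply h3'
        refine mem_inter.2 ⟨hg', ?_⟩
        rw [← Perm.apply_mem_support]; simpa using hh
      · have e2 : h⁻¹ z = z := by rw [Perm.inv_eq_iff_eq]; exact (Perm.notMem_support.1 hh).symm
        rw [e2] at hg'; exact hg hg'
    have e2 : g⁻¹ (h⁻¹ z) = h⁻¹ z := by
      rw [Perm.inv_eq_iff_eq]; exact (Perm.notMem_support.1 hg').symm
    rw [e2]; simp [e1]

theorem bochert {α : Type*} [Fintype α] {G : Subgroup (Perm α)} (ht : TTT G) {g : Perm α}
    (hg1 : g ≠ 1) (hn : g.support.card < Fintype.card α) :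
    ∃ x ∈ G, g * (x * g * x⁻¹) * g⁻¹ * (x * g * x⁻¹)⁻¹ ≠ 1 ∧
      (Fintype.card α - 2) * ((g.support ∩ (x * g * x⁻¹).support).card - 1) ≤
        (g.support.card - 1) * (g.support.card - 2) := by
  obtain ⟨a, ha⟩ : ∃ x, g x ≠ x := by
    by_contra hcon; push Not at hcon
    exact hg1 (Perm.ext hcon)
  have haS : a ∈ g.support := Perm.mem_support.2 ha
  have hbS : g a ∈ g.support := Perm.apply_mem_support.2 haS
  obtain ⟨c, hc⟩ : ∃ c, c ∉ g.support := by
    by_contra hcon; push Not at hcon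
    have : g.support = univ := Finset.eq_univ_iff_forall.2 hcon
    rw [this, Finset.card_univ] at hn
    omega
  have h2 : 2 ≤ g.support.card := Perm.two_le_card_support_of_ne_one hg1
  obtain ⟨x, hx, h3, h4, h5⟩ := avg_conj ht g.support haS hbS ha.symm hc (by omega)
  have hfix : (x * g * x⁻¹) (g a) = g a := by
    rw [← h4]
    simp [Perm.notMem_support.1 hc]
  have hmov : (x * g * x⁻¹) a ≠ a := by
    intro h
    have e : x⁻¹ a = a := by rw [Perm.inv_eq_iff_eq]; exact h3.symm
    simp only [Perm.mul_apply] at h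
    rw [e] at h
    apply ha
    apply x.injective
    rw [h, h3]
  refine ⟨x, hx, ?_, ?_⟩
  · intro h
    rw [mul_inv_eq_one, mul_inv_eq_iff_eq_mul] at h
    have h6 := congrArg (fun p : Perm α => p a) h
    simp only [Perm.mul_apply g, Perm.mul_apply _ g] at h6
    rw [hfix] at h6
    exact hmov (g.injective h6)
  · refine le_trans (Nat.mul_le_mul_left _ ?_) h5
    have h6 : g.support ∩ (x * g * x⁻¹).support ⊆
        insert a (((g.support.erase a).filter fun t => x t ∈ g.support).image x) := by
      intro y hy
      rw [mem_inter, Perm.mem_support (f := x * g * x⁻¹)] at hy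
      simp only [mem_insert, mem_image, mem_filter, mem_erase]
      by_cases hya : y = a
      · exact Or.inl hya
      right
      refine ⟨x⁻¹ y, ⟨⟨?_, ?_⟩, by simpa using hy.1⟩, by simp⟩
      · intro h
        rw [Perm.inv_eq_iff_eq, h3] at h
        exact hya h
      · rw [Perm.mem_support]
        intro h
        apply hy.2
        rw [Perm.mul_apply, Perm.mul_apply, h]; simp
    have h7 := (Finset.card_le_card h6).trans ((Finset.card_insert_le _ _).trans
      (Nat.add_le_add_right Finset.card_image_le 1))
    omega

theorem arith8 {n k m j : ℕ} (hn : (k + 1) ^ 2 ≤ n) (hm4 : 4 ≤ m) (hm : m ≤ 2 * k) (hj : m ≤ 3 * j)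
    (h : (n - 2) * (j - 1) ≤ (m - 1) * (m - 2)) : m = 6 ∧ k = 3 := by
  have h2 : ∀ i, i + 1 ≤ j → (n - 2) * i ≤ (m - 1) * (m - 2) := fun i hi =>
    (Nat.mul_le_mul_left _ (by omega)).trans h
  have hk : ∀ c, c ≤ k → (c + 1) * (c + 1) ≤ n := by
    intro c hc
    have := Nat.mul_le_mul (Nat.succ_le_succ hc) (Nat.succ_le_succ hc)
    simp only [Nat.succ_eq_add_one] at this
    nlinarith
  by_cases h9 : m ≤ 8
  · have h3 := h2 1
    have h4 := h2 2
    have k2 := hk 2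
    have k3 := hk 3
    have k4 := hk 4
    interval_cases m <;> norm_num at h3 h4 k2 k3 k4 ⊢ <;> omega
  · exfalso
    obtain ⟨p, rfl⟩ : ∃ p, m = p + 9 := ⟨m - 9, by omega⟩
    obtain ⟨i, rfl⟩ : ∃ i, j = i + 1 := ⟨j - 1, by omega⟩
    have h5 : (p + 11) * (p + 11) ≤ 4 * n := by
      have : p + 11 ≤ 2 * (k + 1) := by omega
      have := Nat.mul_le_mul this this
      nlinarith
    have hn2 : 2 ≤ n := by nlinarith
    obtain ⟨q, rfl⟩ : ∃ q, n = q + 2 := ⟨n - 2, by omega⟩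
    simp only [Nat.add_sub_cancel, show p + 9 - 1 = p + 8 by omega, show p + 9 - 2 = p + 7 by omega] at h
    have h6 : p + 6 ≤ 3 * i := by omega
    have h7 : p * p + 22 * p + 113 ≤ 4 * q := by nlinarith
    have h8 := Nat.mul_le_mul h7 h6
    nlinarith

theorem bochert_min {α : Type*} [Fintype α] {G : Subgroup (Perm α)} (ht : TTT G) {m : ℕ}
    (hmin : ∀ h ∈ G, h ≠ 1 → m ≤ h.support.card) {g : Perm α}
    (hg : g ∈ G) (hg1 : g ≠ 1) (hn : g.support.card < Fintype.card α) :
    ∃ x ∈ G, m ≤ ((g.support ∩ (x * g * x⁻¹).support) ∪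
        ((g.support ∩ (x * g * x⁻¹).support).image g ∪
        (g.support ∩ (x * g * x⁻¹).support).image (x * g * x⁻¹))).card ∧
      (Fintype.card α - 2) * ((g.support ∩ (x * g * x⁻¹).support).card - 1) ≤
        (g.support.card - 1) * (g.support.card - 2) := by
  obtain ⟨x, hx, h1, h2⟩ := bochert ht hg1 hn
  have hh : x * g * x⁻¹ ∈ G := G.mul_mem (G.mul_mem hx hg) (G.inv_mem hx)
  refine ⟨x, hx, ?_, h2⟩
  exact (hmin _ (G.mul_mem (G.mul_mem (G.mul_mem hg hh) (G.inv_mem hg)) (G.inv_mem hh)) h1).trans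
    (Finset.card_le_card (comm_supp g _))

theorem invol {α : Type*} [Fintype α] (g : Perm α) (hk : permIndex g ≤ 3) (hs : 6 ≤ g.support.card) :
    ∀ z, g (g z) = z := by
  by_contra hcon
  push Not at hcon
  obtain ⟨a, ha⟩ := hcon
  obtain ⟨e⟩ := Fintype.truncEquivFin α |>.nonempty
  have hab : g a ≠ a := by
    intro h; apply ha; rw [h, h]
  have hbc : g (g a) ≠ g a := fun h => hab (g.injective h)
  set b := g a with hb
  set c := g b with hc
  have gb : g⁻¹ b = a := by rw [hb]; simp
  have gc : g⁻¹ c = b := by rw [hc]; simp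
  set f : α → ℕ := fun z => if z = a then 0 else if z = b then 1 else (e z : ℕ) + 2 with hf
  set f' : α → ℕ := fun z => if z = a then 0 else if z = b then Fintype.card α + 5 else (e z : ℕ) + 2 with hf'
  have finj : ∀ y z, f y = f z → y = z := by
    intro y z h
    simp only [hf] at h
    split_ifs at h with h1 h2 h3 h4 h5 h6 h7 <;> first | (subst_vars; rfl) | omega | skip
    exact e.injective (Fin.ext (by omega))
  have hle : ∀ z, f z ≤ f' z := by
    intro z
    simp only [hf, hf']
    split_ifs <;> omega
  have h1 := (pidx_asc g f).trans hk
  have h2 := (pidx_desc g f').trans hk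
  have h3 : g.support ⊆ (univ.filter fun z => f (g⁻¹ z) < f z) ∪ (univ.filter fun z => f z < f (g⁻¹ z)) := by
    intro z hz
    simp only [mem_union, mem_filter, mem_univ, true_and]
    rw [Perm.mem_support] at hz
    have h4 : f (g⁻¹ z) ≠ f z := by
      intro h
      have := finj _ _ h
      apply hz
      nth_rewrite 1 [← this]; simp
    omega
  have h4 := (Finset.card_le_card h3).trans (Finset.card_union_le _ _)
  have hcn : c ∉ (univ.filter fun z => f z < f (g⁻¹ z)) := by
    simp only [mem_filter, mem_univ, true_and, gc]
    simp [hf, ha, hbc, hab]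
  have h5 : insert c (univ.filter fun z => f z < f (g⁻¹ z)) ⊆ (univ.filter fun z => f' z < f' (g⁻¹ z)) := by
    intro z hz
    rw [mem_insert] at hz
    rcases hz with rfl | hz
    · simp only [mem_filter, mem_univ, true_and, gc]
      have := (e c).isLt
      simp only [hf', if_neg ha, if_neg hbc, if_neg hab, if_true]
      omega
    · simp only [mem_filter, mem_univ, true_and] at hz ⊢
      have hzb : z ≠ b := by
        rintro rfl
        rw [gb] at hz
        simp [hf] at hz
      have e1 : f' z = f z := by
        simp only [hf, hf', if_neg hzb]
      rw [e1]
      exact hz.trans_le (hle _)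
  have h6 := Finset.card_le_card h5
  rw [Finset.card_insert_of_notMem hcn] at h6
  omega

theorem case_six {α : Type*} [Fintype α] {G : Subgroup (Perm α)} (ht : TTT G)
    (hmin : ∀ h ∈ G, h ≠ 1 → 6 ≤ h.support.card) {g : Perm α}
    (hg : g ∈ G) (hg1 : g ≠ 1) (hk : permIndex g ≤ 3) (hn : 16 ≤ Fintype.card α) : False := by
  have hs2 := supp_le_two_idx g
  have hs1 := hmin g hg hg1
  have hs : g.support.card = 6 := by omega
  have hinv := invol g hk hs1
  obtain ⟨x, hx, h1, h2⟩ := bochert_min ht hmin hg hg1 (by omega)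
  have hhG : x * g * x⁻¹ ∈ G := G.mul_mem (G.mul_mem hx hg) (G.inv_mem hx)
  have hhinv : ∀ z, (x * g * x⁻¹) ((x * g * x⁻¹) z) = z := by
    intro z
    simp [Perm.mul_apply, hinv]
  have hhs : (x * g * x⁻¹).support.card = 6 := by rw [Perm.card_support_conj, hs]
  generalize x * g * x⁻¹ = h at *
  set J := g.support ∩ h.support with hJ
  have hJ2 : J.card ≤ 2 := by
    by_contra hcon
    have h3 : (Fintype.card α - 2) * 2 ≤ (Fintype.card α - 2) * (J.card - 1) :=
      Nat.mul_le_mul_left _ (by omega)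
    rw [hs] at h2
    omega
  have c1 : (J.image g).card ≤ J.card := Finset.card_image_le
  have c2 : (J.image h).card ≤ J.card := Finset.card_image_le
  have c3 := Finset.card_union_le J (J.image g ∪ J.image h)
  have c4 := Finset.card_union_le (J.image g) (J.image h)
  have hJc : J.card = 2 := by omega
  have d : Disjoint J (J.image g ∪ J.image h) := by
    rw [← Finset.card_union_eq_card_add_card]
    omega
  have hgJ : ∀ z ∈ J, g z ∉ h.support := by
    intro z hz hgz
    refine absurd (Finset.mem_inter.2 ⟨?_, mem_union_left _ (mem_image_of_mem g hz)⟩) (by rw [Finset.disjoint_iff_inter_eq_empty.1 d]; exact Finset.notMem_empty _)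
    exact mem_inter.2 ⟨Perm.apply_mem_support.2 (mem_inter.1 hz).1, hgz⟩
  have hhJ : ∀ z ∈ J, h z ∉ g.support := by
    intro z hz hgz
    refine absurd (Finset.mem_inter.2 ⟨?_, mem_union_right _ (mem_image_of_mem h hz)⟩) (by rw [Finset.disjoint_iff_inter_eq_empty.1 d]; exact Finset.notMem_empty _)
    exact mem_inter.2 ⟨hgz, Perm.apply_mem_support.2 (mem_inter.1 hz).2⟩
  have e1 : ∀ z ∈ J, g (h z) = h z := fun z hz => Perm.notMem_support.1 (hhJ z hz)
  have e2 : ∀ z ∈ J, h (g z) = g z := fun z hz => Perm.notMem_support.1 (hgJ z hz)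
  set q := g * h * (g * h) * (g * h) with hq
  have hqG : q ∈ G := G.mul_mem (G.mul_mem (G.mul_mem hg hhG) (G.mul_mem hg hhG)) (G.mul_mem hg hhG)
  have hqz : ∀ z, q z = g (h (g (h (g (h z))))) := fun z => rfl
  have hfix : q.support ⊆ (g.support ∪ h.support) \ (J ∪ (J.image g ∪ J.image h)) := by
    intro z hz
    rw [Perm.mem_support] at hz
    rw [mem_sdiff]
    constructor
    · by_contra hcon
      rw [mem_union, not_or] at hcon
      apply hz
      have a1 := Perm.notMem_support.1 hcon.1
      have a2 := Perm.notMem_support.1 hcon.2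
      rw [hqz, a2, a1, a2, a1, a2, a1]
    · intro hcon
      apply hz
      rw [hqz]
      rw [mem_union, mem_union, mem_image, mem_image] at hcon
      rcases hcon with hz | ⟨y, hy, rfl⟩ | ⟨y, hy, rfl⟩
      · rw [e1 z hz, hhinv, e2 z hz, hinv]
      · rw [e2 y hy, hinv, e1 y hy, hhinv]
      · rw [hhinv, e2 y hy, hinv, e1 y hy]
  have hsub : J ∪ (J.image g ∪ J.image h) ⊆ g.support ∪ h.support := by
    intro z
    simp only [mem_union, mem_image]
    rintro (hz | ⟨y, hy, rfl⟩ | ⟨y, hy, rfl⟩)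
    · exact Or.inl (mem_inter.1 hz).1
    · exact Or.inl (Perm.apply_mem_support.2 (mem_inter.1 hy).1)
    · exact Or.inr (Perm.apply_mem_support.2 (mem_inter.1 hy).2)
  have hqc := Finset.card_le_card hfix
  have c5 := Finset.card_sdiff_add_card_eq_card hsub
  have c6 := Finset.card_union_add_card_inter g.support h.support
  rw [← hJ] at c6
  have hq1 : q = 1 := by
    by_contra hq1
    have := hmin q hqG hq1
    omega
  obtain ⟨s, hsS, hsn⟩ : ∃ s ∈ g.support, s ∉ J ∪ J.image g := by
    by_contra hcon
    push Not at hcon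
    have h3 := Finset.card_le_card (show g.support ⊆ J ∪ J.image g from hcon)
    have h4 := Finset.card_union_le J (J.image g)
    omega
  rw [mem_union, not_or] at hsn
  have f1 : h s = s := by
    apply Perm.notMem_support.1
    exact fun hh => hsn.1 (mem_inter.2 ⟨hsS, hh⟩)
  have f2 : h (g s) = g s := by
    apply Perm.notMem_support.1
    intro hh
    apply hsn.2
    rw [mem_image]
    exact ⟨g s, mem_inter.2 ⟨Perm.apply_mem_support.2 hsS, hh⟩, hinv s⟩
  have f3 : q s = g s := by
    rw [hqz, f1, f2, hinv, f1]
  rw [hq1] at f3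
  exact Perm.mem_support.1 hsS f3.symm

theorem main_contra {α : Type*} [Fintype α] [Nonempty α] {G : Subgroup (Perm α)} {k : ℕ}
    (ht : PTrans G) (hp : PPrim G) (h4 : ∀ h ∈ G, h ≠ 1 → 4 ≤ h.support.card) {g : Perm α}
    (hg : g ∈ G) (hg1 : g ≠ 1) (hgk : permIndex g ≤ k) (hn : (k + 1) ^ 2 ≤ Fintype.card α) : False := by
  have hs := supp_le_two_idx g
  have hs4 := h4 g hg hg1
  have hk : 2 ≤ k := by omega
  have hn2 : 2 * k + 1 ≤ Fintype.card α := by nlinarith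
  obtain ⟨w, hw1, hw2, hw3⟩ := gap_ineq ht hp hg hg1 hgk hk hn
  have hgap : PGap G k := fun R hR x => arith_gap hk hn hw1 hw2 (hw3 R hR x)
  have h2 : TT G := two_trans ht hp hk hn hgap
  have h3 : TTT G := fun x y z x' y' z' a1 a2 a3 b1 b2 b3 =>
    three_trans h2 hg hg1 hgk hk hn a1 a2 a3 b1 b2 b3
  have hex : ∃ m, ∃ h ∈ G, h ≠ 1 ∧ h.support.card = m := ⟨_, g, hg, hg1, rfl⟩
  obtain ⟨h, hh, hh1, hm⟩ := Nat.find_spec hex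
  have hmin : ∀ u ∈ G, u ≠ 1 → Nat.find hex ≤ u.support.card := fun u hu hu1 =>
    Nat.find_min' hex ⟨u, hu, hu1, rfl⟩
  have hmg := hmin g hg hg1
  have hm4 := h4 h hh hh1
  obtain ⟨x, hx, b1, b2⟩ := bochert_min h3 hmin hh hh1 (by omega)
  rw [hm] at b2 hm4
  have c1 : ((h.support ∩ (x * h * x⁻¹).support).image h).card ≤ _ := Finset.card_image_le
  have c2 : ((h.support ∩ (x * h * x⁻¹).support).image (x * h * x⁻¹)).card ≤ _ := Finset.card_image_le
  have c3 := Finset.card_union_le (h.support ∩ (x * h * x⁻¹).support)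
    ((h.support ∩ (x * h * x⁻¹).support).image h ∪ (h.support ∩ (x * h * x⁻¹).support).image (x * h * x⁻¹))
  have c4 := Finset.card_union_le ((h.support ∩ (x * h * x⁻¹).support).image h)
    ((h.support ∩ (x * h * x⁻¹).support).image (x * h * x⁻¹))
  obtain ⟨m6, rfl⟩ := arith8 (j := (h.support ∩ (x * h * x⁻¹).support).card) hn hm4 (by omega) (by omega) b2
  rw [m6] at hmin
  exact case_six h3 hmin hg hg1 hgk (by omega)

theorem PTrans_of {α : Type*} {G : Subgroup (Perm α)} (h : IsPrimitivePermGroup G) : PTrans G := by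
  intro x y
  obtain ⟨g, hg⟩ := h.1.exists_smul_eq x y
  exact ⟨g, g.2, hg⟩

open scoped Pointwise in
theorem PPrim_of {α : Type*} {G : Subgroup (Perm α)} (h : IsPrimitivePermGroup G) : PPrim G := by
  intro r hr hinv
  have hb : ∀ x, MulAction.IsTrivialBlock {y | r x y} := by
    intro x
    apply h.2
    intro g₁ g₂ hne
    rw [Set.disjoint_left]
    intro z hz1 hz2
    apply hne
    have key : ∀ g : G, ∀ z, z ∈ g • {y | r x y} ↔ r ((g : Perm α) x) z := by
      intro g z
      rw [Set.mem_smul_set_iff_inv_smul_mem]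
      change r x ((g : Perm α)⁻¹ z) ↔ _
      rw [← PInv.iff hinv g.2]
      simp
    rw [key] at hz1 hz2
    ext u
    rw [key, key]
    have h1 := hr.trans hz2 (hr.symm hz1)
    exact ⟨fun hu => hr.trans h1 hu, fun hu => hr.trans (hr.symm h1) hu⟩
  by_cases hall : ∃ x, {y | r x y} = Set.univ
  · right
    obtain ⟨x, hx⟩ := hall
    have hx' : ∀ y, r x y := fun y => by
      have : y ∈ {y | r x y} := by rw [hx]; trivial
      exact this
    exact fun y z => hr.trans (hr.symm (hx' y)) (hx' z)
  · left
    intro x y hxy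
    rcases hb x with h | h
    · exact h (hr.refl x) hxy
    · exact absurd ⟨x, h⟩ hall

theorem eq_alt_or_top {n : ℕ} {G : Subgroup (Perm (Fin n))} (h : alternatingGroup (Fin n) ≤ G) :
    G = alternatingGroup (Fin n) ∨ G = ⊤ := by
  by_cases hle : G ≤ alternatingGroup (Fin n)
  · exact Or.inl (le_antisymm hle h)
  right
  rw [SetLike.not_le_iff_exists] at hle
  obtain ⟨s, hs, hs'⟩ := hle
  rw [Perm.mem_alternatingGroup] at hs'
  have hs1 := (Int.units_eq_one_or (Perm.sign s)).resolve_left hs'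
  rw [Subgroup.eq_top_iff']
  intro t
  rcases Int.units_eq_one_or (Perm.sign t) with h1 | h1
  · exact h (Perm.mem_alternatingGroup.2 h1)
  · have h2 : t * s ∈ G := h (Perm.mem_alternatingGroup.2 (by rw [map_mul, h1, hs1]; rfl))
    simpa using G.mul_mem h2 (G.inv_mem hs)

theorem supp_four {n : ℕ} {G : Subgroup (Perm (Fin n))} (hprim : IsPrimitivePermGroup G)
    (hAn : G ≠ alternatingGroup (Fin n)) (hSn : G ≠ ⊤) (h : Perm (Fin n)) (hh : h ∈ G) (h1 : h ≠ 1) :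
    4 ≤ h.support.card := by
  by_contra hcon
  have hpp : MulAction.IsPreprimitive G (Fin n) :=
    { hprim.1 with isTrivialBlock_of_isBlock := fun {B} hB => hprim.2 B hB }
  have h2 : 2 ≤ h.support.card := Perm.two_le_card_support_of_ne_one h1
  have h3 : h.support.card = 2 ∨ h.support.card = 3 := by omega
  rcases h3 with h3 | h3
  · exact hSn (Perm.subgroup_eq_top_of_isPreprimitive_of_isSwap_mem hpp h (Perm.card_support_eq_two.1 h3) hh)
  · have := Perm.alternatingGroup_le_of_isPreprimitive_of_isThreeCycle_mem hpp
      (card_support_eq_three_iff.1 h3) hh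
    rcases eq_alt_or_top this with h4 | h4
    · exact hAn h4
    · exact hSn h4

theorem final_aux (n : ℕ) (G : Subgroup (Equiv.Perm (Fin n)))
    (hprim : IsPrimitivePermGroup G) (hAn : G ≠ alternatingGroup (Fin n))
    (hSn : G ≠ ⊤) : Nat.sqrt n ≤ groupIndex G := by
  by_contra hcon
  push Not at hcon
  have hne : {k | ∃ g ∈ G, g ≠ 1 ∧ permIndex g = k}.Nonempty := by
    by_contra hemp
    have h1 : ∀ g ∈ G, g = 1 := by
      intro g hg
      by_contra hg1
      exact hemp ⟨_, g, hg, hg1, rfl⟩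
    apply hSn
    rw [Subgroup.eq_top_iff']
    intro t
    have : t = 1 := by
      ext z
      obtain ⟨g, hg, hgz⟩ := PTrans_of hprim z (t z)
      rw [h1 g hg] at hgz
      rw [← hgz]
    rw [this]; exact G.one_mem
  obtain ⟨g, hg, hg1, hgk⟩ := Nat.sInf_mem hne
  change permIndex g = groupIndex G at hgk
  have hn : (groupIndex G + 1) ^ 2 ≤ n := by
    rw [pow_two]
    exact Nat.le_sqrt.1 hcon
  have : Nonempty (Fin n) := ⟨⟨0, by nlinarith⟩⟩
  refine main_contra (PTrans_of hprim) (PPrim_of hprim) ?_ hg hg1 hgk.le (by simpa using hn)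
  intro h hh h1
  convert supp_four hprim hAn hSn h hh h1

end Aux

/-- Theorem 2.4 of Bhargava's paper. If `G ≤ S_n` is a primitive permutation group not
equal to `A_n` or `S_n`, then `ind(G) ≥ ⌊√n⌋`. -/
theorem index_ge_sqrt_of_primitive (n : ℕ) (G : Subgroup (Equiv.Perm (Fin n)))
    (hprim : IsPrimitivePermGroup G) (hAn : G ≠ alternatingGroup (Fin n))
    (hSn : G ≠ ⊤) : Nat.sqrt n ≤ groupIndex G := by
  exact final_aux n G hprim hAn hSn
end

section
/- Let r, m, k be positive integers with k < m/2 and with r > 1 or k > 1, and let n = C(m,k)^r where C(m,k) is the binomial coefficient. Consider the wreath product W = S_m ≀ S_r. Let W act on Ω = Δ^r, where Δ is the set of k-element subsets of {1,...,m} (the i-th copy of S_m acting on the i-th coordinate through its action on k-subsets, and S_r permuting the coordinates), and let W also act imprimitively on the disjoint union of r copies of {1,...,m} (rm letters) in the natural way. Then for every non-identity element g ∈ W, writing ind(g) for the index of g acting on Ω and ind'(g) for the index of g acting on the rm letters, one has ind(g)/ind'(g) > n/(3rm). -/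
open scoped Classical
open Polynomial

/-- The permutation of the `k`-element subsets of `{1,...,m}` induced by a permutation
`s` of `{1,...,m}`. -/
def subsetPerm (m k : ℕ) (s : Equiv.Perm (Fin m)) :
    Equiv.Perm {S : Finset (Fin m) // S.card = k} :=
  Equiv.Perm.subtypePerm (s.finsetCongr)
    (fun S => by simp [Equiv.finsetCongr_apply, Finset.card_map])

/-- The element of the wreath product `S_m ≀ S_r` given by `(σ_1, ..., σ_r; τ)`, acting
on `Ω = Δ^r`, where `Δ` is the set of `k`-element subsets of `{1,...,m}`: the `i`-th
copy of `S_m` acts on the `i`-th coordinate through its action on `k`-subsets, and `S_r`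
permutes the coordinates. -/
def wreathOnSets (r m k : ℕ) (σ : Fin r → Equiv.Perm (Fin m)) (τ : Equiv.Perm (Fin r)) :
    Equiv.Perm (Fin r → {S : Finset (Fin m) // S.card = k}) :=
  Equiv.piCongr τ (fun i => subsetPerm m k (σ i))

/-- The element of the wreath product `S_m ≀ S_r` given by `(σ_1, ..., σ_r; τ)`, acting
imprimitively on the disjoint union of `r` copies of `{1,...,m}` (that is, `rm`
letters) in the natural way. -/
def wreathOnLetters (r m : ℕ) (σ : Fin r → Equiv.Perm (Fin m)) (τ : Equiv.Perm (Fin r)) :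
    Equiv.Perm (Fin r × Fin m) :=
  Equiv.prodShear τ σ


theorem aux_two_orbits {Ω : Type*} [Fintype Ω] (g : Equiv.Perm Ω) [Fintype {x // g x = x}] :
    2 * Nat.card (MulAction.orbitRel.Quotient (Subgroup.zpowers g) Ω) ≤
      Fintype.card Ω + Fintype.card {x // g x = x} := by
  set Q := MulAction.orbitRel.Quotient (Subgroup.zpowers g) Ω with hQ
  have : Fintype Q := Fintype.ofFinite _
  have hout : ∀ q : Q, (Quotient.mk _ (Quotient.out q) : Q) = q := fun q => Quotient.out_eq q
  have hgx : ∀ x : Ω, (Quotient.mk _ (g x) : Q) = Quotient.mk _ x := by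
    intro x
    apply Quotient.sound
    exact MulAction.orbitRel_apply.2 ⟨⟨g, Subgroup.mem_zpowers g⟩, rfl⟩
  let F : Q ⊕ Q → Ω ⊕ {x // g x = x} := fun z => match z with
    | Sum.inl q => Sum.inl (Quotient.out q)
    | Sum.inr q => if h : g (Quotient.out q) = Quotient.out q then Sum.inr ⟨Quotient.out q, h⟩
        else Sum.inl (g (Quotient.out q))
  have hF : Function.Injective F := by
    have hinj : ∀ q q' : Q, Quotient.out q = Quotient.out q' → q = q' := by
      intro q q' h
      rw [← hout q, ← hout q', h]
    have hne : ∀ q q' : Q, g (Quotient.out q) = Quotient.out q' → q = q' := by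
      intro q q' h
      rw [← hout q, ← hgx, h, hout]
    rintro (q | q) (q' | q') h
    · simp only [F, Sum.inl.injEq] at h
      rw [hinj _ _ h]
    · simp only [F] at h
      split_ifs at h with h1
      simp only [Sum.inl.injEq] at h
      have := hne _ _ h.symm
      subst this
      exact absurd h.symm h1
    · simp only [F] at h
      split_ifs at h with h1
      simp only [Sum.inl.injEq] at h
      have := hne _ _ h
      subst this
      exact absurd h h1
    · simp only [F] at h
      split_ifs at h with h1 h2 h2
      · simp only [Sum.inr.injEq, Subtype.mk.injEq] at h
        rw [hinj _ _ h]
      · simp only [Sum.inl.injEq, EmbeddingLike.apply_eq_iff_eq] at h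
        rw [hinj _ _ h]
  have := Fintype.card_le_of_injective F hF
  simp only [Fintype.card_sum] at this
  rw [Nat.card_eq_fintype_card]
  omega

theorem aux_fix_lt_orbits {Ω : Type*} [Fintype Ω] (g : Equiv.Perm Ω) [Fintype {x // g x = x}] (x : Ω) (hx : g x ≠ x) :
    Fintype.card {x // g x = x} + 1 ≤
      Nat.card (MulAction.orbitRel.Quotient (Subgroup.zpowers g) Ω) := by
  set Q := MulAction.orbitRel.Quotient (Subgroup.zpowers g) Ω with hQ
  have : Fintype Q := Fintype.ofFinite _
  rw [Nat.card_eq_fintype_card]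
  let F : Option {x // g x = x} → Q := fun z => match z with
    | none => Quotient.mk _ x
    | some y => Quotient.mk _ y.1
  have key : ∀ y z : Ω, g y = y → (Quotient.mk _ z : Q) = Quotient.mk _ y → z = y := by
    intro y z hy h
    obtain ⟨⟨w, hw⟩, h2⟩ := MulAction.orbitRel_apply.1 (Quotient.exact h)
    obtain ⟨n, rfl⟩ := Subgroup.mem_zpowers_iff.1 hw
    rw [← h2]
    exact Equiv.Perm.zpow_apply_eq_self_of_apply_eq_self hy n
  have hF : Function.Injective F := by
    rintro (_ | y) (_ | z) h
    · rfl
    · exact absurd (key _ _ z.2 h ▸ z.2) hx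
    · exact absurd (key _ _ y.2 h.symm ▸ y.2) hx
    · exact congrArg some (Subtype.ext (key _ _ z.2 h))
  have := Fintype.card_le_of_injective F hF
  rwa [Fintype.card_option] at this

theorem aux_U {m : ℕ} (s : Equiv.Perm (Fin m)) (k : ℕ) (U : Finset (Fin m)) (hU : U.card = k + 1) :
    (k + 1) * (U.filter (fun x => (U.erase x).map s.toEmbedding = U.erase x)).card ≤
      (k + 1) + k * (U.filter (fun x => s x = x)).card := by
  set A := U.filter (fun x => (U.erase x).map s.toEmbedding = U.erase x) with hA
  set J := U.filter (fun x => s x = x) with hJ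
  have h1 : J.card ≤ k + 1 := hU ▸ Finset.card_filter_le _ _
  have hmem : ∀ T : Finset (Fin m), T.map s.toEmbedding = T → ∀ y, s y ∈ T ↔ y ∈ T := by
    intro T hT y
    conv_lhs => rw [← hT]
    simp
  have h2 : A.card ≤ 1 ∨ A ⊆ J := by
    by_cases h : A.card ≤ 1
    · exact Or.inl h
    right
    intro x hx
    push Not at h
    obtain ⟨y, hy, hyx⟩ := Finset.exists_mem_ne h x
    rw [hA, Finset.mem_filter] at hx hy
    have e1 := hmem _ hx.2
    have e2 := hmem _ hy.2
    rw [hJ, Finset.mem_filter]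
    refine ⟨hx.1, ?_⟩
    have a1 := (e2 x).2 (Finset.mem_erase.2 ⟨hyx.symm, hx.1⟩)
    by_contra hne
    have a2 := (e1 x).1 (Finset.mem_erase.2 ⟨hne, (Finset.mem_erase.1 a1).2⟩)
    simp at a2
  rcases h2 with h2 | h2
  · nlinarith
  · have h3 := Finset.card_le_card h2
    nlinarith

theorem aux_sets (m k : ℕ) (hk : k < m) (s : Equiv.Perm (Fin m)) :
    (k + 1) * m * ((Finset.univ.powersetCard k).filter
      (fun S : Finset (Fin m) => S.map s.toEmbedding = S)).card ≤
      m.choose k * (m + k * (Finset.univ.filter (fun x => s x = x)).card) := by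
  set P := (Finset.univ : Finset (Fin m)).powersetCard (k+1) with hP
  set FS := (Finset.univ.powersetCard k).filter
      (fun S : Finset (Fin m) => S.map s.toEmbedding = S) with hFS
  set X := (Finset.univ.filter (fun x => s x = x)) with hX
  have hsum := Finset.sum_le_sum (s := P) (fun U hU => aux_U s k U (Finset.mem_powersetCard.1 hU).2)
  rw [← Finset.mul_sum, Finset.sum_add_distrib, ← Finset.mul_sum] at hsum
  have hA : ∑ U ∈ P, (U.filter (fun x => (U.erase x).map s.toEmbedding = U.erase x)).card
      = FS.card * (m - k) := by
    have : FS.card * (m - k) = ∑ S ∈ FS, (Sᶜ).card := by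
      rw [Finset.sum_const_nat]
      intro S hS
      rw [hFS, Finset.mem_filter, Finset.mem_powersetCard] at hS
      rw [Finset.card_compl, hS.1.2, Fintype.card_fin]
    rw [this, ← Finset.card_sigma, ← Finset.card_sigma]
    refine Finset.card_bij' (fun p _ => ⟨p.1.erase p.2, p.2⟩) (fun p _ => ⟨insert p.2 p.1, p.2⟩)
      ?_ ?_ ?_ ?_
    · rintro ⟨U, x⟩ h
      simp [hP, hFS, Finset.mem_powersetCard] at h ⊢
      obtain ⟨h1, h2, h3⟩ := h
      exact ⟨by rw [Finset.card_erase_of_mem h2, h1]; rfl, h3⟩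
    · rintro ⟨S, x⟩ h
      simp only [hP, hFS, Finset.mem_powersetCard, Finset.mem_sigma, Finset.mem_filter,
        Finset.mem_compl, Finset.subset_univ, true_and, Finset.mem_insert_self] at h ⊢
      obtain ⟨⟨h1, h2⟩, h3⟩ := h
      exact ⟨by rw [Finset.card_insert_of_notMem h3, h1], by rw [Finset.erase_insert h3, h2]⟩
    · rintro ⟨U, x⟩ h
      simp at h ⊢
      exact Finset.insert_erase h.2.1
    · rintro ⟨S, x⟩ h
      simp at h ⊢
      exact h.2
  have hJ : ∑ U ∈ P, (U.filter (fun x => s x = x)).card ≤ X.card * (m-1).choose k := by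
    have : X.card * (m-1).choose k = ∑ x ∈ X, ((Finset.univ.erase x).powersetCard k).card := by
      rw [Finset.sum_const_nat]
      intro x hx
      rw [Finset.card_powersetCard, Finset.card_erase_of_mem (Finset.mem_univ _), Finset.card_univ,
        Fintype.card_fin]
    rw [this, ← Finset.card_sigma, ← Finset.card_sigma]
    refine Finset.card_le_card_of_injOn (fun p => ⟨p.2, p.1.erase p.2⟩) ?_ ?_
    · rintro ⟨U, x⟩ h
      simp [hP, hX, Finset.mem_powersetCard] at h ⊢
      obtain ⟨h1, h2, h3⟩ := h
      refine ⟨h3, ?_, by rw [Finset.card_erase_of_mem h2, h1]; rfl⟩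
      exact Finset.erase_subset_erase _ (Finset.subset_univ _)
    · rintro ⟨U, x⟩ h ⟨V, y⟩ h' he
      simp at h h' he ⊢
      obtain ⟨rfl, he⟩ := he
      refine ⟨?_, rfl⟩
      rw [← Finset.insert_erase h.2.1, ← Finset.insert_erase h'.2.1, he]
  rw [hA] at hsum
  have hPc : ∑ U ∈ P, (k + 1) = m.choose k * (m - k) := by
    rw [Finset.sum_const, smul_eq_mul, hP, Finset.card_powersetCard, Finset.card_univ,
      Fintype.card_fin, Nat.choose_succ_right_eq]
  rw [hPc] at hsum
  have hc : m * (m-1).choose k = m.choose k * (m - k) := by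
    obtain ⟨m, rfl⟩ : ∃ m', m = m' + 1 := ⟨m - 1, by omega⟩
    simp only [Nat.add_sub_cancel]
    rw [Nat.add_one_mul_choose_eq, Nat.choose_succ_right_eq]
  have hmk : 0 < m - k := by omega
  refine Nat.le_of_mul_le_mul_right ?_ hmk
  calc (k + 1) * m * FS.card * (m - k) = m * ((k+1) * (FS.card * (m - k))) := by ring
    _ ≤ m * (m.choose k * (m - k) + k * (X.card * (m-1).choose k)) :=
        Nat.mul_le_mul_left _ (hsum.trans (by gcongr))
    _ = m * m.choose k * (m - k) + k * X.card * (m * (m-1).choose k) := by ring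
    _ = _ := by rw [hc]; ring

theorem aux_subset (m k : ℕ) (hk1 : 1 ≤ k) (hk : k < m) (s : Equiv.Perm (Fin m)) :
    3 * m * Fintype.card {S // subsetPerm m k s S = S} ≤
      m.choose k * (m + 2 * Fintype.card {x // s x = x}) := by
  have hX : Fintype.card {x // s x = x} ≤ m := by
    simpa using Fintype.card_subtype_le (fun x => s x = x)
  have hco : ∀ S : {S : Finset (Fin m) // S.card = k}, 
      subsetPerm m k s S = S ↔ S.1.map s.toEmbedding = S.1 := by
    intro S
    rw [Subtype.ext_iff]
    rfl
  rcases Nat.lt_or_ge 1 k with h2 | h2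
  · have h := aux_sets m k hk s
    have e : Fintype.card {S // subsetPerm m k s S = S} = ((Finset.univ.powersetCard k).filter
      (fun S : Finset (Fin m) => S.map s.toEmbedding = S)).card := by
      rw [Fintype.card_subtype]
      refine Finset.card_bij (fun S _ => S.1) ?_ ?_ ?_
      · intro S hS
        simp [hco] at hS
        simp [hS, S.2]
      · intro S _ T _ h
        exact Subtype.ext h
      · intro S hS
        simp at hS
        exact ⟨⟨S, hS.1⟩, by simp [hco, hS.2], rfl⟩
    rw [e, Fintype.card_subtype]
    rw [Fintype.card_subtype] at hX
    set F := ((Finset.univ.powersetCard k).filter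
      (fun S : Finset (Fin m) => S.map s.toEmbedding = S)).card
    set x := (Finset.univ.filter (fun x => s x = x)).card
    refine Nat.le_of_mul_le_mul_left ?_ (Nat.succ_pos k)
    calc (k+1) * (3 * m * F) = 3 * ((k+1) * m * F) := by ring
      _ ≤ 3 * (m.choose k * (m + k * x)) := by gcongr
      _ = m.choose k * (3 * (m + k * x)) := by ring
      _ ≤ m.choose k * ((k+1) * (m + 2 * x)) := by
        apply Nat.mul_le_mul_left
        obtain ⟨j, rfl⟩ : ∃ j, k = j + 2 := ⟨k - 2, by omega⟩
        nlinarith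
      _ = (k + 1) * (m.choose k * (m + 2 * x)) := by ring
  · obtain rfl : k = 1 := by omega
    have e : Fintype.card {S // subsetPerm m 1 s S = S} ≤ Fintype.card {x // s x = x} := by
      rw [Fintype.card_subtype, Fintype.card_subtype]
      refine Finset.card_le_card_of_surjOn (fun x => ⟨{x}, by simp⟩) ?_
      rintro ⟨S, hS⟩ h
      obtain ⟨x, rfl⟩ := Finset.card_eq_one.1 hS
      simp [hco] at h
      exact ⟨x, by simp [h], rfl⟩
    rw [Nat.choose_one_right]
    nlinarith

theorem aux_main (r m k : ℕ) (hr : 1 ≤ r) (hk : 1 ≤ k) (hkm : 2 * k < m)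
    (σ : Fin r → Equiv.Perm (Fin m)) (τ : Equiv.Perm (Fin r)) :
    3 * (r * m) * Fintype.card {ω // wreathOnSets r m k σ τ ω = ω} ≤
      m.choose k ^ r * (r * m + 2 * Fintype.card {p // wreathOnLetters r m σ τ p = p}) := by
  have hw : ∀ ω i, wreathOnSets r m k σ τ ω (τ i) = subsetPerm m k (σ i) (ω i) := by
    intro ω i
    simp [wreathOnSets]
  set D := {S : Finset (Fin m) // S.card = k} with hD
  have hDc : Fintype.card D = m.choose k := by
    simp [hD]
  -- fixed points inject
  by_cases hτ : τ = 1
  · subst hτ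
    have hj : ∀ i, Fintype.card {ω // wreathOnSets r m k σ 1 ω = ω} ≤
        Fintype.card {S // subsetPerm m k (σ i) S = S} * m.choose k ^ (r - 1) := by
      intro i
      have : m.choose k ^ (r - 1) = Fintype.card ({j : Fin r // j ≠ i} → D) := by
        rw [Fintype.card_fun, hDc]; simp
      rw [this, ← Fintype.card_prod]
      refine Fintype.card_le_of_injective
        (fun ω => (⟨ω.1 i, by have := hw ω.1 i; rw [ω.2] at this; exact this.symm⟩,
          fun j => ω.1 j.1)) ?_
      intro ω ω' h
      simp at h
      apply Subtype.ext
      funext j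
      by_cases hj : j = i
      · subst hj; exact congrArg Subtype.val h.1
      · exact congrFun h.2 ⟨j, hj⟩
    have hl : Fintype.card {p // wreathOnLetters r m σ 1 p = p} =
        ∑ i, Fintype.card {x // σ i x = x} := by
      rw [← Fintype.card_sigma]
      refine Fintype.card_congr ⟨fun p => ⟨p.1.1, p.1.2, by
          have := p.2; simpa [wreathOnLetters, Prod.ext_iff] using this⟩,
        fun q => ⟨(q.1, q.2.1), by simp [wreathOnLetters, q.2.2]⟩, fun _ => rfl, fun _ => rfl⟩
    rw [hl]
    have hs : ∑ i : Fin r, 3 * m * Fintype.card {ω // wreathOnSets r m k σ 1 ω = ω} ≤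
        ∑ i : Fin r, m.choose k ^ r * (m + 2 * Fintype.card {x // σ i x = x}) := by
      refine Finset.sum_le_sum fun i _ => ?_
      calc _ ≤ 3 * m * (Fintype.card {S // subsetPerm m k (σ i) S = S} * m.choose k ^ (r - 1)) := by
            gcongr; exact hj i
        _ = (3 * m * Fintype.card {S // subsetPerm m k (σ i) S = S}) * m.choose k ^ (r - 1) := by ring
        _ ≤ (m.choose k * (m + 2 * Fintype.card {x // σ i x = x})) * m.choose k ^ (r - 1) := by
            apply Nat.mul_le_mul_right; exact aux_subset m k hk (by omega) (σ i)
        _ = m.choose k ^ (r - 1 + 1) * (m + 2 * Fintype.card {x // σ i x = x}) := by ring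
        _ = _ := by rw [Nat.sub_add_cancel hr]
    rw [← Finset.mul_sum (Finset.univ) (fun i => m + 2 * Fintype.card {x // σ i x = x}),
      Finset.sum_add_distrib, ← Finset.mul_sum (Finset.univ) (fun i => Fintype.card {x // σ i x = x})] at hs
    simp only [Finset.sum_const, Finset.card_univ, Fintype.card_fin, smul_eq_mul] at hs
    calc _ = r * (3 * m * Fintype.card {ω // wreathOnSets r m k σ 1 ω = ω}) := by ring
      _ ≤ _ := hs
  · obtain ⟨i, hi⟩ : ∃ i, τ i ≠ i := by
      by_contra h
      push Not at h
      exact hτ (Equiv.ext h)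
    have hj : Fintype.card {ω // wreathOnSets r m k σ τ ω = ω} ≤ m.choose k ^ (r - 1) := by
      have : m.choose k ^ (r - 1) = Fintype.card ({j : Fin r // j ≠ τ i} → D) := by
        rw [Fintype.card_fun, hDc]; simp
      rw [this]
      refine Fintype.card_le_of_injective (fun ω => fun j => ω.1 j.1) ?_
      intro ω ω' h
      have h' : ∀ j, j ≠ τ i → ω.1 j = ω'.1 j := fun j hj => congrFun h ⟨j, hj⟩
      apply Subtype.ext
      funext j
      by_cases hj : j = τ i
      · subst hj
        have e1 := hw ω.1 i
        have e2 := hw ω'.1 i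
        rw [ω.2] at e1
        rw [ω'.2] at e2
        rw [e1, e2, h' i hi.symm]
      · exact h' j hj
    have h3 : 3 ≤ m.choose k := by
      have : m ≤ m.choose k := by
        have : ∀ j, j + 1 ≤ k → m ≤ m.choose (j + 1) := by
          intro j
          induction j with
          | zero => simp
          | succ j ih =>
            intro hj
            exact (ih (by omega)).trans (Nat.choose_le_succ_of_lt_half_left (by omega))
        have := this (k - 1) (by omega)
        rwa [Nat.sub_add_cancel hk] at this
      omega
    calc _ ≤ 3 * (r * m) * m.choose k ^ (r - 1) := by gcongr
      _ ≤ m.choose k * (r * m) * m.choose k ^ (r - 1) := by gcongr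
      _ = m.choose k ^ (r - 1 + 1) * (r * m) := by ring
      _ = m.choose k ^ r * (r * m) := by rw [Nat.sub_add_cancel hr]
      _ ≤ _ := by gcongr; omega

/-- Theorem 2.6 of Bhargava's paper. Let `r, m, k` be positive integers with `k < m/2`
and `r > 1` or `k > 1`, and let `n = C(m,k)^r`. For every non-identity element
`g = (σ_1,...,σ_r; τ)` of the wreath product `S_m ≀ S_r`, writing `ind(g)` for its
index acting on `Ω = Δ^r` (`Δ` the `k`-subsets of `{1,...,m}`) and `ind'(g)` for its
index acting imprimitively on `rm` letters, one has `ind(g)/ind'(g) > n/(3rm)`. -/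
theorem wreath_index_ratio (r m k : ℕ) (hr : 1 ≤ r) (hk : 1 ≤ k) (hkm : 2 * k < m)
    (hrk : 1 < r ∨ 1 < k)
    (σ : Fin r → Equiv.Perm (Fin m)) (τ : Equiv.Perm (Fin r))
    (hg : ¬(τ = 1 ∧ ∀ i, σ i = 1)) :
    ((Nat.choose m k : ℝ) ^ r) / (3 * (r : ℝ) * (m : ℝ)) <
      (permIndex (wreathOnSets r m k σ τ) : ℝ) /
        (permIndex (wreathOnLetters r m σ τ) : ℝ) := by
  have hmain := aux_main r m k hr hk hkm σ τ
  obtain ⟨p, hp⟩ : ∃ p, wreathOnLetters r m σ τ p ≠ p := by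
    by_contra h
    push Not at h
    apply hg
    have h' : ∀ i x, τ i = i ∧ σ i x = x := by
      intro i x
      have := h (i, x)
      simpa [wreathOnLetters, Prod.ext_iff] using this
    have hm : 0 < m := by omega
    exact ⟨Equiv.ext fun i => (h' i ⟨0, hm⟩).1, fun i => Equiv.ext fun x => (h' i x).2⟩
  have a1 := aux_two_orbits (wreathOnSets r m k σ τ)
  have a2 := aux_two_orbits (wreathOnLetters r m σ τ)
  have a3 := aux_fix_lt_orbits _ p hp
  have c1 : Fintype.card (Fin r → {S : Finset (Fin m) // S.card = k}) = m.choose k ^ r := by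
    simp
  have c2 : Fintype.card (Fin r × Fin m) = r * m := by simp
  have hf : Fintype.card {p // wreathOnLetters r m σ τ p = p} < r * m := by
    rw [← c2]
    exact Fintype.card_subtype_lt hp
  have hn : 0 < m.choose k ^ r := pow_pos (Nat.choose_pos (by omega)) r
  have hI : permIndex (wreathOnSets r m k σ τ) = m.choose k ^ r -
    Nat.card (MulAction.orbitRel.Quotient (Subgroup.zpowers (wreathOnSets r m k σ τ))
      (Fin r → {S : Finset (Fin m) // S.card = k})) := by rw [permIndex, c1]
  have hI' : permIndex (wreathOnLetters r m σ τ) = r * m -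
    Nat.card (MulAction.orbitRel.Quotient (Subgroup.zpowers (wreathOnLetters r m σ τ))
      (Fin r × Fin m)) := by rw [permIndex, c2]
  rw [c1] at a1
  rw [c2] at a2
  set n := m.choose k ^ r with hn'
  set f := Fintype.card {ω // wreathOnSets r m k σ τ ω = ω}
  set f' := Fintype.card {p // wreathOnLetters r m σ τ p = p}
  have b1 : n ≤ 2 * permIndex (wreathOnSets r m k σ τ) + f := by omega
  have b2 : permIndex (wreathOnLetters r m σ τ) + f' < r * m := by omega
  have b3 : 0 < permIndex (wreathOnLetters r m σ τ) := by omega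
  set I := permIndex (wreathOnSets r m k σ τ)
  set I' := permIndex (wreathOnLetters r m σ τ)
  have hrm : 0 < r * m := by omega
  have key : n * I' < I * (3 * (r * m)) := by
    have e1 : 3 * (r * m) * n ≤ 3 * (r * m) * (2 * I + f) := Nat.mul_le_mul_left _ b1
    have e2 : n * (I' + f') < n * (r * m) := Nat.mul_lt_mul_of_pos_left b2 hn
    nlinarith
  rw [div_lt_div_iff₀ (by rw [mul_assoc]; exact_mod_cast (by omega : 0 < 3 * (r * m)))
    (by exact_mod_cast b3), mul_assoc 3]
  exact_mod_cast key
end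

section
/- There is an absolute constant c > 0 with the following property. Let r, m, k be positive integers with k < m/2 and with r > 1 or k > 1, and let n = C(m,k)^r. Let W = S_m ≀ S_r act on Ω = Δ^r (Δ the set of k-element subsets of {1,...,m}) and imprimitively on rm letters as usual. Then for every non-identity g ∈ W, ind(g) ≥ c · √n · ind'(g), where ind(g) is the index of g on Ω and ind'(g) is the index of g on the rm letters. -/
open scoped Classical
open Polynomial

noncomputable def mvCount {Ω : Type*} [Fintype Ω] (g : Equiv.Perm Ω) : ℕ :=
  Nat.card {x : Ω // g x ≠ x}

theorem mv_add_fix {Ω : Type*} [Fintype Ω] (g : Equiv.Perm Ω) :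
    mvCount g + Nat.card {x : Ω // g x = x} = Fintype.card Ω := by
  unfold mvCount
  rw [Nat.card_eq_fintype_card, Nat.card_eq_fintype_card, add_comm]
  exact Fintype.card_subtype_compl (fun x : Ω => g x = x) ▸
    Nat.add_sub_cancel' (Fintype.card_subtype_le _)

theorem quot_eq_of {Ω : Type*} (g : Equiv.Perm Ω) (x y : Ω)
    (h : (Quotient.mk'' x : MulAction.orbitRel.Quotient (Subgroup.zpowers g) Ω) =
      Quotient.mk'' y) (hx : g y = y) : x = y := by
  have h1 := Quotient.exact h
  have h2 : x ∈ MulAction.orbit (Subgroup.zpowers g) y := h1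
  obtain ⟨⟨a, ha⟩, rfl⟩ := h2
  obtain ⟨n, rfl⟩ := ha
  exact Equiv.Perm.zpow_apply_eq_self_of_apply_eq_self hx n

theorem permIndex_le {Ω : Type*} [Fintype Ω] (g : Equiv.Perm Ω) :
    permIndex g ≤ mvCount g := by
  have h1 := mv_add_fix g
  have h2 : Nat.card {x : Ω // g x = x} ≤
      Nat.card (MulAction.orbitRel.Quotient (Subgroup.zpowers g) Ω) := by
    haveI : Finite (MulAction.orbitRel.Quotient (Subgroup.zpowers g) Ω) := Quotient.finite _
    refine Nat.card_le_card_of_injective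
      (fun x : {x : Ω // g x = x} => (Quotient.mk'' x.1 :
        MulAction.orbitRel.Quotient (Subgroup.zpowers g) Ω)) ?_
    intro x y h
    exact Subtype.ext (quot_eq_of g x.1 y.1 h y.2)
  unfold permIndex
  omega

theorem le_permIndex {Ω : Type*} [Fintype Ω] (g : Equiv.Perm Ω) :
    mvCount g ≤ 2 * permIndex g := by
  have h1 := mv_add_fix g
  have h2 : 2 * Nat.card (MulAction.orbitRel.Quotient (Subgroup.zpowers g) Ω) ≤
      Fintype.card Ω + Nat.card {x : Ω // g x = x} := by
    set Q := MulAction.orbitRel.Quotient (Subgroup.zpowers g) Ω with hQ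
    haveI : Finite Q := Quotient.finite _
    have hout : ∀ q : Q, (Quotient.mk'' (Quotient.out q) : Q) = q := fun q => Quotient.out_eq' q
    have hg : ∀ x : Ω, (Quotient.mk'' (g x) : Q) = Quotient.mk'' x := by
      intro x
      apply Quotient.sound
      exact ⟨⟨g, Subgroup.mem_zpowers g⟩, rfl⟩
    have : Nat.card (Q ⊕ Q) ≤ Nat.card (Ω ⊕ {x : Ω // g x = x}) := by
      refine Nat.card_le_card_of_injective
        (Sum.elim (fun q => Sum.inl (Quotient.out q))
          (fun q => if h : g (Quotient.out q) = Quotient.out q then Sum.inr ⟨_, h⟩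
            else Sum.inl (g (Quotient.out q)))) ?_
      have hi : ∀ q q' : Q, Quotient.out q = Quotient.out q' → q = q' := by
        intro q q' h
        rw [← hout q, h, hout]
      have hc : ∀ q q' : Q, Quotient.out q = g (Quotient.out q') → q = q' := by
        intro q q' h
        rw [← hout q, h, hg, hout]
      rintro (q | q) (q' | q') h
      · simp at h
        rw [h]
      · simp only [Sum.elim_inl, Sum.elim_inr] at h
        split_ifs at h with h'
        have h3 := Sum.inl.inj h
        have := hc _ _ h3
        subst this
        exact absurd h3.symm h'
      · simp only [Sum.elim_inl, Sum.elim_inr] at h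
        split_ifs at h with h'
        have h3 := Sum.inl.inj h
        have := hc _ _ h3.symm
        subst this
        exact absurd h3 h'
      · simp only [Sum.elim_inr] at h
        split_ifs at h with h' h'' h''
        · have h3 := congrArg Subtype.val (Sum.inr.inj h)
          rw [hi _ _ h3]
        · have h3 := Sum.inl.inj h
          rw [hi _ _ (g.injective h3)]
    rw [Nat.card_sum, Nat.card_sum, Nat.card_eq_fintype_card (α := Ω)] at this
    omega
  unfold permIndex
  omega

theorem count_sets (m k : ℕ) (hk : 1 ≤ k) (x y : Fin m) (hxy : x ≠ y) :
    (m - 2).choose (k - 1) ≤ (Finset.univ.filter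
      (fun S : {S : Finset (Fin m) // S.card = k} => x ∈ S.1 ∧ y ∉ S.1)).card := by
  have h0 : ((Finset.univ.erase x).erase y : Finset (Fin m)).card = m - 2 := by
    rw [Finset.card_erase_of_mem (by simp [hxy.symm]), Finset.card_erase_of_mem (by simp)]
    simp
    omega
  rw [← h0, ← Finset.card_powersetCard]
  rw [← Finset.card_map (Function.Embedding.subtype _)]
  refine Finset.card_le_card_of_injOn (fun S => insert x S) ?_ ?_
  · intro S hS
    simp only [Finset.mem_coe, Finset.mem_powersetCard] at hS
    obtain ⟨hS, hc⟩ := hS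
    have hx : x ∉ S := fun h => by simpa using hS h
    have hy : y ∉ S := fun h => by simpa using hS h
    simp [Finset.card_insert_of_notMem hx, hc, hxy.symm, hy]
    omega
  · intro S hS S' hS' h
    simp only [Finset.mem_coe, Finset.mem_powersetCard] at hS hS'
    have hx : x ∉ S := fun h => by simpa using hS.1 h
    have hx' : x ∉ S' := fun h => by simpa using hS'.1 h
    have h := congrArg (fun T => Finset.erase T x) h
    simpa [Finset.erase_insert hx, Finset.erase_insert hx'] using h

theorem choose_id (m k : ℕ) (hk : 1 ≤ k) (hm : 2 * k < m) :
    m.choose k * k * (m - k) = m * (m - 1) * (m - 2).choose (k - 1) := by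
  obtain ⟨j, rfl⟩ : ∃ j, k = j + 1 := ⟨k - 1, by omega⟩
  obtain ⟨p, rfl⟩ : ∃ p, m = p + 2 := ⟨m - 2, by omega⟩
  have h1 := Nat.add_one_mul_choose_eq (p + 1) j
  have h2 := Nat.choose_mul_succ_eq p j
  have e1 : p + 2 - (j + 1) = p + 1 - j := by omega
  rw [e1]
  simp only [Nat.add_sub_cancel, show p + 2 - 1 = p + 1 by omega]
  rw [show p + 2 = p + 1 + 1 by ring, ← h1, mul_assoc, ← h2]
  ring

theorem subset_bound (m k : ℕ) (hk : 1 ≤ k) (hm : 2 * k < m) (s : Equiv.Perm (Fin m)) :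
    mvCount s * m.choose k ≤ 2 * m * mvCount (subsetPerm m k s) := by
  have key : mvCount s * (m - 2).choose (k - 1) ≤ mvCount (subsetPerm m k s) * k := by
    unfold mvCount
    rw [Nat.card_eq_fintype_card, Nat.card_eq_fintype_card, Fintype.card_subtype,
      Fintype.card_subtype]
    refine Finset.card_mul_le_card_mul
      (fun (x : Fin m) (S : {S : Finset (Fin m) // S.card = k}) => x ∈ S.1 ∧ s x ∉ S.1) ?_ ?_
    · intro x hx
      simp only [Finset.mem_filter, Finset.mem_univ, true_and] at hx
      refine (count_sets m k hk x (s x) (Ne.symm hx)).trans (Finset.card_le_card ?_)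
      intro S hS
      simp only [Finset.mem_filter, Finset.mem_univ, true_and] at hS
      simp only [Finset.mem_bipartiteAbove, Finset.mem_filter, Finset.mem_univ, true_and]
      refine ⟨fun h => hS.2 ?_, hS⟩
      have h' := congrArg Subtype.val h
      rw [← h']
      simp only [subsetPerm, Equiv.Perm.subtypePerm_apply, Equiv.finsetCongr_apply]
      exact Finset.mem_map_of_mem _ hS.1
    · intro S _
      conv_rhs => rw [← S.2]
      apply Finset.card_le_card
      intro x hx
      simp only [Finset.mem_bipartiteBelow] at hx
      exact hx.2.1
  have hid := choose_id m k hk hm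
  set t := mvCount s
  set M := mvCount (subsetPerm m k s)
  set N := m.choose k
  set C := (m - 2).choose (k - 1)
  have h1 : t * N * (m - k) ≤ m * (m - 1) * M := by
    have : k * (t * N * (m - k)) ≤ k * (m * (m - 1) * M) := by
      calc k * (t * N * (m - k)) = t * (N * k * (m - k)) := by ring
        _ = m * (m - 1) * (t * C) := by rw [hid]; ring
        _ ≤ m * (m - 1) * (M * k) := Nat.mul_le_mul_left _ key
        _ = _ := by ring
    exact Nat.le_of_mul_le_mul_left this (by omega)
  have h2 : (t * N) * m ≤ (2 * m * M) * m := by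
    calc (t * N) * m ≤ t * N * (2 * (m - k)) := Nat.mul_le_mul_left _ (by omega)
      _ = 2 * (t * N * (m - k)) := by ring
      _ ≤ 2 * (m * (m - 1) * M) := Nat.mul_le_mul_left _ h1
      _ ≤ 2 * (m * m * M) := by gcongr; omega
      _ = _ := by ring
  exact Nat.le_of_mul_le_mul_right h2 (by omega)

theorem card_D (m k : ℕ) : Nat.card {S : Finset (Fin m) // S.card = k} = m.choose k := by
  rw [Nat.card_eq_fintype_card, Fintype.card_finset_len, Fintype.card_fin]

theorem card_O (r m k : ℕ) :
    Nat.card (Fin r → {S : Finset (Fin m) // S.card = k}) = (m.choose k) ^ r := by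
  rw [Nat.card_fun, card_D]
  simp

theorem wreath_apply (r m k : ℕ) (σ : Fin r → Equiv.Perm (Fin m)) (τ : Equiv.Perm (Fin r))
    (f : Fin r → {S : Finset (Fin m) // S.card = k}) (i : Fin r) :
    wreathOnSets r m k σ τ f (τ i) = subsetPerm m k (σ i) (f i) :=
  Equiv.piCongr_apply_apply (W := fun _ => {S : Finset (Fin m) // S.card = k})
    (Z := fun _ => {S : Finset (Fin m) // S.card = k}) τ (fun i => subsetPerm m k (σ i)) f i

theorem choose_mono_aux (m j k : ℕ) (hjk : j ≤ k) (hm : 2 * k < m) :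
    m.choose j ≤ m.choose k := by
  induction k, hjk using Nat.le_induction with
  | base => exact le_rfl
  | succ n hn ih =>
    exact (ih (by omega)).trans (Nat.choose_le_succ_of_lt_half_left (by omega))

theorem choose_ge (m k : ℕ) (hk : 1 ≤ k) (hm : 2 * k < m) : m ≤ m.choose k := by
  simpa using choose_mono_aux m 1 k hk hm

theorem moved_bound_tau (r m k : ℕ) (hk : 1 ≤ k) (hm : 2 * k < m)
    (σ : Fin r → Equiv.Perm (Fin m)) (τ : Equiv.Perm (Fin r)) (hτ : τ ≠ 1) :
    (m.choose k) ^ r ≤ 2 * mvCount (wreathOnSets r m k σ τ) := by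
  obtain ⟨i, hi⟩ : ∃ i, τ i ≠ i := by
    by_contra h
    push Not at h
    exact hτ (Equiv.ext h)
  set g := wreathOnSets r m k σ τ with hg
  have h1 := mv_add_fix g
  rw [← Nat.card_eq_fintype_card, card_O] at h1
  have h2 : Nat.card {x // g x = x} * m.choose k ≤ (m.choose k) ^ r := by
    rw [← card_O r m k, ← card_D m k, ← Nat.card_prod]
    refine Nat.card_le_card_of_injective
      (fun p : {x // g x = x} × {S : Finset (Fin m) // S.card = k} =>
        Function.update p.1.1 (τ i) p.2) ?_
    rintro ⟨⟨f, hf⟩, d⟩ ⟨⟨f', hf'⟩, d'⟩ h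
    simp only at h
    have hd : d = d' := by simpa using congrFun h (τ i)
    have hj : ∀ j, j ≠ τ i → f j = f' j := by
      intro j hj
      simpa [Function.update_of_ne hj] using congrFun h j
    have hff : f = f' := by
      funext j
      by_cases hj' : j = τ i
      · subst hj'
        have e1 := congrFun hf (τ i)
        have e2 := congrFun hf' (τ i)
        rw [hg, wreath_apply] at e1 e2
        rw [← e1, ← e2, hj i (Ne.symm hi)]
      · exact hj j hj'
    subst hff hd
    rfl
  have h3 := choose_ge m k hk hm
  have h4 : Nat.card {x // g x = x} * 2 ≤ Nat.card {x // g x = x} * m.choose k :=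
    Nat.mul_le_mul_left _ (by omega)
  omega

theorem moved_bound_one (r m k : ℕ) (hk : 1 ≤ k) (hm : 2 * k < m)
    (σ : Fin r → Equiv.Perm (Fin m)) (i : Fin r) :
    mvCount (σ i) * (m.choose k) ^ r ≤ 2 * m * mvCount (wreathOnSets r m k σ 1) := by
  set g := wreathOnSets r m k σ 1 with hg
  have h2 : mvCount (subsetPerm m k (σ i)) * (m.choose k) ^ r ≤ mvCount g * m.choose k := by
    rw [← card_O r m k, ← card_D m k]
    unfold mvCount
    rw [← Nat.card_prod, ← Nat.card_prod]
    refine Nat.card_le_card_of_injective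
      (fun p : {x // subsetPerm m k (σ i) x ≠ x} ×
          (Fin r → {S : Finset (Fin m) // S.card = k}) =>
        ((⟨Function.update p.2 i p.1.1, ?_⟩ : {x // g x ≠ x}), p.2 i)) ?_
    · intro h
      have e := congrFun h i
      have e2 := wreath_apply r m k σ 1 (Function.update p.2 i p.1.1) i
      rw [Equiv.Perm.one_apply] at e2
      rw [hg, e2] at e
      simp only [Function.update_self] at e
      exact p.1.2 e
    · rintro ⟨⟨d, hd⟩, f⟩ ⟨⟨d', hd'⟩, f'⟩ h
      simp only [Prod.mk.injEq, Subtype.mk.injEq] at h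
      obtain ⟨h, hi⟩ := h
      have hdd : d = d' := by simpa using congrFun h i
      have hff : f = f' := by
        funext j
        by_cases hj : j = i
        · rw [hj, hi]
        · simpa [Function.update_of_ne hj] using congrFun h j
      subst hdd hff
      rfl
  have h1 := subset_bound m k hk hm (σ i)
  have h3 := choose_ge m k hk hm
  have h4 : (mvCount (σ i) * (m.choose k) ^ r) * m.choose k ≤
      (2 * m * mvCount g) * m.choose k := by
    calc _ = (mvCount (σ i) * m.choose k) * (m.choose k) ^ r := by ring
      _ ≤ (2 * m * mvCount (subsetPerm m k (σ i))) * (m.choose k) ^ r :=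
        Nat.mul_le_mul_right _ h1
      _ = 2 * m * (mvCount (subsetPerm m k (σ i)) * (m.choose k) ^ r) := by ring
      _ ≤ 2 * m * (mvCount g * m.choose k) := Nat.mul_le_mul_left _ h2
      _ = _ := by ring
  exact Nat.le_of_mul_le_mul_right h4 (by omega)

theorem moved_bound (r m k : ℕ) (hk : 1 ≤ k) (hm : 2 * k < m)
    (σ : Fin r → Equiv.Perm (Fin m)) (τ : Equiv.Perm (Fin r)) :
    mvCount (wreathOnLetters r m σ τ) * (m.choose k) ^ r ≤
      2 * (m * r) * mvCount (wreathOnSets r m k σ τ) := by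
  by_cases hτ : τ = 1
  · subst hτ
    have h1 : mvCount (wreathOnLetters r m σ 1) = ∑ i, mvCount (σ i) := by
      unfold mvCount
      simp only [Nat.card_eq_fintype_card, Fintype.card_subtype, Finset.card_filter]
      rw [Fintype.sum_prod_type]
      simp [wreathOnLetters, Equiv.prodShear]
    rw [h1, Finset.sum_mul]
    calc _ ≤ ∑ i : Fin r, 2 * m * mvCount (wreathOnSets r m k σ 1) :=
        Finset.sum_le_sum (fun i _ => moved_bound_one r m k hk hm σ i)
      _ = _ := by
        simp
        ring
  · have h1 := moved_bound_tau r m k hk hm σ τ hτ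
    have h2 := mv_add_fix (wreathOnLetters r m σ τ)
    simp only [Fintype.card_prod, Fintype.card_fin] at h2
    calc _ ≤ (r * m) * (2 * mvCount (wreathOnSets r m k σ τ)) :=
        Nat.mul_le_mul (by omega) h1
      _ = _ := by ring

theorem numeric (r m k : ℕ) (hr : 1 ≤ r) (hk : 1 ≤ k) (hm : 2 * k < m) (h : 1 < r ∨ 1 < k) :
    (m * r) ^ 2 ≤ 9 * (m.choose k) ^ r := by
  by_cases h1 : 1 < r
  · have h3 := choose_ge m k hk hm
    obtain ⟨q, rfl⟩ : ∃ q, r = q + 2 := ⟨r - 2, by omega⟩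
    have h4 : (q + 2) ^ 2 ≤ 9 * 3 ^ q := by
      clear h h1 hr
      induction q with
      | zero => norm_num
      | succ n ih => rw [pow_succ 3]; nlinarith [Nat.zero_le (n ^ 2), Nat.zero_le n]
    calc (m * (q + 2)) ^ 2 = m ^ 2 * (q + 2) ^ 2 := by ring
      _ ≤ (m.choose k) ^ 2 * (9 * 3 ^ q) := by gcongr
      _ ≤ (m.choose k) ^ 2 * (9 * (m.choose k) ^ q) := by gcongr; omega
      _ = _ := by ring
  · obtain rfl : r = 1 := by omega
    have hk2 : 2 ≤ k := by omega
    have h2 := choose_mono_aux m 2 k hk2 hm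
    have h5 : m * (m - 1) ≤ 2 * m.choose 2 := by
      rw [Nat.choose_two_right]
      have := Nat.two_dvd_mul_sub_one m
      omega
    obtain ⟨p, rfl⟩ : ∃ p, m = p + 1 := ⟨m - 1, by omega⟩
    simp only [Nat.add_sub_cancel] at h5
    have : 4 ≤ p := by omega
    nlinarith

/-- Corollary 2.7 of Bhargava's paper. There is an absolute constant `c > 0` such that
for all positive integers `r, m, k` with `k < m/2` and `r > 1` or `k > 1`, setting
`n = C(m,k)^r`, every non-identity element `g = (σ_1,...,σ_r; τ)` of `S_m ≀ S_r`
satisfies `ind(g) ≥ c·√n·ind'(g)`, where `ind(g)` is the index of `g` on `Ω = Δ^r` and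
`ind'(g)` its index on the `rm` letters. -/
theorem wreath_index_ratio_sqrt :
    ∃ c : ℝ, 0 < c ∧ ∀ (r m k : ℕ), 1 ≤ r → 1 ≤ k → 2 * k < m → (1 < r ∨ 1 < k) →
      ∀ (σ : Fin r → Equiv.Perm (Fin m)) (τ : Equiv.Perm (Fin r)),
        ¬(τ = 1 ∧ ∀ i, σ i = 1) →
        c * Real.sqrt ((Nat.choose m k : ℝ) ^ r) *
            (permIndex (wreathOnLetters r m σ τ) : ℝ) ≤
          (permIndex (wreathOnSets r m k σ τ) : ℝ) := by
  refine ⟨1 / 12, by norm_num, ?_⟩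
  intro r m k hr hk hm hrk σ τ _
  have h1 := moved_bound r m k hk hm σ τ
  have h2 := numeric r m k hr hk hm hrk
  have h3 := permIndex_le (wreathOnLetters r m σ τ)
  have h4 := le_permIndex (wreathOnSets r m k σ τ)
  have h6 := choose_ge m k hk hm
  set T := mvCount (wreathOnLetters r m σ τ)
  set M := mvCount (wreathOnSets r m k σ τ)
  set a := permIndex (wreathOnLetters r m σ τ)
  set b := permIndex (wreathOnSets r m k σ τ)
  have hN : (0 : ℝ) < (m.choose k : ℝ) ^ r := by
    have : 0 < m.choose k := by omega
    positivity
  set X : ℝ := (m.choose k : ℝ) ^ r with hX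
  have hs : 0 < Real.sqrt X := Real.sqrt_pos.mpr hN
  have hss : Real.sqrt X * Real.sqrt X = X := Real.mul_self_sqrt hN.le
  have h1' : (T : ℝ) * X ≤ 2 * (m * r) * M := by rw [hX]; exact_mod_cast h1
  have h2' : ((m : ℝ) * r) ^ 2 ≤ 9 * X := by rw [hX]; exact_mod_cast h2
  have h3' : (a : ℝ) ≤ T := by exact_mod_cast h3
  have h4' : (M : ℝ) ≤ 2 * b := by exact_mod_cast h4
  have h5 : (m : ℝ) * r ≤ 3 * Real.sqrt X := by
    refine (abs_le_of_sq_le_sq' ?_ (by positivity)).2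
    nlinarith
  have h7 : ((T : ℝ) * Real.sqrt X) * Real.sqrt X ≤ (6 * M) * Real.sqrt X := by
    calc ((T : ℝ) * Real.sqrt X) * Real.sqrt X = T * X := by rw [mul_assoc, hss]
      _ ≤ 2 * (m * r) * M := h1'
      _ ≤ 2 * (3 * Real.sqrt X) * M := by gcongr
      _ = _ := by ring
  have h8 := le_of_mul_le_mul_right h7 hs
  have h9 : (a : ℝ) * Real.sqrt X ≤ T * Real.sqrt X := by gcongr
  linarith
end

section
/- Let m, k, y be positive integers with 1 ≤ k < m/2, and let σ ∈ S_m be a permutation that is a product of y disjoint transpositions (i.e., σ is an involution moving exactly 2y points). Then the number f(m,k,y) of k-element subsets S of {1,...,m} with σ(S) ≠ S satisfies f(m,k,y) ≥ (8/(5k)) · C(m-1, k-1) · y, where C(m-1,k-1) is the binomial coefficient. -/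
open scoped Classical
open Polynomial

noncomputable def MS.T {α : Type*} [DecidableEq α] (σ : α → α) (U : Finset α) : ℤ[X] :=
  ∑ S ∈ U.powerset, if S.image σ = S then X ^ S.card else 0

lemma MS.T_step {α : Type*} [DecidableEq α] (σ : α → α) (hσ : ∀ x, σ (σ x) = x) (U : Finset α)
    (a b : α) (hab : a ≠ b) (h1 : σ a = b) (ha : a ∉ U) (hb : b ∉ U) :
    MS.T σ (insert a (insert b U)) = (1 + X ^ 2) * MS.T σ U := by
  have h2 : σ b = a := by rw [← h1, hσ]
  have ha' : a ∉ insert b U := by simp [hab, ha]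
  unfold MS.T
  rw [Finset.sum_powerset_insert ha', Finset.sum_powerset_insert hb,
    Finset.sum_powerset_insert hb, add_mul, one_mul, Finset.mul_sum]
  have e1 : ∑ S ∈ U.powerset, (if (insert b S).image σ = insert b S then
      (X : ℤ[X]) ^ (insert b S).card else 0) = 0 := by
    apply Finset.sum_eq_zero
    intro S hS
    rw [if_neg]
    intro h
    have : a ∈ (insert b S).image σ := by simp [h2]
    rw [h] at this
    have := Finset.mem_powerset.1 hS
    grind
  have e2 : ∑ S ∈ U.powerset, (if (insert a S).image σ = insert a S then
      (X : ℤ[X]) ^ (insert a S).card else 0) = 0 := by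
    apply Finset.sum_eq_zero
    intro S hS
    rw [if_neg]
    intro h
    have : b ∈ (insert a S).image σ := by simp [h1]
    rw [h] at this
    have := Finset.mem_powerset.1 hS
    grind
  rw [e1, e2, add_zero, zero_add]
  congr 1
  apply Finset.sum_congr rfl
  intro S hS
  have hS := Finset.mem_powerset.1 hS
  have haS : a ∉ S := fun h => ha (hS h)
  have hbS : b ∉ S := fun h => hb (hS h)
  have hiff : (insert a (insert b S)).image σ = insert a (insert b S) ↔ S.image σ = S := by
    rw [Finset.image_insert, Finset.image_insert, h1, h2, Finset.insert_comm]
    have ha2 : a ∉ S.image σ := by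
      intro h
      obtain ⟨x, hx, h⟩ := Finset.mem_image.1 h
      have := hσ x
      grind
    have hb2 : b ∉ S.image σ := by
      intro h
      obtain ⟨x, hx, h⟩ := Finset.mem_image.1 h
      have := hσ x
      grind
    constructor
    · intro h
      ext x
      have := Finset.ext_iff.1 h x
      grind
    · intro h
      rw [h]
  have hc : (insert a (insert b S)).card = S.card + 2 := by
    rw [Finset.card_insert_of_notMem (by simp [hab, haS]), Finset.card_insert_of_notMem hbS]
  simp only [hiff, hc, mul_ite, mul_zero]
  split_ifs
  · ring
  · rfl

lemma MS.T_eq {α : Type*} [DecidableEq α] (σ : α → α) (hσ : ∀ x, σ (σ x) = x) (y : ℕ) :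
    ∀ U : Finset α, (∀ x ∈ U, σ x ∈ U) → (U.filter (fun x => σ x ≠ x)).card = 2 * y →
    MS.T σ U = (1 + X ^ 2) ^ y * (1 + X) ^ (U.card - 2 * y) := by
  induction y with
  | zero =>
    intro U hU h
    have hf : ∀ x ∈ U, σ x = x := by
      have := Finset.card_eq_zero.1 h
      rw [Finset.filter_eq_empty_iff] at this
      intro x hx
      simpa using this hx
    have : MS.T σ U = ∑ S ∈ U.powerset, (X : ℤ[X]) ^ S.card := by
      unfold MS.T
      apply Finset.sum_congr rfl
      intro S hS
      have hS := Finset.mem_powerset.1 hS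
      rw [if_pos]
      rw [Finset.image_congr (g := id) (fun x hx => hf x (hS hx)), Finset.image_id]
    rw [this]
    have := Finset.sum_pow_mul_eq_add_pow (X : ℤ[X]) 1 U
    simp only [one_pow, mul_one] at this
    rw [this]; simp [add_comm]
  | succ y ih =>
    intro U hU h
    have hne : (U.filter (fun x => σ x ≠ x)).Nonempty := by
      rw [← Finset.card_pos]; omega
    obtain ⟨a, ha⟩ := hne
    rw [Finset.mem_filter] at ha
    obtain ⟨haU, haσ⟩ := ha
    have hbU := hU a haU
    set b := σ a with hb
    have hba : σ b = a := hσ a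
    set V := (U.erase a).erase b with hV
    have hUV : U = insert a (insert b V) := by
      ext x; simp only [hV, Finset.mem_insert, Finset.mem_erase]; grind
    have haV : a ∉ V := by simp [hV]
    have hbV : b ∉ V := by simp [hV]
    have hab : a ≠ b := fun h => haσ h.symm
    have hcard : U.card = V.card + 2 := by
      rw [hUV, Finset.card_insert_of_notMem (by simp [hab, haV]), Finset.card_insert_of_notMem hbV]
    have hst : ∀ x ∈ V, σ x ∈ V := by
      intro x hx
      have h3 := hσ x
      have h4 := hU x
      simp only [hV, Finset.mem_erase] at hx ⊢
      grind
    have hfil : (V.filter (fun x => σ x ≠ x)).card = 2 * y := by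
      rw [hUV, Finset.filter_insert, if_pos haσ, Finset.filter_insert,
        if_pos (by rw [hba]; exact hab),
        Finset.card_insert_of_notMem (by simp [hab, haV]),
        Finset.card_insert_of_notMem (by simp [hbV])] at h
      omega
    rw [hcard, hUV, MS.T_step σ hσ V a b hab hb.symm haV hbV, ih V hst hfil]
    rw [show V.card + 2 - 2 * (y + 1) = V.card - 2 * y by omega]
    ring

lemma MS.coeff_T {α : Type*} [DecidableEq α] (σ : α → α) (U : Finset α) (k : ℕ) :
    (MS.T σ U).coeff k =
      ((U.powerset.filter (fun S => S.card = k ∧ S.image σ = S)).card : ℤ) := by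
  unfold MS.T
  rw [Polynomial.finsetSum_coeff, Finset.card_filter]
  push_cast
  apply Finset.sum_congr rfl
  intro S _
  by_cases h : S.image σ = S
  · simp [h, Polynomial.coeff_X_pow, eq_comm]
  · simp [h]

lemma MS.nonneg (p q r k : ℕ) :
    0 ≤ (((X : ℤ[X]) ^ r * ((1 + X ^ 2) ^ p * (1 + X) ^ q))).coeff k := by
  have : ((X : ℤ[X]) ^ r * ((1 + X ^ 2) ^ p * (1 + X) ^ q)) =
      ((X : ℕ[X]) ^ r * ((1 + X ^ 2) ^ p * (1 + X) ^ q)).map (Nat.castRingHom ℤ) := by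
    simp
  rw [this, Polynomial.coeff_map]
  simp

noncomputable def MS.P (m y : ℕ) : ℤ[X] := (1 + X ^ 2) ^ y * (1 + X) ^ (m - 2 * y)

lemma MS.convex1 (m y k : ℕ) (h : 2 * y + 4 ≤ m) :
    (MS.P m (y+1)).coeff k - (MS.P m (y+2)).coeff k ≤
     (MS.P m y).coeff k - (MS.P m (y+1)).coeff k := by
  obtain ⟨n, rfl⟩ := Nat.exists_eq_add_of_le h
  have := MS.nonneg y n 2 k
  have e : (MS.P (2*y+4+n) y) - (MS.P (2*y+4+n) (y+1)) - ((MS.P (2*y+4+n) (y+1)) - (MS.P (2*y+4+n) (y+2)))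
      = C 4 * ((X : ℤ[X]) ^ 2 * ((1 + X ^ 2) ^ y * (1 + X) ^ n)) := by
    unfold MS.P
    rw [show 2*y+4+n - 2*y = n + 4 by omega, show 2*y+4+n - 2*(y+1) = n + 2 by omega,
      show 2*y+4+n - 2*(y+2) = n by omega]
    simp only [map_ofNat]
    ring
  have e2 := congrArg (fun p => Polynomial.coeff p k) e
  simp only [Polynomial.coeff_sub, Polynomial.coeff_C_mul] at e2
  linarith

/-- discrete concavity -/
lemma MS.convex2 (a : ℕ → ℤ) (Y : ℕ)
    (h : ∀ y, y + 2 ≤ Y → a (y+1) - a (y+2) ≤ a y - a (y+1)) (y : ℕ) (hy : y ≤ Y) :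
    y * (a 0 - a Y) ≤ Y * (a 0 - a y) := by
  have key : ∀ z, z + 1 ≤ Y → (z + 1 : ℤ) * (a z - a (z+1)) ≤ a 0 - a (z+1) := by
    intro z
    induction z with
    | zero => intro _; simp
    | succ z ih =>
      intro hz
      have := ih (by omega)
      have h2 := h z (by omega)
      push_cast at *
      nlinarith
  induction Y, hy using Nat.le_induction with
  | base => exact le_rfl
  | succ Y hY ih =>
    have ih := ih (fun y hy => h y (by omega)) (fun z hz => key z (by omega))
    rcases Nat.eq_zero_or_pos Y with h0 | h0
    · have : y = 0 := by omega
      subst this; simp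
    have k1 := key Y le_rfl
    have h0' : (0:ℤ) < Y := by exact_mod_cast h0
    have h3 : (Y:ℤ) * (a 0 - a (Y+1)) ≤ (Y+1) * (a 0 - a Y) := by nlinarith
    have hy0 : (0:ℤ) ≤ y := by positivity
    have h4 : (Y:ℤ) * (y * (a 0 - a (Y+1))) ≤ Y * ((Y+1) * (a 0 - a y)) := by
      nlinarith [mul_le_mul_of_nonneg_left h3 hy0]
    push_cast
    exact le_of_mul_le_mul_left h4 h0'

lemma MS.choose5 (Y j : ℕ) (hY : 3 ≤ Y) (hj : 1 ≤ j) : 2 * j ≤ Y + 1 →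
    5 * Y.choose j ≤ (2 * Y).choose (2 * j) := by
  induction j, hj using Nat.le_induction with
  | base =>
    intro _
    have h := Nat.add_one_mul_choose_eq (2*Y-1) 1
    rw [show 2*Y-1+1 = 2*Y by omega] at h
    simp only [Nat.choose_one_right] at h ⊢
    obtain ⟨n, rfl⟩ := Nat.exists_eq_add_of_le hY
    rw [show 2*(3+n)-1 = 5+2*n by omega] at h
    norm_num at h ⊢
    nlinarith
  | succ j hj ih =>
    intro h
    have ih := ih (by omega)
    obtain ⟨d, rfl⟩ := Nat.exists_eq_add_of_le (show 2 * j + 1 ≤ Y by omega)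
    have a1 := Nat.choose_succ_right_eq (2*(2*j+1+d)) (2*j)
    have a2 := Nat.choose_succ_right_eq (2*(2*j+1+d)) (2*j+1)
    have a3 := Nat.choose_succ_right_eq (2*j+1+d) j
    rw [show 2*(2*j+1+d) - 2*j = 2*(j+1+d) by omega] at a1
    rw [show 2*(2*j+1+d) - (2*j+1) = 2*j+1+2*d by omega] at a2
    rw [show 2*j+1+d - j = j+1+d by omega] at a3
    rw [show 2*(j+1) = 2*j+1+1 by ring]
    generalize (2*(2*j+1+d)).choose (2*j) = A at *
    generalize (2*(2*j+1+d)).choose (2*j+1) = B at *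
    generalize (2*(2*j+1+d)).choose (2*j+1+1) = D at *
    generalize (2*j+1+d).choose j = p at *
    generalize (2*j+1+d).choose (j+1) = q at *
    have c1 : D * (j+1) * (2*j+1) = A * (j+1+d) * (2*j+1+2*d) := by
      have : 2 * (D * (j+1) * (2*j+1)) = 2 * (A * (j+1+d) * (2*j+1+2*d)) := by
        calc 2 * (D * (j+1) * (2*j+1)) = (D * (2*j+1+1)) * (2*j+1) := by ring
          _ = (B * (2*j+1)) * (2*j+1+2*d) := by rw [a2]; ring
          _ = _ := by rw [a1]; ring
      omega
    have c2 : A * (j+1+d) * (2*j+1) ≤ D * (j+1) * (2*j+1) := by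
      rw [c1]; exact Nat.mul_le_mul_left _ (by omega)
    have c3 : A * (j+1+d) ≤ D * (j+1) := Nat.le_of_mul_le_mul_right c2 (by omega)
    have c4 : 5 * q * (j+1) ≤ D * (j+1) := by
      calc 5 * q * (j+1) = 5 * p * (j+1+d) := by rw [mul_assoc, a3, mul_assoc]
        _ ≤ A * (j+1+d) := by gcongr
        _ ≤ _ := c3
    exact Nat.le_of_mul_le_mul_right c4 (by omega)

lemma MS.coeff_even (Y k : ℕ) :
    ((1 + X ^ 2 : ℤ[X]) ^ Y).coeff k = if 2 ∣ k then (Y.choose (k / 2) : ℤ) else 0 := by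
  have : (1 + X ^ 2 : ℤ[X]) ^ Y = Polynomial.expand ℤ 2 ((1 + X) ^ Y) := by simp
  rw [this, Polynomial.coeff_expand (by norm_num)]
  simp [Polynomial.coeff_one_add_X_pow]

lemma MS.endpoint (m k : ℕ) (hk : 1 ≤ k) (hkm : 2 * k < m) :
    5 * m * (MS.P m (m / 2)).coeff k ≤ (5 * m - 8 * (m / 2 : ℕ)) * (m.choose k : ℤ) := by
  obtain ⟨Y, hY | hY⟩ := Nat.even_or_odd' m
  · subst hY
    unfold MS.P
    rw [show 2 * Y / 2 = Y by omega, show 2 * Y - 2 * Y = 0 by omega, pow_zero, mul_one,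
      MS.coeff_even]
    push_cast
    split_ifs with h
    · obtain ⟨j, rfl⟩ := h
      rw [show 2 * j / 2 = j by omega]
      have := MS.choose5 Y j (by omega) (by omega) (by omega)
      have t : (5 : ℤ) * Y.choose j ≤ (2 * Y).choose (2 * j) := by exact_mod_cast this
      have hY0 : (0:ℤ) ≤ Y := by positivity
      nlinarith
    · have : (0:ℤ) ≤ Y * (2 * Y).choose k := by positivity
      nlinarith
  · subst hY
    have hc : (MS.P (2 * Y + 1) Y).coeff k = (Y.choose (k / 2) : ℤ) := by
      unfold MS.P
      rw [show 2 * Y + 1 - 2 * Y = 1 by omega, pow_one, mul_add, mul_one]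
      obtain ⟨k, rfl⟩ := Nat.exists_eq_add_of_le' hk
      rw [Polynomial.coeff_add, Polynomial.coeff_mul_X, MS.coeff_even, MS.coeff_even]
      by_cases h : 2 ∣ k
      · rw [if_neg (by omega), if_pos h, zero_add, show (k + 1) / 2 = k / 2 by omega]
      · rw [if_pos (by omega), if_neg h, add_zero]
    rw [show (2 * Y + 1) / 2 = Y by omega, hc]
    push_cast
    have hY0 : (0:ℤ) ≤ Y := by positivity
    rcases Nat.lt_or_ge k 2 with h | h
    · have : k = 1 := by omega
      subst this
      simp
      nlinarith
    · have main : 5 * Y.choose (k / 2) ≤ (2 * Y + 1).choose k := by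
        have base : 5 * Y.choose (k / 2) ≤ (2 * Y + 1).choose (2 * (k / 2)) := by
          rcases Nat.lt_or_ge Y 3 with h3 | h3
          · have : Y = 2 := by omega
            have : k = 2 := by omega
            subst Y k
            decide
          · exact (MS.choose5 Y (k / 2) h3 (by omega) (by omega)).trans
              (Nat.choose_le_choose _ (by omega))
        rcases Nat.mod_two_eq_zero_or_one k with h2 | h2
        · rwa [show 2 * (k / 2) = k by omega] at base
        · refine base.trans ?_
          have := Nat.choose_le_succ_of_lt_half_left (r := 2 * (k / 2)) (n := 2 * Y + 1) (by omega)
          rwa [show 2 * (k / 2) + 1 = k by omega] at this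
      have t : (5 : ℤ) * Y.choose (k / 2) ≤ (2 * Y + 1).choose k := by exact_mod_cast main
      have : (0:ℤ) ≤ (2 * Y + 1).choose k := by positivity
      nlinarith

lemma MS.bound (m k y : ℕ) (hk : 1 ≤ k) (hkm : 2 * k < m) (hy : 2 * y ≤ m) :
    8 * y * (m.choose k : ℤ) ≤ 5 * m * ((m.choose k : ℤ) - (MS.P m y).coeff k) := by
  have h0 : (MS.P m 0).coeff k = m.choose k := by
    simp [MS.P, Polynomial.coeff_one_add_X_pow]
  have h1 := MS.convex2 (fun z => (MS.P m z).coeff k) (m / 2)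
    (fun z hz => MS.convex1 m z k (by omega)) y (by omega)
  have h2 := MS.endpoint m k hk hkm
  simp only [h0] at h1
  have hY : (0:ℤ) < (m / 2 : ℕ) := by
    have : 0 < m / 2 := by omega
    exact_mod_cast this
  generalize (m / 2 : ℕ) = Y at *
  have hy0 : (0:ℤ) ≤ y := by positivity
  have hm0 : (0:ℤ) ≤ 5 * m := by positivity
  refine le_of_mul_le_mul_left ?_ hY
  have h3 := mul_le_mul_of_nonneg_left h1 hm0
  have h4 := mul_le_mul_of_nonneg_left h2 hy0
  linarith

/-- The inequality (2.2) of Bhargava's paper. Let `1 ≤ k < m/2` and let `σ ∈ S_m` be a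
product of `y` disjoint transpositions. Then the number `f(m,k,y)` of `k`-element
subsets `S` of `{1,...,m}` moved by `σ` (i.e. with `σ(S) ≠ S`) satisfies
`f(m,k,y) ≥ (8/(5k)) · C(m-1,k-1) · y`. -/
theorem moved_subsets_lower_bound (m k y : ℕ) (hk : 1 ≤ k) (hkm : 2 * k < m)
    (hy : 1 ≤ y) (σ : Equiv.Perm (Fin m))
    (hσ : σ.cycleType = Multiset.replicate y 2) :
    8 / (5 * (k : ℝ)) * (Nat.choose (m - 1) (k - 1) : ℝ) * (y : ℝ) ≤
      ((Finset.univ.filter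
        (fun S : Finset (Fin m) => S.card = k ∧ S.image σ ≠ S)).card : ℝ) := by
  have hsup : σ.support.card = 2 * y := by
    rw [← Equiv.Perm.sum_cycleType, hσ]; simp [mul_comm]
  have hinv : ∀ x, σ (σ x) = x := by
    have h : σ ^ 2 = 1 := by
      rw [← orderOf_dvd_iff_pow_eq_one, ← Equiv.Perm.lcm_cycleType, hσ, Multiset.lcm_dvd]
      intro b hb
      rw [Multiset.eq_of_mem_replicate hb]
    intro x
    have := congrArg (fun τ : Equiv.Perm (Fin m) => τ x) h
    simpa [pow_two] using this
  have hym : 2 * y ≤ m := by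
    rw [← hsup]
    simpa using Finset.card_le_univ σ.support
  have hT := MS.T_eq σ hinv y Finset.univ (by simp) hsup
  have hcf := MS.coeff_T σ Finset.univ k
  rw [hT, Finset.card_univ, Fintype.card_fin] at hcf
  have hb := MS.bound m k y hk hkm hym
  unfold MS.P at hb
  rw [hcf] at hb
  have htot : (m.choose k : ℤ) =
      ((Finset.univ.powerset.filter
        (fun S : Finset (Fin m) => S.card = k ∧ S.image σ = S)).card : ℤ) +
      ((Finset.univ.filter
        (fun S : Finset (Fin m) => S.card = k ∧ S.image σ ≠ S)).card : ℤ) := by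
    have h1 : (Finset.univ.filter (fun S : Finset (Fin m) => S.card = k)).card = m.choose k := by
      have := Finset.card_powersetCard k (Finset.univ : Finset (Fin m))
      rw [Finset.card_univ, Fintype.card_fin] at this
      rw [← this]
      congr 1
      ext S
      simp [Finset.mem_powersetCard]
    rw [← h1, ← Finset.card_filter_add_card_filter_not (fun S : Finset (Fin m) => S.image σ = S),
      Finset.filter_filter, Finset.filter_filter, Finset.powerset_univ]
    push_cast
    rfl
  rw [htot, add_sub_cancel_left, ← htot] at hb
  have hbR : 8 * (y : ℝ) * (m.choose k : ℝ) ≤ 5 * m * ((Finset.univ.filter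
        (fun S : Finset (Fin m) => S.card = k ∧ S.image σ ≠ S)).card : ℝ) := by
    exact_mod_cast hb
  have habs : (m : ℝ) * ((m - 1).choose (k - 1) : ℝ) = m.choose k * k := by
    have := Nat.add_one_mul_choose_eq (m - 1) (k - 1)
    rw [show m - 1 + 1 = m by omega, show k - 1 + 1 = k by omega] at this
    exact_mod_cast this
  have hk0 : (0 : ℝ) < k := by exact_mod_cast hk
  have hm0 : (0 : ℝ) < 5 * m := by
    have : 0 < 5 * m := by omega
    exact_mod_cast this
  refine le_of_mul_le_mul_left ?_ hm0
  refine le_trans (le_of_eq ?_) hbR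
  field_simp
  linear_combination habs
end
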